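/- Uniqueness of weak solutions (Proposition 2.3): For every T>0, every V₀ ∈ ℝ and every q₀ ∈ L^∞(D) odd in y, if (V₁,q₁) and (V₂,q₂) are both weak solutions of the barotropic quasi-geostrophic equations on [0,T] with initial datum (V₀,q₀) in the sense described in the context, then V₁(t)=V₂(t) for a.e. t ∈ [0,T] and q₁ = q₂ almost everywhere on [0,T]×D. -/

import Mathlib

open MeasureTheory Real Set

noncomputable section

namespace BQG

/-- The fundamental domain `D = [−π,π]²` of the two-dimensional torus. -/
def Dom : Set (ℝ × ℝ) := Ioc (-π) π ×ˢ Ioc (-π) π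

/-- The Fourier coefficient of `f` against the mode `e_{-j} s_k`,
`f̂_{j,k} = ∫_D f(x,y) e^{−ijx}/(2π) · sin(ky) dx dy`. -/
def fhat (f : ℝ × ℝ → ℝ) (j : ℤ) (k : ℕ) : ℂ :=
  ∫ z in Dom, (f z : ℂ) * Complex.exp (-(Complex.I * (j : ℂ) * (z.1 : ℂ))) / (2 * π)
    * (Real.sin ((k : ℝ) * z.2) : ℂ)

/-- The Fourier coefficient of `f` against the cosine-type mode `e_{-j} c_k`. -/
def chat (f : ℝ × ℝ → ℝ) (j : ℤ) (k : ℕ) : ℂ :=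
  ∫ z in Dom, (f z : ℂ) * Complex.exp (-(Complex.I * (j : ℂ) * (z.1 : ℂ))) / (2 * π)
    * (Real.cos ((k : ℝ) * z.2) : ℂ)

/-- `f` is odd in `y`: its `L²`-expansion only uses the modes `e_j s_k`, i.e. all its
cosine-type Fourier coefficients vanish. -/
def OddInY (f : ℝ × ℝ → ℝ) : Prop := ∀ (j : ℤ) (k : ℕ), chat f j k = 0

/-- The Fourier coefficient of `Δ⁻¹ f` on the mode `e_j s_k`, namely `−f̂_{j,k}/(j²+k²)`. -/
def invLapCoeff (f : ℝ × ℝ → ℝ) (j : ℤ) (k : ℕ) : ℂ :=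
  -(fhat f j k) / ((j : ℂ)^2 + (k : ℂ)^2)

/-- The velocity field `u = (V,0) + ∇^⊥ ψ′` with `ψ′ = Δ⁻¹ f`, characterized as the
square-integrable vector field on `D` whose Fourier coefficients are those obtained by
termwise application of `∇^⊥ = (−∂_y, ∂_x)` to the Fourier series of `Δ⁻¹ f`, plus the
constant `(V,0)`. -/
def IsVelocity (f : ℝ × ℝ → ℝ) (V : ℝ) (u : ℝ × ℝ → ℝ × ℝ) : Prop :=
  MemLp u 2 (volume.restrict Dom) ∧
  (∀ (j : ℤ) (k : ℕ),
    chat (fun z => (u z).1) j k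
      = (if j = 0 ∧ k = 0 then (2 * π * V : ℂ) else 0)
        + (if 1 ≤ k then -(invLapCoeff f j k) * (k : ℂ) / 2 else 0)) ∧
  (∀ (j : ℤ) (k : ℕ), 1 ≤ k → fhat (fun z => (u z).1) j k = 0) ∧
  (∀ (j : ℤ) (k : ℕ), 1 ≤ k →
    fhat (fun z => (u z).2) j k = invLapCoeff f j k * Complex.I * (j : ℂ) / 2) ∧
  (∀ (j : ℤ) (k : ℕ), chat (fun z => (u z).2) j k = 0)

/-- **Weak solutions of the barotropic quasi-geostrophic equations** (Definition 2.1).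
`(V,q)` is a weak solution on `[0,T]` with initial datum `(V₀,q₀)`, with associated velocity
field `u(t,·) = (V(t),0) + ∇^⊥Δ⁻¹(q(t,·) − h − βy)`; the test functions `φ` are `C¹` and
`2π`-periodic in both space variables. -/
structure IsWeakSolution (T β : ℝ) (h : ℝ × ℝ → ℝ) (V₀ : ℝ) (q₀ : ℝ × ℝ → ℝ)
    (V : ℝ → ℝ) (q : ℝ → ℝ × ℝ → ℝ) (u : ℝ → ℝ × ℝ → ℝ × ℝ) : Prop where
  /-- `V ∈ L^∞([0,T];ℝ)`. -/
  measV : Measurable V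
  bddV : ∃ M : ℝ, ∀ t ∈ Icc (0 : ℝ) T, |V t| ≤ M
  /-- `q ∈ L^∞([0,T]×D)`. -/
  measq : Measurable fun p : ℝ × (ℝ × ℝ) => q p.1 p.2
  bddq : ∃ M : ℝ, ∀ᵐ p ∂(volume.restrict (Icc (0 : ℝ) T ×ˢ Dom)), |q p.1 p.2| ≤ M
  /-- `q(t,·)` is odd in `y` for a.e. `t`. -/
  oddq : ∀ᵐ t ∂(volume.restrict (Icc (0 : ℝ) T)), OddInY (q t)
  /-- `t ↦ ∫_D q(t,z)ϕ(z) dz` is continuous on `[0,T]` for every continuous `ϕ`. -/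
  contq : ∀ ϕ : ℝ × ℝ → ℝ, Continuous ϕ →
    ContinuousOn (fun t => ∫ z in Dom, q t z * ϕ z) (Icc (0 : ℝ) T)
  measu : Measurable fun p : ℝ × (ℝ × ℝ) => u p.1 p.2
  /-- `u(t,·) = (V(t),0) + ∇^⊥ψ′(t,·)` with `ψ′(t,·) = Δ⁻¹(q(t,·) − h − βy)`. -/
  vel : ∀ᵐ t ∂(volume.restrict (Icc (0 : ℝ) T)),
    IsVelocity (fun z => q t z - h z - β * z.2) (V t) (u t)
  /-- Weak vorticity formulation (i). -/
  weak_q : ∀ φ : ℝ × ℝ × ℝ → ℝ, ContDiff ℝ 1 φ →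
    (∀ t x y : ℝ, φ (t, x + 2 * π, y) = φ (t, x, y)) →
    (∀ t x y : ℝ, φ (t, x, y + 2 * π) = φ (t, x, y)) →
    (∫ z in Dom, φ (T, z) * q T z) - (∫ z in Dom, φ (0, z) * q₀ z)
      = ∫ s in Icc (0 : ℝ) T, ∫ z in Dom,
          (fderiv ℝ φ (s, z) (1, 0, 0) + fderiv ℝ φ (s, z) (0, u s z)) * q s z
  /-- Mean-flow equation (ii): `V(t) = V₀ + ∫₀ᵗ ⨍_D h ∂_xψ′(s,·) dz ds`, where
  `∂_xψ′(s,·)` is the second component of `u(s,·)`. -/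
  meanflow : ∀ t ∈ Icc (0 : ℝ) T,
    V t = V₀ + ∫ s in Ioc (0 : ℝ) t, (∫ z in Dom, h z * (u s z).2) / (4 * π^2)

end BQG

namespace BQG

/-!
Let `w` be the difference of the two vorticities. The quantity `‖∇Δ⁻¹w‖² + (V₁ - V₂)²` vanishes at
time `0`, and its rate of change is `-2 ∫ ∇Δ⁻¹w · (q₁u₁ - q₂u₂)` plus a form drag term that it
controls. In the flux the velocity is split at frequency `N`. High frequencies cost `O(N⁻²)`, since
the vorticity is bounded. For low frequencies, `w ∇Δ⁻¹w` is the divergence of a stress tensor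
quadratic in `∇Δ⁻¹w`, and the truncated velocity has gradient `O(1 + log N)`: the kernels of the
truncated Riesz transforms have logarithmic `L¹` norm. The energy `G` therefore satisfies
`G' ≤ C (1 + log N) G + C / N²` for every `N`, and Grönwall's inequality on a time step of length
`1 / C`, followed by `N → ∞`, propagates `G = 0` (Osgood's argument).
-/

open Complex (I)
open scoped ComplexConjugate ENNReal

local notation "μD" => Measure.restrict (volume : Measure (ℝ × ℝ)) Dom

/-! ### Fourier series on the fundamental domain -/

lemma measurableSet_dom : MeasurableSet Dom := measurableSet_Ioc.prod measurableSet_Ioc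

lemma volume_real_dom : (volume : Measure (ℝ × ℝ)).real Dom = 4 * π ^ 2 := by
  rw [Dom, Measure.volume_eq_prod, measureReal_prod_prod,
    volume_real_Ioc_of_le (by linarith [pi_pos])]
  ring

instance isFiniteMeasure_restrict_dom : IsFiniteMeasure μD := by
  rw [Dom, Measure.volume_eq_prod, ← Measure.prod_restrict]
  infer_instance

/-- The exponential mode `e^{i n·z}`, `2π`-periodic in both variables. -/
def mode (n : ℤ × ℤ) (z : ℝ × ℝ) : ℂ := Complex.exp (I * (n.1 * z.1 + n.2 * z.2))

/-- The Fourier coefficient of a complex function, without the normalising factor `1 / (4π²)`. -/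
def fourierInt (f : ℝ × ℝ → ℂ) (n : ℤ × ℤ) : ℂ := ∫ z in Dom, f z * mode (-n) z

/-- The Fourier coefficient of a real function, with the normalisation of `fourierInt`. -/
def coeff (f : ℝ × ℝ → ℝ) (n : ℤ × ℤ) : ℂ := fourierInt (fun z => (f z : ℂ)) n

lemma mode_add (m n : ℤ × ℤ) (z : ℝ × ℝ) : mode (m + n) z = mode m z * mode n z := by
  simp only [mode, ← Complex.exp_add, Prod.fst_add, Prod.snd_add, Int.cast_add]
  ring_nf

lemma conj_mode (n : ℤ × ℤ) (z : ℝ × ℝ) : conj (mode n z) = mode (-n) z := by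
  simp only [mode, ← Complex.exp_conj, map_mul, Complex.conj_I, map_add, Complex.conj_ofReal,
    map_intCast, Prod.fst_neg, Prod.snd_neg, Int.cast_neg]
  ring_nf

@[simp] lemma norm_mode (n : ℤ × ℤ) (z : ℝ × ℝ) : ‖mode n z‖ = 1 := by
  rw [mode, mul_comm]
  exact_mod_cast Complex.norm_exp_ofReal_mul_I (n.1 * z.1 + n.2 * z.2)

@[fun_prop] lemma continuous_mode (n : ℤ × ℤ) : Continuous (mode n) := by unfold mode; fun_prop

/-- The section of the quotient map `ℝ → ℝ / 2πℤ` with values in `(-π, π]`, on the circle of unit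
length. -/
def circleSection (x : UnitAddCircle) : ℝ := 2 * π * (AddCircle.equivIoc 1 (-(1 / 2) : ℝ) x : ℝ)

/-- The section of the quotient map onto the two-torus with values in `Dom`. -/
def torusSection (x : UnitAddTorus (Fin 2)) : ℝ × ℝ := (circleSection (x 0), circleSection (x 1))

lemma measurePreserving_circleSection : MeasurePreserving circleSection AddCircle.haarAddCircle
    (ENNReal.ofReal (2 * π)⁻¹ • volume.restrict (Ioc (-π) π)) := by
  have measurable_equivIoc : Measurable (AddCircle.equivIoc 1 (-(1 / 2) : ℝ)) :=
    (AddCircle.measurableEquivIoc 1 (-(1 / 2) : ℝ)).measurable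
  have haar_eq_volume : (AddCircle.haarAddCircle : Measure UnitAddCircle)
      = (volume : Measure (AddCircle (1 : ℝ))) := by
    rw [AddCircle.volume_eq_smul_haarAddCircle]; simp
  have preimage_eq : Ioc (-(1 / 2) : ℝ) (-(1 / 2) + 1) = (2 * π * ·) ⁻¹' Ioc (-π) π := by
    rw [preimage_const_mul_Ioc₀ _ _ two_pi_pos]
    congr 1 <;> field_simp; norm_num
  refine ⟨(measurable_subtype_coe.comp measurable_equivIoc).const_mul _, ?_⟩
  rw [haar_eq_volume, show circleSection
      = (2 * π * ·) ∘ (Subtype.val ∘ AddCircle.equivIoc 1 (-(1 / 2) : ℝ)) from rfl,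
    ← Measure.map_map (by fun_prop) (measurable_subtype_coe.comp measurable_equivIoc),
    ← Measure.map_map measurable_subtype_coe measurable_equivIoc,
    (AddCircle.measurePreserving_equivIoc (T := 1) (a := (-(1 / 2) : ℝ))).map_eq,
    map_comap_subtype_coe measurableSet_Ioc, preimage_eq,
    ← Measure.restrict_map (by fun_prop) measurableSet_Ioc,
    Real.map_volume_mul_left two_pi_pos.ne', Measure.restrict_smul, abs_of_pos (by positivity)]

lemma measurePreserving_torusSection :
    MeasurePreserving torusSection (Measure.pi fun _ => AddCircle.haarAddCircle)
      (ENNReal.ofReal (4 * π ^ 2)⁻¹ • μD) := by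
  have : IsFiniteMeasure (ENNReal.ofReal (2 * π)⁻¹ • (volume : Measure ℝ).restrict (Ioc (-π) π)) :=
    Measure.smul_finite _ ENNReal.ofReal_ne_top
  have prod_eq : (ENNReal.ofReal (2 * π)⁻¹ • (volume : Measure ℝ).restrict (Ioc (-π) π)).prod
      (ENNReal.ofReal (2 * π)⁻¹ • (volume : Measure ℝ).restrict (Ioc (-π) π))
      = ENNReal.ofReal (4 * π ^ 2)⁻¹ • μD := by
    rw [Measure.prod_smul_left, Measure.prod_smul_right, Measure.prod_restrict, smul_smul, Dom,
      ← ENNReal.ofReal_mul (by positivity)]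
    congr 2
    field_simp
    norm_num
  rw [← prod_eq]
  exact (measurePreserving_finTwoArrow _).comp
    (measurePreserving_pi _ _ fun _ : Fin 2 => measurePreserving_circleSection)

lemma mFourier_eq_mode_torusSection (n : ℤ × ℤ) (x : UnitAddTorus (Fin 2)) :
    UnitAddTorus.mFourier ![n.1, n.2] x = mode n (torusSection x) := by
  have coe_equivIoc (y : UnitAddCircle) :
      y = ((AddCircle.equivIoc 1 (-(1 / 2) : ℝ) y : ℝ) : UnitAddCircle) :=
    ((AddCircle.equivIoc 1 (-(1 / 2) : ℝ)).symm_apply_apply y).symm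
  simp only [UnitAddTorus.mFourier, ContinuousMap.coe_mk, Fin.prod_univ_two]
  conv_lhs => rw [coe_equivIoc (x 0), coe_equivIoc (x 1)]
  rw [fourier_coe_apply, fourier_coe_apply, ← Complex.exp_add, mode, torusSection]
  congr 1
  simp [circleSection]
  ring

lemma integral_comp_torusSection {F : ℝ × ℝ → ℂ} (hF : AEStronglyMeasurable F μD) :
    ∫ x, F (torusSection x) ∂(Measure.pi fun _ => AddCircle.haarAddCircle)
      = (4 * π ^ 2 : ℂ)⁻¹ * ∫ z in Dom, F z := by
  have map_eq := measurePreserving_torusSection.map_eq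
  rw [← integral_map measurePreserving_torusSection.measurable.aemeasurable
      (by rw [map_eq]; exact hF.mono_ac Measure.smul_absolutelyContinuous),
    map_eq, integral_smul_measure, ENNReal.toReal_ofReal (by positivity), Complex.real_smul]
  push_cast
  rfl

lemma mFourierCoeff_comp_torusSection {f : ℝ × ℝ → ℂ} (hf : AEStronglyMeasurable f μD)
    (n : ℤ × ℤ) :
    UnitAddTorus.mFourierCoeff (f ∘ torusSection) ![n.1, n.2]
      = (4 * π ^ 2 : ℂ)⁻¹ * fourierInt f n := by
  rw [fourierInt, ← integral_comp_torusSection (F := fun z => f z * mode (-n) z)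
      (hf.mul (continuous_mode _).aestronglyMeasurable),
    UnitAddTorus.mFourierCoeff, show -![n.1, n.2] = ![(-n).1, (-n).2] by simp]
  simp only [mFourier_eq_mode_torusSection, smul_eq_mul, Function.comp, mul_comm (mode _ _)]
  rfl

lemma hasSum_conj_mFourierCoeff_comp_torusSection {f g : ℝ × ℝ → ℂ} (hf : MemLp f 2 μD)
    (hg : MemLp g 2 μD) :
    HasSum (fun n => conj (UnitAddTorus.mFourierCoeff (f ∘ torusSection) n)
        * UnitAddTorus.mFourierCoeff (g ∘ torusSection) n)
      ((4 * π ^ 2 : ℂ)⁻¹ * ∫ z in Dom, conj (f z) * g z) := by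
  have pullback {f : ℝ × ℝ → ℂ} (hf : MemLp f 2 μD) :
      MemLp (f ∘ torusSection) 2 (Measure.pi fun _ => AddCircle.haarAddCircle) :=
    (hf.smul_measure ENNReal.ofReal_ne_top).comp_measurePreserving measurePreserving_torusSection
  have coeff_toLp {f : ℝ × ℝ → ℂ} (hf : MemLp f 2 μD) (n : Fin 2 → ℤ) :
      UnitAddTorus.mFourierCoeff (pullback hf).toLp n
        = UnitAddTorus.mFourierCoeff (f ∘ torusSection) n := by
    apply integral_congr_ae
    filter_upwards [(pullback hf).coeFn_toLp] with x hx
    rw [hx]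
  have parseval := UnitAddTorus.hasSum_prod_mFourierCoeff (pullback hf).toLp (pullback hg).toLp
  rw [← integral_comp_torusSection (F := fun z => conj (f z) * g z) (hf.1.star.mul hg.1)]
  convert! parseval using 1
  · exact funext fun n => by rw [coeff_toLp hf, coeff_toLp hg]
  · apply integral_congr_ae
    filter_upwards [(pullback hf).coeFn_toLp, (pullback hg).coeFn_toLp] with x hxf hxg
    rw [hxf, hxg]
    rfl

lemma hasSum_conj_fourierInt_mul {f g : ℝ × ℝ → ℂ} (hf : MemLp f 2 μD) (hg : MemLp g 2 μD) :
    HasSum (fun n => conj (fourierInt f n) * fourierInt g n)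
      (4 * π ^ 2 * ∫ z in Dom, conj (f z) * g z) := by
  have pi_ne_zero : (π : ℂ) ≠ 0 := by exact_mod_cast pi_pos.ne'
  have parseval := ((finTwoArrowEquiv ℤ).symm.hasSum_iff.2
    (hasSum_conj_mFourierCoeff_comp_torusSection hf hg)).mul_left ((4 * π ^ 2 : ℂ) * (4 * π ^ 2))
  convert! parseval using 1
  · ext n
    rw [Function.comp, show (finTwoArrowEquiv ℤ).symm n = ![n.1, n.2] from rfl,
      mFourierCoeff_comp_torusSection hf.1, mFourierCoeff_comp_torusSection hg.1]
    simp only [map_mul, map_inv₀, map_pow, Complex.conj_ofReal, Complex.conj_ofNat]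
    field_simp
  · field_simp

lemma hasSum_norm_fourierInt_sq {f : ℝ × ℝ → ℂ} (hf : MemLp f 2 μD) :
    HasSum (fun n => ‖fourierInt f n‖ ^ 2) (4 * π ^ 2 * ∫ z in Dom, ‖f z‖ ^ 2) := by
  have parseval := hasSum_conj_fourierInt_mul hf hf
  have conj_mul_self (w : ℂ) : conj w * w = ((‖w‖ ^ 2 : ℝ) : ℂ) := by
    rw [Complex.conj_mul', Complex.ofReal_pow]
  simp_rw [conj_mul_self] at parseval
  rw [integral_complex_ofReal] at parseval
  exact_mod_cast parseval

lemma conj_coeff (f : ℝ × ℝ → ℝ) (n : ℤ × ℤ) : conj (coeff f n) = coeff f (-n) := by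
  rw [coeff, coeff, fourierInt, fourierInt, ← integral_conj]
  simp [conj_mode]

lemma hasSum_coeff_mul_coeff {f g : ℝ × ℝ → ℝ} (hf : MemLp f 2 μD) (hg : MemLp g 2 μD)
    (l : ℤ × ℤ) :
    HasSum (fun n => coeff f n * coeff g (-l - n))
      (4 * π ^ 2 * ∫ z in Dom, (f z * g z : ℂ) * mode l z) := by
  have memLp_mul_mode : MemLp (fun z => (g z : ℂ) * mode l z) 2 μD :=
    (memLp_top_of_bound (continuous_mode l).aestronglyMeasurable 1 (by simp)).mul hg.ofReal
  have parseval :=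
    (Equiv.neg (ℤ × ℤ)).hasSum_iff.2 (hasSum_conj_fourierInt_mul hf.ofReal memLp_mul_mode)
  convert parseval using 1
  · ext n
    have conj_eq := conj_coeff f (-n)
    rw [neg_neg] at conj_eq
    rw [← conj_eq]
    refine congrArg (conj (coeff f (-n)) * ·) (integral_congr_ae (.of_forall fun z => ?_))
    simp only [mul_assoc, ← mode_add, Equiv.neg_apply]
    congr 2; abel
  · simp [mul_assoc]

lemma hasSum_re_conj_coeff_mul {f g : ℝ × ℝ → ℝ} (hf : MemLp f 2 μD) (hg : MemLp g 2 μD) :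
    HasSum (fun n => (conj (coeff f n) * coeff g n).re) (4 * π ^ 2 * ∫ z in Dom, f z * g z) := by
  convert! Complex.hasSum_re (hasSum_conj_fourierInt_mul hf.ofReal hg.ofReal) using 1
  have integral_eq : ∫ z in Dom, conj (f z : ℂ) * (g z : ℂ)
      = ((∫ z in Dom, f z * g z : ℝ) : ℂ) := by
    rw [← integral_complex_ofReal]; simp
  erw [integral_eq]
  norm_cast

lemma hasSum_norm_coeff_sq {f : ℝ × ℝ → ℝ} (hf : MemLp f 2 μD) :
    HasSum (fun n => ‖coeff f n‖ ^ 2) (4 * π ^ 2 * ∫ z in Dom, f z ^ 2) := by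
  simpa [coeff] using hasSum_norm_fourierInt_sq hf.ofReal

lemma integral_exp_int_mul (n : ℤ) :
    ∫ x in Ioc (-π) π, Complex.exp (I * (n * x)) = if n = 0 then (2 * π : ℂ) else 0 := by
  rw [← intervalIntegral.integral_of_le (by linarith [pi_pos])]
  split_ifs with hn
  · subst hn
    simp; ring
  · have periodic : Complex.exp (I * n * (π : ℝ)) = Complex.exp (I * n * (-π : ℝ)) := by
      rw [Complex.exp_eq_exp_iff_exists_int]
      exact ⟨n, by push_cast; ring⟩
    simp_rw [← mul_assoc]
    rw [integral_exp_mul_complex (by simp [hn]), periodic]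
    simp

lemma integral_mode (n : ℤ × ℤ) : ∫ z in Dom, mode n z = if n = 0 then (4 * π ^ 2 : ℂ) else 0 := by
  simp_rw [mode, mul_add, Complex.exp_add, Dom, Measure.volume_eq_prod]
  rw [setIntegral_prod_mul (fun x : ℝ => Complex.exp (I * (n.1 * x)))
    (fun y : ℝ => Complex.exp (I * (n.2 * y))), integral_exp_int_mul, integral_exp_int_mul]
  by_cases h1 : n.1 = 0 <;> by_cases h2 : n.2 = 0 <;> simp [h1, h2, Prod.ext_iff]
  ring

lemma fourierInt_mode (m n : ℤ × ℤ) :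
    fourierInt (mode m) n = if n = m then (4 * π ^ 2 : ℂ) else 0 := by
  simp_rw [fourierInt, ← mode_add, integral_mode, ← sub_eq_add_neg, sub_eq_zero, eq_comm]

/-- The trigonometric polynomial with frequencies in `S` and coefficients `c`. -/
def trigPoly (S : Finset (ℤ × ℤ)) (c : ℤ × ℤ → ℂ) (z : ℝ × ℝ) : ℂ := ∑ l ∈ S, c l * mode l z

section trigPoly

variable (S : Finset (ℤ × ℤ)) (c : ℤ × ℤ → ℂ)

@[fun_prop] lemma continuous_trigPoly : Continuous (trigPoly S c) := by
  unfold trigPoly; fun_prop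

lemma norm_trigPoly_le (z : ℝ × ℝ) : ‖trigPoly S c z‖ ≤ ∑ l ∈ S, ‖c l‖ :=
  (norm_sum_le _ _).trans (by simp)

lemma memLp_trigPoly (p : ℝ≥0∞) : MemLp (trigPoly S c) p μD :=
  MemLp.of_bound (by fun_prop) _ (.of_forall (norm_trigPoly_le S c))

lemma integrable_mul_trigPoly {f : ℝ × ℝ → ℂ} (hf : Integrable f μD) :
    Integrable (fun z => f z * trigPoly S c z) μD :=
  hf.mul_bdd (by fun_prop) (.of_forall (norm_trigPoly_le S c))

lemma fourierInt_trigPoly (n : ℤ × ℤ) :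
    fourierInt (trigPoly S c) n = if n ∈ S then 4 * π ^ 2 * c n else 0 := by
  have fourierInt_sum : fourierInt (trigPoly S c) n = ∑ l ∈ S, c l * fourierInt (mode l) n := by
    simp only [fourierInt, trigPoly, Finset.sum_mul]
    rw [integral_finsetSum]
    · simp_rw [mul_assoc, integral_const_mul]
    · exact fun l _ => (MemLp.of_bound (by fun_prop) ‖c l‖ (by simp)).integrable le_rfl
  simp [fourierInt_sum, fourierInt_mode, mul_comm]

lemma integral_norm_trigPoly_sq :
    ∫ z in Dom, ‖trigPoly S c z‖ ^ 2 = 4 * π ^ 2 * ∑ l ∈ S, ‖c l‖ ^ 2 := by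
  have finite_sum : HasSum (fun n => ‖fourierInt (trigPoly S c) n‖ ^ 2)
      (∑ l ∈ S, ‖fourierInt (trigPoly S c) l‖ ^ 2) :=
    hasSum_sum_of_ne_finset_zero fun n hn => by simp [fourierInt_trigPoly, hn]
  have parseval := (hasSum_norm_fourierInt_sq (memLp_trigPoly S c 2)).unique finite_sum
  have sum_eq : ∑ l ∈ S, ‖fourierInt (trigPoly S c) l‖ ^ 2
      = (4 * π ^ 2) * (4 * π ^ 2 * ∑ l ∈ S, ‖c l‖ ^ 2) := by
    simp_rw [Finset.mul_sum]
    refine Finset.sum_congr rfl fun l hl => ?_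
    simp [fourierInt_trigPoly, hl, abs_of_pos pi_pos]
    ring
  exact mul_left_cancel₀ (by positivity) (parseval.trans sum_eq)

end trigPoly

/-! ### Kernels of truncated multipliers -/

/-- The frequencies of sup-norm at most `N`. -/
def freqBox (N : ℕ) : Finset (ℤ × ℤ) := Finset.Icc (-N) N

lemma mem_freqBox {N : ℕ} {l : ℤ × ℤ} : l ∈ freqBox N ↔ ‖l‖ ≤ N := by
  simp only [freqBox, Finset.mem_Icc, Prod.le_def, Prod.norm_def, Int.norm_eq_abs, max_le_iff,
    Prod.fst_neg, Prod.snd_neg, Prod.fst_natCast, Prod.snd_natCast]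
  norm_cast
  rw [abs_le, abs_le]
  tauto

lemma card_freqBox (N : ℕ) : (freqBox N).card = (2 * N + 1) ^ 2 := by
  rw [freqBox, Finset.card_Icc_prod]
  simp only [Prod.fst_neg, Prod.snd_neg, Prod.fst_natCast, Prod.snd_natCast, Int.card_Icc]
  rw [show ((N : ℤ) + 1 - -(N : ℤ)).toNat = 2 * N + 1 by omega, sq]

lemma one_le_norm_of_ne_zero {l : ℤ × ℤ} (hl : l ≠ 0) : 1 ≤ ‖l‖ := by
  simp only [Prod.norm_def, Int.norm_eq_abs, le_max_iff]
  norm_cast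
  exact (not_and_or.1 fun h => hl (Prod.ext h.1 h.2)).imp Int.one_le_abs Int.one_le_abs

lemma norm_eq_of_mem_box {N : ℕ} {l : ℤ × ℤ} (hl : l ∈ Finset.box N) : ‖l‖ = N := by
  rw [← Int.mem_box.1 hl]
  simp [Prod.norm_def, Int.norm_eq_abs, Nat.cast_natAbs]

lemma add_one_le_norm_of_notMem_freqBox {N : ℕ} {l : ℤ × ℤ} (hl : l ∉ freqBox N) :
    (N + 1 : ℝ) ≤ ‖l‖ := by
  rw [mem_freqBox, not_le, norm_eq_of_mem_box (Int.mem_box.2 rfl)] at hl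
  rw [norm_eq_of_mem_box (Int.mem_box.2 rfl)]
  exact_mod_cast hl

lemma sum_freqBox_le_harmonic (N : ℕ) :
    ∑ l ∈ freqBox N, 1 / (1 + ‖l‖) ^ 2 ≤ 1 + 8 * (harmonic N : ℝ) := by
  induction N with
  | zero => simp [freqBox]
  | succ N ih =>
    have sum_box : ∑ l ∈ (Finset.box (N + 1) : Finset (ℤ × ℤ)), 1 / (1 + ‖l‖) ^ 2
        = 8 * (N + 1) / (N + 2 : ℝ) ^ 2 := by
      rw [Finset.sum_congr rfl fun l hl => by rw [norm_eq_of_mem_box hl], Finset.sum_const,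
        Int.card_box N.succ_ne_zero]
      push_cast
      rw [nsmul_eq_mul]
      push_cast
      ring
    rw [freqBox, ← Finset.box_succ_disjUnion, Finset.sum_disjUnion, sum_box, harmonic_succ]
    change _ + ∑ l ∈ freqBox N, 1 / (1 + ‖l‖) ^ 2 ≤ _
    have shell_le : (8 : ℝ) * (N + 1) / (N + 2) ^ 2 ≤ 8 * (N + 1 : ℝ)⁻¹ := by
      rw [← div_eq_mul_inv, div_le_div_iff₀ (by positivity) (by positivity)]
      nlinarith
    push_cast
    linarith

lemma sum_freqBox_le (N : ℕ) : ∑ l ∈ freqBox N, 1 / (1 + ‖l‖) ^ 2 ≤ 9 * (1 + log N) := by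
  have := sum_freqBox_le_harmonic N
  have := harmonic_le_one_add_log N
  have := log_natCast_nonneg N
  linarith

lemma integrableOn_dom_of_continuous {E : Type*} [NormedAddCommGroup E] {g : ℝ × ℝ → E}
    (hg : Continuous g) : IntegrableOn g Dom :=
  (hg.continuousOn.integrableOn_compact (isCompact_Icc.prod isCompact_Icc)).mono_set
    (prod_mono Ioc_subset_Icc_self Ioc_subset_Icc_self)

lemma integral_dom_eq_iterated {g : ℝ × ℝ → ℝ} (hg : Continuous g) :
    ∫ z in Dom, g z = ∫ x in (-π)..π, ∫ y in (-π)..π, g (x, y) := by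
  have le : -π ≤ π := by linarith [pi_pos]
  simp_rw [intervalIntegral.integral_of_le le]
  exact setIntegral_prod g (integrableOn_dom_of_continuous hg)

lemma intervalIntegral_sub_left_of_periodic {g : ℝ → ℝ} (hg : Function.Periodic g (2 * π)) (a : ℝ) :
    ∫ x in (-π)..π, g (a - x) = ∫ x in (-π)..π, g x := by
  rw [intervalIntegral.integral_comp_sub_left]
  convert hg.intervalIntegral_add_eq (a - π) (-π) using 2 <;> ring

lemma integral_dom_sub_left {g : ℝ × ℝ → ℝ} (hg : Continuous g)
    (hg₁ : ∀ y, Function.Periodic (fun x => g (x, y)) (2 * π))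
    (hg₂ : ∀ x, Function.Periodic (fun y => g (x, y)) (2 * π)) (z₀ : ℝ × ℝ) :
    ∫ z in Dom, g (z₀ - z) = ∫ z in Dom, g z := by
  rw [integral_dom_eq_iterated hg, integral_dom_eq_iterated (g := fun z => g (z₀ - z))
    (by fun_prop), ← intervalIntegral_sub_left_of_periodic (g := fun x => ∫ y in (-π)..π, g (x, y))
      (fun x => by simp only [fun y => hg₁ y x]) z₀.1]
  simp only [← fun x => intervalIntegral_sub_left_of_periodic (hg₂ x) z₀.2]
  rfl

lemma norm_le_pi_of_mem_dom {z : ℝ × ℝ} (hz : z ∈ Dom) : ‖z‖ ≤ π :=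
  max_le (abs_le.2 ⟨hz.1.1.le, hz.1.2⟩) (abs_le.2 ⟨hz.2.1.le, hz.2.2⟩)

lemma volume_real_ball_zero_one : (volume : Measure (ℝ × ℝ)).real (Metric.ball 0 1) = 4 := by
  rw [← Prod.mk_zero_zero, ← ball_prod_same, Measure.volume_eq_prod, measureReal_prod_prod,
    Real.volume_real_ball zero_le_one]
  norm_num

lemma integral_mul_inv_sq_le {δ R : ℝ} (hδ : 0 < δ) (hR : 0 ≤ R) :
    ∫ y in (0 : ℝ)..R, y * (1 / (δ + y) ^ 2) ≤ log ((δ + R) / δ) := by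
  have pos (y : ℝ) (hy : y ∈ uIcc 0 R) : 0 < δ + y := by
    rw [uIcc_of_le hR] at hy
    linarith [hy.1]
  have intervalIntegrable_inv : IntervalIntegrable (fun y => 1 / (δ + y)) volume 0 R :=
    ContinuousOn.intervalIntegrable (by fun_prop (disch := exact fun y hy => (pos y hy).ne'))
  have intervalIntegrable_radial :
      IntervalIntegrable (fun y => y * (1 / (δ + y) ^ 2)) volume 0 R :=
    (continuousOn_id.mul (continuousOn_const.div (by fun_prop)
      fun y hy => (pow_pos (pos y hy) 2).ne')).intervalIntegrable
  calc ∫ y in (0 : ℝ)..R, y * (1 / (δ + y) ^ 2)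
      ≤ ∫ y in (0 : ℝ)..R, 1 / (δ + y) := by
        refine intervalIntegral.integral_mono_on hR intervalIntegrable_radial
          intervalIntegrable_inv fun y hy => ?_
        have := pos y (uIcc_of_le hR ▸ hy)
        rw [mul_one_div, div_le_div_iff₀ (by positivity) this]
        nlinarith
    _ = log ((δ + R) / δ) := by
        rw [intervalIntegral.integral_comp_add_left (fun y => 1 / y),
          integral_one_div_of_pos (by linarith) (by positivity), add_zero]

lemma integral_dom_inv_sq_le {δ : ℝ} (hδ : 0 < δ) :
    ∫ z in Dom, 1 / (δ + ‖z‖) ^ 2 ≤ 8 * log ((δ + π) / δ) := by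
  have continuous_inv_sq : Continuous fun z : ℝ × ℝ => 1 / (δ + ‖z‖) ^ 2 := by
    fun_prop (disch := intro; positivity)
  -- Enlarge `Dom` to the sup-norm ball of radius `π` and pass to polar coordinates for that norm.
  calc ∫ z in Dom, 1 / (δ + ‖z‖) ^ 2
      ≤ ∫ z : ℝ × ℝ in Metric.closedBall 0 π, 1 / (δ + ‖z‖) ^ 2 := by
        refine setIntegral_mono_set
          (continuous_inv_sq.continuousOn.integrableOn_compact (isCompact_closedBall 0 π))
          (.of_forall fun z => by positivity) (Filter.Eventually.of_forall fun z hz => ?_)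
        exact mem_closedBall_zero_iff.2 (norm_le_pi_of_mem_dom hz)
    _ = ∫ z : ℝ × ℝ, (Iic π).indicator (fun y => 1 / (δ + y) ^ 2) ‖z‖ := by
        rw [← integral_indicator Metric.isClosed_closedBall.measurableSet]
        congr with z
        simp [indicator]
    _ = 8 * ∫ y in (0 : ℝ)..π, y * (1 / (δ + y) ^ 2) := by
        rw [integral_fun_norm_addHaar volume, volume_real_ball_zero_one,
          intervalIntegral.integral_of_le pi_pos.le, ← Ioi_inter_Iic,
          ← setIntegral_indicator measurableSet_Iic]
        simp [indicator_apply]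
        ring
    _ ≤ 8 * log ((δ + π) / δ) := by
        gcongr
        exact integral_mul_inv_sq_le hδ pi_pos.le

/-- The weight `N⁻² + |e^{ix} - 1|² + |e^{iy} - 1|²`, comparable to `(N⁻¹ + ‖z‖)²` on `Dom`.
Multiplication by `e^{ix} - 1` or `e^{iy} - 1` acts on Fourier coefficients as a finite
difference. -/
def diffWeight (N : ℕ) (z : ℝ × ℝ) : ℝ :=
  (1 / N) ^ 2 + ‖mode (1, 0) z - 1‖ ^ 2 + ‖mode (0, 1) z - 1‖ ^ 2

@[fun_prop] lemma continuous_diffWeight (N : ℕ) : Continuous (diffWeight N) := by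
  unfold diffWeight; fun_prop

lemma diffWeight_pos {N : ℕ} (hN : 1 ≤ N) (z : ℝ × ℝ) : 0 < diffWeight N z := by
  unfold diffWeight; positivity

lemma half_abs_le_norm_exp_sub_one {x : ℝ} (hx : |x| ≤ π) :
    |x| / 2 ≤ ‖Complex.exp (I * x) - 1‖ := by
  have jordan := mul_abs_le_abs_sin (x := x / 2) (by rw [abs_div, abs_two]; linarith)
  rw [Complex.norm_exp_I_mul_ofReal_sub_one, norm_mul, Real.norm_eq_abs, Real.norm_eq_abs, abs_two]
  have two_div_pi : 1 / 2 ≤ 2 / π := by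
    rw [div_le_div_iff₀ two_pos pi_pos]; linarith [pi_le_four]
  rw [abs_div, abs_two] at jordan
  nlinarith [abs_nonneg x]

lemma sq_le_diffWeight (N : ℕ) {z : ℝ × ℝ} (hz : ‖z‖ ≤ π) :
    (1 / N + ‖z‖) ^ 2 ≤ 5 * diffWeight N z := by
  have mode_fst : mode (1, 0) z = Complex.exp (I * z.1) := by simp [mode]
  have mode_snd : mode (0, 1) z = Complex.exp (I * z.2) := by simp [mode]
  have fst_le := half_abs_le_norm_exp_sub_one ((norm_fst_le z).trans hz)
  have snd_le := half_abs_le_norm_exp_sub_one ((norm_snd_le z).trans hz)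
  have norm_sq_le : (‖z‖ / 2) ^ 2 ≤ ‖mode (1, 0) z - 1‖ ^ 2 + ‖mode (0, 1) z - 1‖ ^ 2 := by
    rw [mode_fst, mode_snd]
    rcases max_choice ‖z.1‖ ‖z.2‖ with h | h <;> rw [Prod.norm_def, h, Real.norm_eq_abs]
    · nlinarith [abs_nonneg z.1]
    · nlinarith [abs_nonneg z.2]
  unfold diffWeight
  nlinarith [sq_nonneg (4 * (1 / (N : ℝ)) - ‖z‖)]

lemma integral_inv_diffWeight_le {N : ℕ} (hN : 1 ≤ N) :
    ∫ z in Dom, 1 / diffWeight N z ≤ 80 * (1 + log N) := by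
  have one_le : (1 : ℝ) ≤ N := by exact_mod_cast hN
  have log_le : log ((1 / N + π) / (1 / N)) ≤ 2 * (1 + log N) := by
    have log_five : log 5 ≤ 2 := by
      rw [log_le_iff_le_exp (by norm_num), ← one_add_one_eq_two, exp_add]
      nlinarith [exp_one_gt_d9]
    calc log ((1 / N + π) / (1 / N)) ≤ log (5 * N) := by
          refine log_le_log (by positivity) ?_
          rw [div_le_iff₀ (by positivity)]
          field_simp
          nlinarith [pi_le_four]
      _ = log 5 + log N := log_mul (by norm_num) (by positivity)
      _ ≤ 2 * (1 + log N) := by linarith [log_nonneg one_le]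
  calc ∫ z in Dom, 1 / diffWeight N z ≤ ∫ z in Dom, 5 * (1 / (1 / N + ‖z‖) ^ 2) := by
        refine setIntegral_mono_on (integrableOn_dom_of_continuous ?_)
          (integrableOn_dom_of_continuous ?_) measurableSet_dom fun z hz => ?_
        · fun_prop (disch := exact fun z => (diffWeight_pos hN z).ne')
        · fun_prop (disch := intro; positivity)
        · rw [mul_one_div, div_le_div_iff₀ (diffWeight_pos hN z) (by positivity), one_mul]
          exact sq_le_diffWeight N (norm_le_pi_of_mem_dom hz)
    _ ≤ 5 * (8 * log ((1 / N + π) / (1 / N))) := by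
        rw [integral_const_mul]
        gcongr
        exact integral_dom_inv_sq_le (by positivity)
    _ ≤ 80 * (1 + log N) := by linarith

section kernel

variable {N : ℕ} {m : ℤ × ℤ → ℝ}

lemma mode_sub_one_mul_trigPoly (hm : ∀ l, N ≤ ‖l‖ → m l = 0) {e : ℤ × ℤ} (he : ‖e‖ ≤ 1)
    (z : ℝ × ℝ) :
    (mode e z - 1) * trigPoly (freqBox N) (fun l => m l) z
      = trigPoly (freqBox N) (fun l => (m (l - e) - m l : ℝ)) z := by
  have shift : ∑ l ∈ freqBox N, (m l : ℂ) * mode (l + e) z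
      = ∑ l ∈ freqBox N, (m (l - e) : ℂ) * mode l z := by
    rw [← tsum_eq_sum (L := .unconditional _) fun l hl => ?_,
      ← tsum_eq_sum (L := .unconditional _) fun l hl => ?_,
      ← (Equiv.addRight e).tsum_eq fun l => (m (l - e) : ℂ) * mode l z]
    · simp
    · rw [hm (l - e), Complex.ofReal_zero, zero_mul]
      linarith [norm_sub_norm_le l e, add_one_le_norm_of_notMem_freqBox hl]
    · rw [hm l, Complex.ofReal_zero, zero_mul]
      linarith [add_one_le_norm_of_notMem_freqBox hl]
  simp only [trigPoly, Complex.ofReal_sub, sub_mul, Finset.sum_sub_distrib, ← shift, one_mul,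
    Finset.mul_sum, mode_add]
  congr 1
  exact Finset.sum_congr rfl fun l _ => by ring

lemma integral_norm_trigPoly_sq_le_of_abs_le (hN : 1 ≤ N) (hm : ∀ l, |m l| ≤ 1) :
    (1 / N) ^ 2 * ∫ z in Dom, ‖trigPoly (freqBox N) (fun l => m l) z‖ ^ 2 ≤ 36 * π ^ 2 := by
  have one_le : (1 : ℝ) ≤ N := by exact_mod_cast hN
  have sum_le : ∑ l ∈ freqBox N, ‖(m l : ℂ)‖ ^ 2 ≤ 9 * (N : ℝ) ^ 2 := by
    calc ∑ l ∈ freqBox N, ‖(m l : ℂ)‖ ^ 2 ≤ ∑ _l ∈ freqBox N, (1 : ℝ) := by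
          gcongr with l
          rw [Complex.norm_real]
          exact pow_le_one₀ (norm_nonneg _) (hm l)
      _ = (2 * N + 1) ^ 2 := by simp [card_freqBox]
      _ ≤ 9 * (N : ℝ) ^ 2 := by nlinarith
  rw [integral_norm_trigPoly_sq]
  calc (1 / N : ℝ) ^ 2 * (4 * π ^ 2 * ∑ l ∈ freqBox N, ‖(m l : ℂ)‖ ^ 2)
      ≤ (1 / N : ℝ) ^ 2 * (4 * π ^ 2 * (9 * (N : ℝ) ^ 2)) := by gcongr
    _ = 36 * π ^ 2 := by field_simp; ring

lemma integral_norm_trigPoly_sq_le_of_decay {b : ℝ} (hm : ∀ l, |m l| ≤ b / (1 + ‖l‖)) :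
    ∫ z in Dom, ‖trigPoly (freqBox N) (fun l => m l) z‖ ^ 2 ≤ 36 * π ^ 2 * b ^ 2 * (1 + log N) := by
  have sum_le : ∑ l ∈ freqBox N, ‖(m l : ℂ)‖ ^ 2 ≤ b ^ 2 * (9 * (1 + log N)) := by
    calc ∑ l ∈ freqBox N, ‖(m l : ℂ)‖ ^ 2 ≤ ∑ l ∈ freqBox N, b ^ 2 * (1 / (1 + ‖l‖) ^ 2) := by
          gcongr with l
          rw [Complex.norm_real, Real.norm_eq_abs, mul_one_div, ← div_pow]
          gcongr
          exact hm l
      _ ≤ b ^ 2 * (9 * (1 + log N)) := by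
          rw [← Finset.mul_sum]
          gcongr
          exact sum_freqBox_le N
  rw [integral_norm_trigPoly_sq]
  calc 4 * π ^ 2 * ∑ l ∈ freqBox N, ‖(m l : ℂ)‖ ^ 2
      ≤ 4 * π ^ 2 * (b ^ 2 * (9 * (1 + log N))) := by gcongr
    _ = 36 * π ^ 2 * b ^ 2 * (1 + log N) := by ring

/-- A bounded multiplier of order zero truncated at frequency `N`: its first differences decay like
`b / |l|`. -/
structure IsTruncatedMultiplier (N : ℕ) (b : ℝ) (m : ℤ × ℤ → ℝ) : Prop where
  eq_zero : ∀ l, N ≤ ‖l‖ → m l = 0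
  abs_le_one : ∀ l, |m l| ≤ 1
  abs_diff_le : ∀ e l : ℤ × ℤ, ‖e‖ ≤ 1 → |m (l - e) - m l| ≤ b / (1 + ‖l‖)

lemma IsTruncatedMultiplier.integral_diffWeight_mul_le (hN : 1 ≤ N) {b : ℝ}
    (hm : IsTruncatedMultiplier N b m) :
    ∫ z in Dom, diffWeight N z * ‖trigPoly (freqBox N) (fun l => m l) z‖ ^ 2
      ≤ 36 * π ^ 2 * (1 + 2 * b ^ 2) * (1 + log N) := by
  have norm_le_one : ‖((1, 0) : ℤ × ℤ)‖ ≤ 1 ∧ ‖((0, 1) : ℤ × ℤ)‖ ≤ 1 := by simp [Prod.norm_def]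
  have expand (z : ℝ × ℝ) : diffWeight N z * ‖trigPoly (freqBox N) (fun l => m l) z‖ ^ 2
      = (1 / N) ^ 2 * ‖trigPoly (freqBox N) (fun l => m l) z‖ ^ 2
        + ‖trigPoly (freqBox N) (fun l => (m (l - (1, 0)) - m l : ℝ)) z‖ ^ 2
        + ‖trigPoly (freqBox N) (fun l => (m (l - (0, 1)) - m l : ℝ)) z‖ ^ 2 := by
    rw [← mode_sub_one_mul_trigPoly hm.eq_zero norm_le_one.1,
      ← mode_sub_one_mul_trigPoly hm.eq_zero norm_le_one.2, norm_mul, norm_mul, diffWeight]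
    ring
  have integrable (c : ℤ × ℤ → ℂ) : Integrable (fun z => ‖trigPoly (freqBox N) c z‖ ^ 2) μD :=
    integrableOn_dom_of_continuous (by fun_prop)
  simp_rw [expand]
  rw [integral_add (by exact ((integrable _).const_mul _).add (integrable _)) (integrable _),
    integral_add ((integrable _).const_mul _) (integrable _), integral_const_mul]
  have low := integral_norm_trigPoly_sq_le_of_abs_le hN hm.abs_le_one
  have diff_fst := integral_norm_trigPoly_sq_le_of_decay (N := N)
    fun l => hm.abs_diff_le _ l norm_le_one.1
  have diff_snd := integral_norm_trigPoly_sq_le_of_decay (N := N)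
    fun l => hm.abs_diff_le _ l norm_le_one.2
  have : 0 ≤ 36 * π ^ 2 * log N := by have := log_natCast_nonneg N; positivity
  linarith

/-- The constant in the bound `kernelConst b * (1 + log N)` for the `L¹` norm of the kernel of a
truncated multiplier. -/
def kernelConst (b : ℝ) : ℝ := 40 + 18 * π ^ 2 * (1 + 2 * b ^ 2)

lemma kernelConst_pos (b : ℝ) : 0 < kernelConst b := by unfold kernelConst; positivity

lemma IsTruncatedMultiplier.integral_norm_trigPoly_le (hN : 1 ≤ N) {b : ℝ}
    (hm : IsTruncatedMultiplier N b m) :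
    ∫ z in Dom, ‖trigPoly (freqBox N) (fun l => m l) z‖ ≤ kernelConst b * (1 + log N) := by
  set K := trigPoly (freqBox N) (fun l => (m l : ℂ))
  have continuous_inv : Continuous fun z => 1 / diffWeight N z := by
    fun_prop (disch := exact fun z => (diffWeight_pos hN z).ne')
  have young (z : ℝ × ℝ) :
      ‖K z‖ ≤ 1 / 2 * (1 / diffWeight N z) + 1 / 2 * (diffWeight N z * ‖K z‖ ^ 2) := by
    have pos := diffWeight_pos hN z
    have square : 1 / 2 * (1 / diffWeight N z) + 1 / 2 * (diffWeight N z * ‖K z‖ ^ 2) - ‖K z‖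
        = 1 / (2 * diffWeight N z) * (diffWeight N z * ‖K z‖ - 1) ^ 2 := by
      field_simp; ring
    rw [← sub_nonneg, square]
    positivity
  calc ∫ z in Dom, ‖K z‖
      ≤ ∫ z in Dom, (1 / 2 * (1 / diffWeight N z) + 1 / 2 * (diffWeight N z * ‖K z‖ ^ 2)) :=
        integral_mono (integrableOn_dom_of_continuous (by fun_prop))
          (integrableOn_dom_of_continuous (by fun_prop)) young
    _ = 1 / 2 * (∫ z in Dom, 1 / diffWeight N z)
          + 1 / 2 * ∫ z in Dom, diffWeight N z * ‖K z‖ ^ 2 := by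
        rw [integral_add (integrableOn_dom_of_continuous (by fun_prop))
          (integrableOn_dom_of_continuous (by fun_prop)), integral_const_mul, integral_const_mul]
    _ ≤ kernelConst b * (1 + log N) := by
        rw [kernelConst]
        linarith [integral_inv_diffWeight_le hN, hm.integral_diffWeight_mul_le hN]

lemma mode_sub (l : ℤ × ℤ) (z z' : ℝ × ℝ) : mode l (z - z') = mode l z * mode (-l) z' := by
  simp only [mode, ← Complex.exp_add, Prod.fst_sub, Prod.snd_sub, Prod.fst_neg, Prod.snd_neg,
    Complex.ofReal_sub, Int.cast_neg]
  ring_nf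

lemma mode_add_two_pi_fst (l : ℤ × ℤ) (x y : ℝ) : mode l (x + 2 * π, y) = mode l (x, y) := by
  rw [mode, mode, Complex.exp_eq_exp_iff_exists_int]
  exact ⟨l.1, by push_cast; ring⟩

lemma mode_add_two_pi_snd (l : ℤ × ℤ) (x y : ℝ) : mode l (x, y + 2 * π) = mode l (x, y) := by
  rw [mode, mode, Complex.exp_eq_exp_iff_exists_int]
  exact ⟨l.2, by push_cast; ring⟩

lemma trigPoly_mul_coeff_eq_integral {f : ℝ × ℝ → ℝ} (hf : Integrable f μD) (z : ℝ × ℝ) :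
    trigPoly (freqBox N) (fun l => m l * coeff f l) z
      = ∫ z' in Dom, (f z' : ℂ) * trigPoly (freqBox N) (fun l => m l) (z - z') := by
  simp only [trigPoly, Finset.mul_sum]
  rw [integral_finsetSum]
  · refine Finset.sum_congr rfl fun l _ => ?_
    rw [coeff, fourierInt, ← integral_const_mul, ← integral_mul_const]
    refine integral_congr_ae (.of_forall fun z' => ?_)
    simp only [mode_sub]
    ring
  · exact fun l _ => hf.ofReal.mul_bdd (c := |m l|) (by fun_prop) (by simp)

lemma IsTruncatedMultiplier.norm_trigPoly_mul_coeff_le (hN : 1 ≤ N) {b : ℝ}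
    (hm : IsTruncatedMultiplier N b m) {f : ℝ × ℝ → ℝ} (hf : AEStronglyMeasurable f μD) {M : ℝ}
    (hM : 0 ≤ M) (hfM : ∀ᵐ z ∂μD, |f z| ≤ M) (z : ℝ × ℝ) :
    ‖trigPoly (freqBox N) (fun l => m l * coeff f l) z‖
      ≤ M * (kernelConst b * (1 + log N)) := by
  set K := trigPoly (freqBox N) (fun l => (m l : ℂ))
  have continuous_K : Continuous K := continuous_trigPoly _ _
  have integral_K : ∫ z' in Dom, ‖K (z - z')‖ = ∫ z' in Dom, ‖K z'‖ := by
    refine integral_dom_sub_left (g := fun z => ‖K z‖) (by fun_prop) (fun y x => ?_)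
      (fun x y => ?_) z
    · simp only [K, trigPoly, mode_add_two_pi_fst]
    · simp only [K, trigPoly, mode_add_two_pi_snd]
  rw [trigPoly_mul_coeff_eq_integral (MemLp.of_bound hf M hfM |>.integrable le_rfl)]
  calc ‖∫ z' in Dom, (f z' : ℂ) * K (z - z')‖
      ≤ ∫ z' in Dom, M * ‖K (z - z')‖ := by
        refine norm_integral_le_of_norm_le (integrableOn_dom_of_continuous (by fun_prop)) ?_
        filter_upwards [hfM] with z' hz'
        rw [norm_mul, Complex.norm_real]
        gcongr
        exact hz'
    _ ≤ M * (kernelConst b * (1 + log N)) := by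
        rw [integral_const_mul, integral_K]
        gcongr
        exact hm.integral_norm_trigPoly_le hN

end kernel

/-! ### Truncated Riesz multipliers -/

/-- The symbol `|n|²` of `-Δ`. -/
def lapSymbol (n : ℤ × ℤ) : ℝ := n.1 ^ 2 + n.2 ^ 2

lemma norm_sq_le_lapSymbol (n : ℤ × ℤ) : ‖n‖ ^ 2 ≤ lapSymbol n := by
  rw [Prod.norm_def, Int.norm_eq_abs, Int.norm_eq_abs, lapSymbol]
  rcases max_choice |(n.1 : ℝ)| |(n.2 : ℝ)| with h | h <;> rw [h, sq_abs] <;> nlinarith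

lemma lapSymbol_pos {n : ℤ × ℤ} (hn : n ≠ 0) : 0 < lapSymbol n :=
  (pow_pos (norm_pos_iff.2 hn) 2).trans_le (norm_sq_le_lapSymbol n)

lemma abs_mul_sub_mul_le {φ χ : ℤ × ℤ →+ ℤ} (hφ : ∀ l, |(φ l : ℝ)| ≤ ‖l‖)
    (hχ : ∀ l, |(χ l : ℝ)| ≤ ‖l‖) {e : ℤ × ℤ} (he : ‖e‖ ≤ 1) (l : ℤ × ℤ) :
    |(φ (l - e) * χ (l - e) - φ l * χ l : ℝ)| ≤ 2 * ‖l‖ + 1 := by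
  calc |(φ (l - e) * χ (l - e) - φ l * χ l : ℝ)|
      = |(φ e * χ e - φ l * χ e - φ e * χ l : ℝ)| := by
        rw [map_sub, map_sub]; push_cast; ring_nf
    _ ≤ |(φ e : ℝ)| * |(χ e : ℝ)| + |(φ l : ℝ)| * |(χ e : ℝ)| + |(φ e : ℝ)| * |(χ l : ℝ)| := by
        simp only [← abs_mul]
        linarith [abs_sub (φ e * χ e - φ l * χ e : ℝ) (φ e * χ l),
          abs_sub (φ e * χ e : ℝ) (φ l * χ e)]
    _ ≤ 1 * 1 + ‖l‖ * 1 + 1 * ‖l‖ := by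
        gcongr <;> first | exact hφ l | exact hχ l | exact (hφ e).trans he | exact (hχ e).trans he
    _ = 2 * ‖l‖ + 1 := by ring

lemma abs_lapSymbol_sub_le {e : ℤ × ℤ} (he : ‖e‖ ≤ 1) (l : ℤ × ℤ) :
    |lapSymbol (l - e) - lapSymbol l| ≤ 2 * (2 * ‖l‖ + 1) := by
  have fst_le := abs_mul_sub_mul_le (φ := .fst ℤ ℤ) (χ := .fst ℤ ℤ) norm_fst_le norm_fst_le he l
  have snd_le := abs_mul_sub_mul_le (φ := .snd ℤ ℤ) (χ := .snd ℤ ℤ) norm_snd_le norm_snd_le he l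
  rw [two_mul]
  refine le_trans (le_of_eq ?_) ((abs_add_le _ _).trans (add_le_add fst_le snd_le))
  simp only [lapSymbol, AddMonoidHom.coe_fst, AddMonoidHom.coe_snd]
  ring_nf

/-- The piecewise linear cutoff at frequency `N`. -/
def cutoff (N : ℕ) (l : ℤ × ℤ) : ℝ := max 0 (1 - ‖l‖ / N)

lemma cutoff_eq_zero {N : ℕ} (hN : 1 ≤ N) {l : ℤ × ℤ} (hl : N ≤ ‖l‖) : cutoff N l = 0 := by
  have pos : (0 : ℝ) < N := by exact_mod_cast hN
  exact max_eq_left (sub_nonpos.2 ((one_le_div pos).2 hl))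

lemma cutoff_nonneg (N : ℕ) (l : ℤ × ℤ) : 0 ≤ cutoff N l := le_max_left _ _

lemma cutoff_le_one (N : ℕ) (l : ℤ × ℤ) : cutoff N l ≤ 1 :=
  max_le zero_le_one (sub_le_self _ (by positivity))

lemma one_sub_cutoff_le (N : ℕ) (l : ℤ × ℤ) : 1 - cutoff N l ≤ ‖l‖ / N := by
  linarith [le_max_right 0 (1 - ‖l‖ / N), cutoff.eq_1 N l]

lemma abs_cutoff_sub_le {N : ℕ} (hN : 1 ≤ N) {e : ℤ × ℤ} (he : ‖e‖ ≤ 1) (l : ℤ × ℤ) :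
    |cutoff N (l - e) - cutoff N l| ≤ 3 / (1 + ‖l‖) := by
  have one_le : (1 : ℝ) ≤ N := by exact_mod_cast hN
  have norm_sub_norm := (abs_norm_sub_norm_le l (l - e)).trans (by simpa using he)
  rcases le_or_gt ((N : ℝ) + 1) ‖l‖ with far | near
  · rw [cutoff_eq_zero hN (l := l - e) (by linarith [(abs_le.1 norm_sub_norm).2]),
      cutoff_eq_zero hN (l := l) (by linarith), sub_zero, abs_zero]
    positivity
  · calc |cutoff N (l - e) - cutoff N l| ≤ |(1 - ‖l - e‖ / N) - (1 - ‖l‖ / N)| := by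
          simpa [cutoff, max_comm (0 : ℝ)] using
            abs_max_sub_max_le_abs (1 - ‖l - e‖ / (N : ℝ)) (1 - ‖l‖ / N) 0
      _ = |‖l‖ - ‖l - e‖| / N := by
          rw [sub_sub_sub_cancel_left, ← sub_div, abs_div, Nat.abs_cast]
      _ ≤ 1 / N := by gcongr
      _ ≤ 3 / (1 + ‖l‖) := by
          rw [div_le_div_iff₀ (by positivity) (by positivity)]
          linarith

/-- The symbol `φ(l) χ(l) / |l|²` of a product of two Riesz transforms; its value at `l = 0` is
`0`. -/
def rieszSymbol (φ χ : ℤ × ℤ →+ ℤ) (l : ℤ × ℤ) : ℝ := φ l * χ l / lapSymbol l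

section rieszSymbol

variable {φ χ : ℤ × ℤ →+ ℤ} (hφ : ∀ l, |(φ l : ℝ)| ≤ ‖l‖) (hχ : ∀ l, |(χ l : ℝ)| ≤ ‖l‖)
include hφ hχ

lemma abs_rieszSymbol_le_one (l : ℤ × ℤ) : |rieszSymbol φ χ l| ≤ 1 := by
  rcases eq_or_ne l 0 with rfl | hl
  · simp [rieszSymbol]
  · rw [rieszSymbol, abs_div, abs_mul, abs_of_pos (lapSymbol_pos hl), div_le_one (lapSymbol_pos hl)]
    calc |(φ l : ℝ)| * |(χ l : ℝ)| ≤ ‖l‖ * ‖l‖ := by gcongr <;> simp [*]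
      _ ≤ lapSymbol l := by rw [← sq]; exact norm_sq_le_lapSymbol l

lemma abs_rieszSymbol_sub_le {e : ℤ × ℤ} (he : ‖e‖ ≤ 1) (l : ℤ × ℤ) :
    |rieszSymbol φ χ (l - e) - rieszSymbol φ χ l| ≤ 45 / (1 + ‖l‖) := by
  have bound_of_norm_le (hl : ‖l‖ ≤ 1) :
      |rieszSymbol φ χ (l - e) - rieszSymbol φ χ l| ≤ 45 / (1 + ‖l‖) := by
    rw [le_div_iff₀ (by positivity)]
    have := abs_sub (rieszSymbol φ χ (l - e)) (rieszSymbol φ χ l)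
    have := abs_rieszSymbol_le_one hφ hχ (l - e)
    have := abs_rieszSymbol_le_one hφ hχ l
    nlinarith [norm_nonneg l]
  rcases eq_or_ne l 0 with rfl | hl
  · exact bound_of_norm_le (by simp)
  rcases eq_or_ne (l - e) 0 with hle | hle
  · exact bound_of_norm_le (sub_eq_zero.1 hle ▸ he)
  have pos := lapSymbol_pos hle
  have decompose : rieszSymbol φ χ (l - e) - rieszSymbol φ χ l
      = ((φ (l - e) * χ (l - e) - φ l * χ l)
          - rieszSymbol φ χ l * (lapSymbol (l - e) - lapSymbol l)) / lapSymbol (l - e) := by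
    have := lapSymbol_pos hl
    simp only [rieszSymbol]
    field_simp
    ring
  have one_le := one_le_norm_of_ne_zero hle
  have norm_le : ‖l‖ ≤ ‖l - e‖ + 1 := by linarith [norm_sub_norm_le l e]
  rw [decompose, abs_div, abs_of_pos pos, div_le_div_iff₀ pos (by positivity)]
  calc |(φ (l - e) * χ (l - e) - φ l * χ l)
          - rieszSymbol φ χ l * (lapSymbol (l - e) - lapSymbol l)| * (1 + ‖l‖)
      ≤ ((2 * ‖l‖ + 1) + 1 * (2 * (2 * ‖l‖ + 1))) * (1 + ‖l‖) := by
        gcongr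
        refine (abs_sub _ _).trans (add_le_add (abs_mul_sub_mul_le hφ hχ he l) ?_)
        rw [abs_mul]
        gcongr
        exacts [abs_rieszSymbol_le_one hφ hχ l, abs_lapSymbol_sub_le he l]
    _ ≤ 45 * ‖l - e‖ ^ 2 := by nlinarith [norm_nonneg l]
    _ ≤ 45 * lapSymbol (l - e) := by gcongr; exact norm_sq_le_lapSymbol _

lemma isTruncatedMultiplier_cutoff_mul_rieszSymbol {N : ℕ} (hN : 1 ≤ N) :
    IsTruncatedMultiplier N 48 (fun l => cutoff N l * rieszSymbol φ χ l) where
  eq_zero l hl := by rw [cutoff_eq_zero hN hl, zero_mul]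
  abs_le_one l := by
    rw [abs_mul, abs_of_nonneg (cutoff_nonneg N l)]
    exact mul_le_one₀ (cutoff_le_one N l) (abs_nonneg _) (abs_rieszSymbol_le_one hφ hχ l)
  abs_diff_le e l he := by
    calc |cutoff N (l - e) * rieszSymbol φ χ (l - e) - cutoff N l * rieszSymbol φ χ l|
        = |cutoff N (l - e) * (rieszSymbol φ χ (l - e) - rieszSymbol φ χ l)
            + (cutoff N (l - e) - cutoff N l) * rieszSymbol φ χ l| := by ring_nf
      _ ≤ |cutoff N (l - e)| * |rieszSymbol φ χ (l - e) - rieszSymbol φ χ l|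
            + |cutoff N (l - e) - cutoff N l| * |rieszSymbol φ χ l| := by
          simp only [← abs_mul]; exact abs_add_le _ _
      _ ≤ 1 * (45 / (1 + ‖l‖)) + 3 / (1 + ‖l‖) * 1 := by
          rw [abs_of_nonneg (cutoff_nonneg N _)]
          gcongr
          · exact cutoff_le_one N _
          · exact abs_rieszSymbol_sub_le hφ hχ he l
          · exact abs_cutoff_sub_le hN he l
          · exact abs_rieszSymbol_le_one hφ hχ l
      _ = 48 / (1 + ‖l‖) := by ring

end rieszSymbol

/-! ### The stress tensor of a potential gradient -/

/-- `(p₁, p₂)` is a square integrable curl-free vector field with divergence `w`, stated on Fourier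
coefficients; `φ` and `χ` are the symbols (divided by `i`) of the two partial derivatives, kept
abstract so that the two components can be exchanged. -/
structure IsPotentialGradient (φ χ : ℤ × ℤ →+ ℤ) (w p₁ p₂ : ℝ × ℝ → ℝ) : Prop where
  memLp_div : MemLp w 2 μD
  memLp_fst : MemLp p₁ 2 μD
  memLp_snd : MemLp p₂ 2 μD
  coeff_div : ∀ n, coeff w n = I * (φ n * coeff p₁ n + χ n * coeff p₂ n)
  curl_eq_zero : ∀ n, (φ n : ℂ) * coeff p₂ n = χ n * coeff p₁ n

lemma eq_zero_of_hasSum_of_add_reflect {α : Type*} [AddCommGroup α] {F : α → ℂ} {S : ℂ} (a : α)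
    (hF : HasSum F S) (h : ∀ n, F n + F (a - n) = 0) : S = 0 := by
  have reflect : HasSum (fun n => F (a - n)) S := (Equiv.subLeft a).hasSum_iff.2 hF
  have sum_eq : S + S = 0 := (hF.add reflect).unique (by simpa only [h] using hasSum_zero)
  linear_combination sum_eq / 2

lemma integral_mul_trigPoly {g : ℝ × ℝ → ℂ} (hg : Integrable g μD) (S : Finset (ℤ × ℤ))
    (c : ℤ × ℤ → ℂ) :
    ∫ z in Dom, g z * trigPoly S c z = ∑ l ∈ S, c l * ∫ z in Dom, g z * mode l z := by
  simp only [trigPoly, Finset.mul_sum]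
  rw [integral_finsetSum]
  · refine Finset.sum_congr rfl fun l _ => ?_
    rw [← integral_const_mul]
    exact integral_congr_ae (.of_forall fun z => by ring)
  · exact fun l _ => hg.mul_bdd (c := ‖c l‖) (by fun_prop) (by simp)

lemma norm_integral_mul_mul_le {f g : ℝ × ℝ → ℝ} (hf : MemLp f 2 μD) (hg : MemLp g 2 μD)
    {k : ℝ × ℝ → ℂ} {L : ℝ} (hk : ∀ z, ‖k z‖ ≤ L) :
    ‖∫ z in Dom, (f z * g z : ℂ) * k z‖
      ≤ L / 2 * ((∫ z in Dom, f z ^ 2) + ∫ z in Dom, g z ^ 2) := by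
  rw [← integral_add hf.integrable_sq hg.integrable_sq, ← integral_const_mul]
  refine norm_integral_le_of_norm_le ((hf.integrable_sq.add hg.integrable_sq).const_mul _)
    (.of_forall fun z => ?_)
  calc ‖(f z * g z : ℂ) * k z‖ ≤ |f z| * |g z| * L := by
        rw [norm_mul, norm_mul, Complex.norm_real, Complex.norm_real]
        gcongr
        exacts [le_rfl, le_rfl, hk z]
    _ ≤ (f z ^ 2 + g z ^ 2) / 2 * L := by
        have : 0 ≤ L := (norm_nonneg _).trans (hk z)
        gcongr
        nlinarith [two_mul_le_add_sq |f z| |g z|, sq_abs (f z), sq_abs (g z)]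
    _ = L / 2 * (f z ^ 2 + g z ^ 2) := by ring

namespace IsPotentialGradient

variable {φ χ : ℤ × ℤ →+ ℤ} {w p₁ p₂ : ℝ × ℝ → ℝ}

lemma swap (hp : IsPotentialGradient φ χ w p₁ p₂) : IsPotentialGradient χ φ w p₂ p₁ where
  memLp_div := hp.memLp_div
  memLp_fst := hp.memLp_snd
  memLp_snd := hp.memLp_fst
  coeff_div n := by rw [hp.coeff_div, add_comm]
  curl_eq_zero n := (hp.curl_eq_zero n).symm

-- The Fourier form of `w p₁ = ∂₁((p₁² - p₂²) / 2) + ∂₂(p₁ p₂)`: the coefficients of the two sides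
-- differ by a series antisymmetric under `n ↦ -l - n`.
lemma integral_div_mul_fst_mul_mode (hp : IsPotentialGradient φ χ w p₁ p₂) (l : ℤ × ℤ) :
    ∫ z in Dom, (w z * p₁ z : ℂ) * mode l z
      = -(I / 2) * (φ l * ((∫ z in Dom, (p₁ z * p₁ z : ℂ) * mode l z)
          - ∫ z in Dom, (p₂ z * p₂ z : ℂ) * mode l z)
        + 2 * (χ l * ∫ z in Dom, (p₁ z * p₂ z : ℂ) * mode l z)) := by
  have four_pi_sq_ne_zero : (4 * π ^ 2 : ℂ) ≠ 0 := by
    exact_mod_cast (by positivity : (4 * π ^ 2 : ℝ) ≠ 0)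
  have sum_div_fst := hasSum_coeff_mul_coeff hp.memLp_div hp.memLp_fst l
  have sum_fst_fst := hasSum_coeff_mul_coeff hp.memLp_fst hp.memLp_fst l
  have sum_snd_snd := hasSum_coeff_mul_coeff hp.memLp_snd hp.memLp_snd l
  have sum_fst_snd := hasSum_coeff_mul_coeff hp.memLp_fst hp.memLp_snd l
  have sum_snd_fst := hasSum_coeff_mul_coeff hp.memLp_snd hp.memLp_fst l
  simp only [mul_comm (p₂ _ : ℂ) (p₁ _ : ℂ)] at sum_snd_fst
  have eq_zero := eq_zero_of_hasSum_of_add_reflect (-l)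
    ((sum_div_fst.add ((sum_fst_fst.sub sum_snd_snd).mul_left (I * φ l / 2))).add
      ((sum_fst_snd.add sum_snd_fst).mul_left (I * χ l / 2))) fun n => by
    have curl := hp.curl_eq_zero n
    have curl_reflect := hp.curl_eq_zero (-l - n)
    simp only [sub_sub_cancel, hp.coeff_div, map_sub, map_neg, Int.cast_sub, Int.cast_neg] at *
    linear_combination I * coeff p₂ (-l - n) * curl + I * coeff p₂ n * curl_reflect
  apply mul_left_cancel₀ four_pi_sq_ne_zero
  linear_combination eq_zero

lemma norm_integral_div_mul_fst_mul_trigPoly_le (hp : IsPotentialGradient φ χ w p₁ p₂)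
    {S : Finset (ℤ × ℤ)} {c : ℤ × ℤ → ℂ} {L : ℝ}
    (hφ : ∀ z, ‖trigPoly S (fun l => φ l * c l) z‖ ≤ L)
    (hχ : ∀ z, ‖trigPoly S (fun l => χ l * c l) z‖ ≤ L) :
    ‖∫ z in Dom, (w z * p₁ z : ℂ) * trigPoly S c z‖
      ≤ L * ((∫ z in Dom, p₁ z ^ 2) + ∫ z in Dom, p₂ z ^ 2) := by
  have integrable {f g : ℝ × ℝ → ℝ} (hf : MemLp f 2 μD) (hg : MemLp g 2 μD) :
      Integrable (fun z => (f z * g z : ℂ)) μD := hf.ofReal.integrable_mul hg.ofReal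
  set stress₁₁ := ∫ z in Dom, (p₁ z * p₁ z : ℂ) * trigPoly S (fun l => φ l * c l) z
  set stress₂₂ := ∫ z in Dom, (p₂ z * p₂ z : ℂ) * trigPoly S (fun l => φ l * c l) z
  set stress₁₂ := ∫ z in Dom, (p₁ z * p₂ z : ℂ) * trigPoly S (fun l => χ l * c l) z
  have integral_eq : ∫ z in Dom, (w z * p₁ z : ℂ) * trigPoly S c z
      = -(I / 2) * (stress₁₁ - stress₂₂ + 2 * stress₁₂) := by
    simp only [stress₁₁, stress₂₂, stress₁₂, integral_mul_trigPoly, integrable, hp.memLp_div,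
      hp.memLp_fst, hp.memLp_snd, hp.integral_div_mul_fst_mul_mode, Finset.mul_sum,
      ← Finset.sum_sub_distrib, ← Finset.sum_add_distrib]
    exact Finset.sum_congr rfl fun l _ => by ring
  have bound₁₁ := norm_integral_mul_mul_le hp.memLp_fst hp.memLp_fst hφ
  have bound₂₂ := norm_integral_mul_mul_le hp.memLp_snd hp.memLp_snd hφ
  have bound₁₂ := norm_integral_mul_mul_le hp.memLp_fst hp.memLp_snd hχ
  calc ‖∫ z in Dom, (w z * p₁ z : ℂ) * trigPoly S c z‖
      = 1 / 2 * ‖stress₁₁ - stress₂₂ + 2 * stress₁₂‖ := by simp [integral_eq]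
    _ ≤ 1 / 2 * (‖stress₁₁‖ + ‖stress₂₂‖ + 2 * ‖stress₁₂‖) := by
        gcongr
        refine (norm_add_le _ _).trans (add_le_add (norm_sub_le _ _) ?_)
        simp
    _ ≤ L * ((∫ z in Dom, p₁ z ^ 2) + ∫ z in Dom, p₂ z ^ 2) := by linarith

end IsPotentialGradient

/-! ### The Biot–Savart law in exponential modes -/

section linearity

variable {f g : ℝ × ℝ → ℝ}

lemma integrable_coe_mul_of_norm_le_one (hf : Integrable f μD) {k : ℝ × ℝ → ℂ} (hk : Continuous k)
    (hk1 : ∀ z, ‖k z‖ ≤ 1) : Integrable (fun z => (f z : ℂ) * k z) μD :=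
  hf.ofReal.mul_bdd hk.aestronglyMeasurable (.of_forall hk1)

lemma integrable_coe_mul_mode (hf : Integrable f μD) (n : ℤ × ℤ) :
    Integrable (fun z => (f z : ℂ) * mode n z) μD :=
  integrable_coe_mul_of_norm_le_one hf (continuous_mode n) (by simp)

lemma coeff_sub (hf : Integrable f μD) (hg : Integrable g μD) (n : ℤ × ℤ) :
    coeff (fun z => f z - g z) n = coeff f n - coeff g n := by
  simp only [coeff, fourierInt, Complex.ofReal_sub, sub_mul]
  exact integral_sub (integrable_coe_mul_mode hf _) (integrable_coe_mul_mode hg _)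

lemma coeff_const_mul (c : ℝ) (f : ℝ × ℝ → ℝ) (n : ℤ × ℤ) :
    coeff (fun z => c * f z) n = c * coeff f n := by
  simp only [coeff, fourierInt, Complex.ofReal_mul, mul_assoc, integral_const_mul]

lemma coeff_const (c : ℝ) (n : ℤ × ℤ) :
    coeff (fun _ => c) n = if n = 0 then (4 * π ^ 2 * c : ℂ) else 0 := by
  simp only [coeff, fourierInt, integral_const_mul, integral_mode, neg_eq_zero]
  split_ifs <;> ring

lemma integrable_mul_exp_mul (hf : Integrable f μD) (j : ℤ) {g : ℝ → ℝ} (hg : Continuous g)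
    (hg1 : ∀ y, |g y| ≤ 1) :
    Integrable (fun z : ℝ × ℝ => (f z : ℂ) * Complex.exp (-(I * (j : ℂ) * (z.1 : ℂ))) / (2 * π)
      * (g z.2 : ℂ)) μD := by
  have norm_le (z : ℝ × ℝ) : ‖mode (-(j, 0)) z * g z.2‖ ≤ 1 := by simpa using hg1 z.2
  refine ((integrable_coe_mul_of_norm_le_one hf (by fun_prop) norm_le).div_const (2 * π : ℂ)).congr
    (.of_forall fun z => ?_)
  simp only [mode, Prod.fst_neg, Prod.snd_neg]
  push_cast
  ring_nf

lemma integrable_chat (hf : Integrable f μD) (j : ℤ) (k : ℕ) :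
    Integrable (fun z : ℝ × ℝ => (f z : ℂ) * Complex.exp (-(I * (j : ℂ) * (z.1 : ℂ))) / (2 * π)
      * (cos (k * z.2) : ℂ)) μD :=
  integrable_mul_exp_mul hf j (g := fun y => cos (k * y)) (by fun_prop) fun _ => abs_cos_le_one _

lemma chat_sub (hf : Integrable f μD) (hg : Integrable g μD) (j : ℤ) (k : ℕ) :
    chat (fun z => f z - g z) j k = chat f j k - chat g j k := by
  rw [chat, chat, chat, ← integral_sub (integrable_chat hf j k) (integrable_chat hg j k)]
  exact integral_congr_ae (.of_forall fun z => by push_cast; ring)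

end linearity

lemma oddInY_mul_snd (β : ℝ) : OddInY (fun z => β * z.2) := by
  intro j k
  rw [chat, Dom, Measure.volume_eq_prod, setIntegral_prod _ (by
    exact integrable_chat (integrableOn_dom_of_continuous (by fun_prop)) j k)]
  refine integral_eq_zero_of_ae (.of_forall fun x => ?_)
  simp only [Pi.zero_apply]
  rw [← intervalIntegral.integral_of_le (by linarith [pi_pos])]
  have reflect := intervalIntegral.integral_comp_neg (a := -π) (b := π) fun y : ℝ =>
    ((β * y : ℝ) : ℂ) * Complex.exp (-(I * j * x)) / (2 * π) * (cos (k * y) : ℂ)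
  simp only [mul_neg, cos_neg, Complex.ofReal_neg, neg_mul, neg_div, intervalIntegral.integral_neg,
    neg_neg] at reflect
  linear_combination -(reflect / 2)

lemma OddInY.sub {f g : ℝ × ℝ → ℝ} (hf : Integrable f μD) (hg : Integrable g μD) (hfo : OddInY f)
    (hgo : OddInY g) : OddInY (fun z => f z - g z) :=
  fun j k => by rw [chat_sub hf hg, hfo, hgo, sub_zero]

-- The sign `σ` lets one formula cover both `k` and `-k`.
lemma coeff_eq_chat_sub_fhat {f : ℝ × ℝ → ℝ} (hf : Integrable f μD) (j : ℤ) (k : ℕ) {σ : ℤ}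
    (hσ : σ = 1 ∨ σ = -1) :
    coeff f (j, σ * k) = 2 * π * (chat f j k - I * σ * fhat f j k) := by
  have integrable_sin := integrable_mul_exp_mul hf j (g := fun y => sin (k * y)) (by fun_prop)
    fun _ => abs_sin_le_one _
  have pi_ne_zero : (π : ℂ) ≠ 0 := by exact_mod_cast pi_pos.ne'
  have exp_eq (y : ℝ) : Complex.exp (-(I * (σ * k) * y)) = cos (k * y) - I * σ * sin (k * y) := by
    rw [show -(I * (σ * k) * y) = (-(σ * (k * y)) : ℂ) * I by ring, Complex.exp_mul_I]
    rcases hσ with rfl | rfl <;> push_cast <;> simp <;> ring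
  rw [coeff, fourierInt, chat, fhat, ← integral_const_mul,
    ← integral_sub (integrable_chat hf j k) (integrable_sin.const_mul _), ← integral_const_mul]
  refine integral_congr_ae (.of_forall fun z => ?_)
  have mode_eq : mode (-(j, σ * k)) z
      = Complex.exp (-(I * j * z.1)) * Complex.exp (-(I * (σ * k) * z.2)) := by
    rw [mode, ← Complex.exp_add]
    simp only [Prod.fst_neg, Prod.snd_neg]
    push_cast
    ring_nf
  simp only [mode_eq, exp_eq]
  field_simp

/-- `IsVelocity` rewritten in exponential Fourier coefficients: `u = (V, 0) + ∇^⊥ Δ⁻¹ f` for a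
vorticity `f` of zero mean. -/
structure IsBiotSavart (f : ℝ × ℝ → ℝ) (V : ℝ) (u : ℝ × ℝ → ℝ × ℝ) : Prop where
  memLp : MemLp u 2 μD
  coeff_fst : ∀ n, coeff (fun z => (u z).1) n
    = (if n = 0 then (4 * π ^ 2 * V : ℂ) else 0) + I * n.2 * coeff f n / (2 * lapSymbol n)
  coeff_snd : ∀ n, coeff (fun z => (u z).2) n = -(I * n.1 * coeff f n / (2 * lapSymbol n))
  coeff_zero : coeff f 0 = 0

lemma IsVelocity.isBiotSavart {f : ℝ × ℝ → ℝ} {V : ℝ} {u : ℝ × ℝ → ℝ × ℝ}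
    (hu : IsVelocity f V u) (hf : Integrable f μD) (hodd : OddInY f) : IsBiotSavart f V u := by
  obtain ⟨memLp, chat_fst, fhat_fst, fhat_snd, chat_snd⟩ := hu
  have integrable_fst := (memLp.integrable one_le_two).fst
  have integrable_snd := (memLp.integrable one_le_two).snd
  have coeff_row_zero (j : ℤ) : coeff f (j, 0) = 0 := by
    simpa [hodd j 0, fhat] using coeff_eq_chat_sub_fhat hf j 0 (.inl rfl)
  have exists_sign (k : ℤ) : ∃ (σ : ℤ) (m : ℕ), (σ = 1 ∨ σ = -1) ∧ k = σ * m := by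
    rcases Int.eq_nat_or_neg k with ⟨m, rfl | rfl⟩
    exacts [⟨1, m, by simp⟩, ⟨-1, m, by simp⟩]
  have lapSymbol_eq (j : ℤ) {σ : ℤ} (hσ : σ = 1 ∨ σ = -1) (k : ℕ) :
      (lapSymbol (j, σ * k) : ℂ) = j ^ 2 + k ^ 2 := by
    rcases hσ with rfl | rfl <;> simp [lapSymbol]
  refine ⟨memLp, ?_, ?_, coeff_row_zero 0⟩ <;> rintro ⟨j, k⟩ <;>
    obtain ⟨σ, k, hσ, rfl⟩ := exists_sign k <;> rcases k.eq_zero_or_pos with rfl | hk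
  · have coeff_row := coeff_eq_chat_sub_fhat integrable_fst j 0 (σ := 1) (.inl rfl)
    rw [chat_fst] at coeff_row
    simp only [Nat.cast_zero, mul_zero, coeff_row_zero] at coeff_row ⊢
    rw [coeff_row]
    by_cases hj : j = 0 <;> simp [hj, fhat]
    ring
  · have ne_zero : (j, σ * k) ≠ 0 := by rcases hσ with rfl | rfl <;> simp [hk.ne']
    rw [coeff_eq_chat_sub_fhat integrable_fst j k hσ, coeff_eq_chat_sub_fhat hf j k hσ, chat_fst,
      fhat_fst j k hk, hodd, lapSymbol_eq j hσ, invLapCoeff, if_neg ne_zero,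
      if_neg fun h => hk.ne' h.2, if_pos (Nat.one_le_of_lt hk)]
    rcases hσ with rfl | rfl <;> push_cast <;> simp only [div_eq_mul_inv, mul_inv] <;> ring_nf <;>
      simp only [Complex.I_sq] <;> ring
  · have coeff_row := coeff_eq_chat_sub_fhat integrable_snd j 0 (σ := 1) (.inl rfl)
    simp only [Nat.cast_zero, mul_zero, coeff_row_zero] at coeff_row ⊢
    simp [coeff_row, chat_snd, fhat]
  · rw [coeff_eq_chat_sub_fhat integrable_snd j k hσ, coeff_eq_chat_sub_fhat hf j k hσ, chat_snd,
      fhat_snd j k hk, hodd, lapSymbol_eq j hσ, invLapCoeff]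
    rcases hσ with rfl | rfl <;> push_cast <;> simp only [div_eq_mul_inv, mul_inv] <;> ring_nf

/-- The gradient of `Δ⁻¹` of the vorticity difference of two flows, recovered from their velocities
by rotating `u - v` and removing the mean flow. The factor `2` compensates for `‖e_j s_k‖² = 1 / 2`,
which makes the series defining `Δ⁻¹` half of the inverse Laplacian. -/
def potentialGradient (V W : ℝ) (u v : ℝ × ℝ → ℝ × ℝ) (z : ℝ × ℝ) : ℝ × ℝ :=
  (2 * ((u z).2 - (v z).2), -2 * ((u z).1 - (v z).1 - (V - W)))

namespace IsBiotSavart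

variable {f g : ℝ × ℝ → ℝ} {V W : ℝ} {u v : ℝ × ℝ → ℝ × ℝ}
  (hu : IsBiotSavart f V u) (hv : IsBiotSavart g W v)
include hu hv

lemma memLp_potentialGradient : MemLp (potentialGradient V W u v) 2 μD :=
  memLp_prod_iff.2 ⟨(hu.memLp.snd.sub hv.memLp.snd).const_mul 2,
    ((hu.memLp.fst.sub hv.memLp.fst).sub (memLp_const _)).const_mul (-2)⟩

lemma coeff_potentialGradient_fst (hf : Integrable f μD) (hg : Integrable g μD) (n : ℤ × ℤ) :
    coeff (fun z => (potentialGradient V W u v z).1) n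
      = -(I * n.1 * coeff (fun z => f z - g z) n / lapSymbol n) := by
  simp only [potentialGradient]
  rw [coeff_const_mul, coeff_sub (hu.memLp.snd.integrable one_le_two)
    (hv.memLp.snd.integrable one_le_two), hu.coeff_snd, hv.coeff_snd, coeff_sub hf hg]
  push_cast
  ring

lemma coeff_potentialGradient_snd (hf : Integrable f μD) (hg : Integrable g μD) (n : ℤ × ℤ) :
    coeff (fun z => (potentialGradient V W u v z).2) n
      = -(I * n.2 * coeff (fun z => f z - g z) n / lapSymbol n) := by
  have integrable_u := hu.memLp.fst.integrable one_le_two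
  have integrable_v := hv.memLp.fst.integrable one_le_two
  simp only [potentialGradient]
  rw [coeff_const_mul, coeff_sub (f := fun z => (u z).1 - (v z).1) (integrable_u.sub integrable_v)
      (integrable_const _),
    coeff_sub integrable_u integrable_v, hu.coeff_fst, hv.coeff_fst, coeff_sub hf hg, coeff_const]
  split_ifs <;> push_cast <;> ring

lemma isPotentialGradient (hf : MemLp f 2 μD) (hg : MemLp g 2 μD) :
    IsPotentialGradient (.fst ℤ ℤ) (.snd ℤ ℤ) (fun z => f z - g z)
      (fun z => (potentialGradient V W u v z).1) (fun z => (potentialGradient V W u v z).2) where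
  memLp_div := hf.sub hg
  memLp_fst := (hu.memLp_potentialGradient hv).fst
  memLp_snd := (hu.memLp_potentialGradient hv).snd
  coeff_div n := by
    have integrable_f := hf.integrable one_le_two
    have integrable_g := hg.integrable one_le_two
    rw [hu.coeff_potentialGradient_fst hv integrable_f integrable_g,
      hu.coeff_potentialGradient_snd hv integrable_f integrable_g]
    rcases eq_or_ne n 0 with rfl | hn
    · simp [coeff_sub integrable_f integrable_g, hu.coeff_zero, hv.coeff_zero]
    · have lapSymbol_ne_zero : (lapSymbol n : ℂ) ≠ 0 := by exact_mod_cast (lapSymbol_pos hn).ne'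
      have lapSymbol_eq : (lapSymbol n : ℂ) = n.1 ^ 2 + n.2 ^ 2 := by simp [lapSymbol]
      simp only [AddMonoidHom.coe_fst, AddMonoidHom.coe_snd]
      field_simp
      rw [lapSymbol_eq, Complex.I_sq]
      ring
  curl_eq_zero n := by
    have integrable_f := hf.integrable one_le_two
    have integrable_g := hg.integrable one_le_two
    rw [hu.coeff_potentialGradient_fst hv integrable_f integrable_g,
      hu.coeff_potentialGradient_snd hv integrable_f integrable_g]
    simp only [AddMonoidHom.coe_fst, AddMonoidHom.coe_snd]
    ring

end IsBiotSavart

/-! ### The logarithmic rate estimate -/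

/-- Fourier coefficients of the low-frequency part of `a`, cut off linearly at frequency `N`. -/
def lowPassCoeff (N : ℕ) (a : ℝ × ℝ → ℝ) (l : ℤ × ℤ) : ℂ := cutoff N l * coeff a l / (4 * π ^ 2)

lemma trigPoly_const_mul (S : Finset (ℤ × ℤ)) (c : ℂ) (d : ℤ × ℤ → ℂ) (z : ℝ × ℝ) :
    trigPoly S (fun l => c * d l) z = c * trigPoly S d z := by
  simp only [trigPoly, Finset.mul_sum, mul_assoc]

lemma fourierInt_coe_sub_trigPoly {a : ℝ × ℝ → ℝ} (ha : Integrable a μD) (S : Finset (ℤ × ℤ))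
    (c : ℤ × ℤ → ℂ) (n : ℤ × ℤ) :
    fourierInt (fun z => a z - trigPoly S c z) n
      = coeff a n - if n ∈ S then 4 * π ^ 2 * c n else 0 := by
  rw [← fourierInt_trigPoly, coeff, fourierInt, fourierInt, fourierInt, ← integral_sub
    (integrable_coe_mul_mode ha _) (integrableOn_dom_of_continuous (by fun_prop))]
  simp only [sub_mul]

lemma fourierInt_sub_lowPass {a : ℝ × ℝ → ℝ} (ha : Integrable a μD) {N : ℕ} (hN : 1 ≤ N)
    (n : ℤ × ℤ) :
    fourierInt (fun z => a z - trigPoly (freqBox N) (lowPassCoeff N a) z) n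
      = (1 - cutoff N n) * coeff a n := by
  have pi_ne_zero : (π : ℂ) ≠ 0 := by exact_mod_cast pi_pos.ne'
  rw [fourierInt_coe_sub_trigPoly ha]
  split_ifs with hn
  · rw [lowPassCoeff]
    field_simp
  · have cutoff_eq := cutoff_eq_zero hN (not_le.1 (mem_freqBox.not.1 hn)).le
    simp [cutoff_eq]

/-- `a` is, up to its mean, a component of the velocity generated by the vorticity `f`; `χ` is the
symbol of the derivative involved, divided by `i`. -/
structure IsVelocityComponent (χ : ℤ × ℤ →+ ℤ) (f a : ℝ × ℝ → ℝ) : Prop where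
  memLp : MemLp a 2 μD
  coeff_eq : ∀ n ≠ 0, coeff a n = I * χ n * coeff f n / (2 * lapSymbol n)
  abs_symbol_le : ∀ n, |(χ n : ℝ)| ≤ ‖n‖

lemma IsBiotSavart.fst {f : ℝ × ℝ → ℝ} {V : ℝ} {u : ℝ × ℝ → ℝ × ℝ} (hu : IsBiotSavart f V u) :
    IsVelocityComponent (.snd ℤ ℤ) f (fun z => (u z).1) where
  memLp := hu.memLp.fst
  coeff_eq n hn := by simp [hu.coeff_fst, hn]
  abs_symbol_le n := norm_snd_le n

lemma IsBiotSavart.snd {f : ℝ × ℝ → ℝ} {V : ℝ} {u : ℝ × ℝ → ℝ × ℝ} (hu : IsBiotSavart f V u) :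
    IsVelocityComponent (-.fst ℤ ℤ) f (fun z => (u z).2) where
  memLp := hu.memLp.snd
  coeff_eq n _ := by simp [hu.coeff_snd, neg_div]
  abs_symbol_le n := by simpa using! norm_fst_le n

namespace IsVelocityComponent

variable {χ : ℤ × ℤ →+ ℤ} {f a : ℝ × ℝ → ℝ}

lemma norm_coeff_le (ha : IsVelocityComponent χ f a) {n : ℤ × ℤ} (hn : n ≠ 0) :
    ‖coeff a n‖ ≤ ‖coeff f n‖ / (2 * ‖n‖) := by
  have : 0 < ‖n‖ := norm_pos_iff.2 hn
  have symbol_le : |(χ n : ℝ)| * ‖n‖ ≤ lapSymbol n :=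
    calc |(χ n : ℝ)| * ‖n‖ ≤ ‖n‖ * ‖n‖ := by gcongr; exact ha.abs_symbol_le n
      _ ≤ lapSymbol n := by simpa only [sq] using norm_sq_le_lapSymbol n
  rw [ha.coeff_eq n hn, norm_div, norm_mul, norm_mul, Complex.norm_I, one_mul, norm_mul,
    Complex.norm_ofNat, Complex.norm_real, norm_of_nonneg (lapSymbol_pos hn).le,
    Complex.norm_intCast, div_le_div_iff₀ (by have := lapSymbol_pos hn; positivity) (by positivity)]
  calc |(χ n : ℝ)| * ‖coeff f n‖ * (2 * ‖n‖) = ‖coeff f n‖ * (2 * (|(χ n : ℝ)| * ‖n‖)) := by ring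
    _ ≤ ‖coeff f n‖ * (2 * lapSymbol n) := by gcongr

lemma integral_sq_le (ha : IsVelocityComponent χ f a) (hf : MemLp f 2 μD) {V : ℝ}
    (hV : ‖coeff a 0‖ ≤ 4 * π ^ 2 * |V|) :
    ∫ z in Dom, a z ^ 2 ≤ 4 * π ^ 2 * V ^ 2 + ∫ z in Dom, f z ^ 2 := by
  have sum_le := hasSum_le (fun n => ?_) (hasSum_norm_coeff_sq ha.memLp)
    ((hasSum_ite_eq (0 : ℤ × ℤ) ((4 * π ^ 2 * |V|) ^ 2)).add (hasSum_norm_coeff_sq hf))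
  · refine le_of_mul_le_mul_left (sum_le.trans_eq ?_) (by positivity : 0 < 4 * π ^ 2)
    rw [mul_pow, sq_abs]
    ring
  · split_ifs with hn
    · subst hn
      have : ‖coeff a 0‖ ^ 2 ≤ (4 * π ^ 2 * |V|) ^ 2 := by gcongr
      linarith [sq_nonneg ‖coeff f 0‖]
    · rw [zero_add]
      have : ‖coeff f n‖ / (2 * ‖n‖) ≤ ‖coeff f n‖ :=
        div_le_self (norm_nonneg _) (by linarith [one_le_norm_of_ne_zero hn])
      gcongr
      exact (ha.norm_coeff_le hn).trans this

lemma norm_trigPoly_lowPass_deriv_le (ha : IsVelocityComponent χ f a) {φ : ℤ × ℤ →+ ℤ}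
    (hφ : ∀ l, |(φ l : ℝ)| ≤ ‖l‖) {M : ℝ} (hM : 0 ≤ M) (hf : AEStronglyMeasurable f μD)
    (hfM : ∀ᵐ z ∂μD, |f z| ≤ M) {N : ℕ} (hN : 1 ≤ N) (z : ℝ × ℝ) :
    ‖trigPoly (freqBox N) (fun l => φ l * lowPassCoeff N a l) z‖
      ≤ M * (kernelConst 48 * (1 + log N)) := by
  have coeff_eq (l : ℤ × ℤ) : φ l * lowPassCoeff N a l
      = I / (8 * π ^ 2) * ((cutoff N l * rieszSymbol φ χ l : ℝ) * coeff f l) := by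
    rcases eq_or_ne l 0 with rfl | hl
    · simp [rieszSymbol]
    · rw [lowPassCoeff, ha.coeff_eq l hl, rieszSymbol]
      push_cast
      simp only [div_eq_mul_inv, mul_inv]
      ring
  have norm_const_le : ‖I / (8 * π ^ 2 : ℂ)‖ ≤ 1 := by
    have pi_sq : 1 ≤ 8 * π ^ 2 := by nlinarith [pi_gt_three]
    simpa [abs_of_pos pi_pos] using inv_le_one_of_one_le₀ pi_sq
  simp only [coeff_eq, trigPoly_const_mul, norm_mul]
  have multiplier_bound :=
    (isTruncatedMultiplier_cutoff_mul_rieszSymbol hφ ha.abs_symbol_le hN).norm_trigPoly_mul_coeff_le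
      hN hf hM hfM z
  exact (mul_le_of_le_one_left (norm_nonneg _) norm_const_le).trans multiplier_bound

lemma integral_norm_sub_lowPass_sq_le (ha : IsVelocityComponent χ f a) (hf : MemLp f 2 μD) {N : ℕ}
    (hN : 1 ≤ N) :
    ∫ z in Dom, ‖(a z : ℂ) - trigPoly (freqBox N) (lowPassCoeff N a) z‖ ^ 2
      ≤ (∫ z in Dom, f z ^ 2) / (4 * N ^ 2) := by
  have memLp_remainder :
      MemLp (fun z => (a z : ℂ) - trigPoly (freqBox N) (lowPassCoeff N a) z) 2 μD :=
    ha.memLp.ofReal.sub (memLp_trigPoly _ _ _)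
  have : (0 : ℝ) < N := by exact_mod_cast hN
  have sum_le := hasSum_le (fun n => ?_) (hasSum_norm_fourierInt_sq memLp_remainder)
    ((hasSum_norm_coeff_sq hf).div_const (4 * N ^ 2))
  · rw [mul_div_assoc] at sum_le
    exact le_of_mul_le_mul_left sum_le (by positivity)
  · rw [fourierInt_sub_lowPass (ha.memLp.integrable one_le_two) hN]
    rcases eq_or_ne n 0 with rfl | hn
    · simp only [cutoff, norm_zero, zero_div, sub_zero, zero_le_one, sup_of_le_right,
        Complex.ofReal_one, sub_self, zero_mul, ne_eq, OfNat.ofNat_ne_zero, not_false_eq_true,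
        zero_pow]
      positivity
    have : 0 < ‖n‖ := norm_pos_iff.2 hn
    have norm_le : ‖(1 - cutoff N n : ℂ) * coeff a n‖ ≤ ‖coeff f n‖ / (2 * N) := by
      rw [norm_mul, ← Complex.ofReal_one, ← Complex.ofReal_sub, Complex.norm_real,
        norm_of_nonneg (sub_nonneg.2 (cutoff_le_one N n))]
      calc (1 - cutoff N n) * ‖coeff a n‖ ≤ ‖n‖ / N * (‖coeff f n‖ / (2 * ‖n‖)) := by
            gcongr
            exacts [one_sub_cutoff_le N n, ha.norm_coeff_le hn]
        _ = ‖coeff f n‖ / (2 * N) := by field_simp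
    calc ‖(1 - cutoff N n : ℂ) * coeff a n‖ ^ 2 ≤ (‖coeff f n‖ / (2 * N)) ^ 2 := by gcongr
      _ = ‖coeff f n‖ ^ 2 / (4 * N ^ 2) := by ring

end IsVelocityComponent

lemma norm_integral_mul_mul_le_of_bounded {w p : ℝ × ℝ → ℝ} {r : ℝ × ℝ → ℂ} {B : ℝ}
    (hwB : ∀ᵐ z ∂μD, |w z| ≤ B) (hp : MemLp p 2 μD) (hr : MemLp r 2 μD) :
    ‖∫ z in Dom, (w z * p z : ℂ) * r z‖
      ≤ B / 2 * ((∫ z in Dom, p z ^ 2) + ∫ z in Dom, ‖r z‖ ^ 2) := by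
  rw [← integral_add hp.integrable_sq hr.integrable_norm_pow', ← integral_const_mul]
  refine norm_integral_le_of_norm_le ((hp.integrable_sq.add hr.integrable_norm_pow').const_mul _) ?_
  filter_upwards [hwB] with z hz
  have : 0 ≤ B := (abs_nonneg _).trans hz
  calc ‖(w z * p z : ℂ) * r z‖ = |w z| * (|p z| * ‖r z‖) := by
        simp only [norm_mul, Complex.norm_real, norm_eq_abs, mul_assoc]
    _ ≤ B * ((p z ^ 2 + ‖r z‖ ^ 2) / 2) := by
        gcongr
        nlinarith [two_mul_le_add_sq |p z| ‖r z‖, sq_abs (p z)]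
    _ = B / 2 * (p z ^ 2 + ‖r z‖ ^ 2) := by ring

-- The low frequencies of `a` are log-Lipschitz, so they can be handled by the stress tensor; the
-- high frequencies are small in `L²`.
lemma IsPotentialGradient.abs_integral_div_mul_fst_mul_le {φ χ ξ : ℤ × ℤ →+ ℤ}
    {w p₁ p₂ f a : ℝ × ℝ → ℝ} (hp : IsPotentialGradient φ χ w p₁ p₂)
    (ha : IsVelocityComponent ξ f a) (hφ : ∀ l, |(φ l : ℝ)| ≤ ‖l‖) (hχ : ∀ l, |(χ l : ℝ)| ≤ ‖l‖)
    {M : ℝ} (hM : 0 ≤ M) (hf : MemLp f 2 μD) (hfM : ∀ᵐ z ∂μD, |f z| ≤ M)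
    (hwB : ∀ᵐ z ∂μD, |w z| ≤ 2 * M) {N : ℕ} (hN : 1 ≤ N) :
    |∫ z in Dom, w z * p₁ z * a z|
      ≤ M * (kernelConst 48 * (1 + log N)) * ((∫ z in Dom, p₁ z ^ 2) + ∫ z in Dom, p₂ z ^ 2)
        + M * ((∫ z in Dom, p₁ z ^ 2) + (∫ z in Dom, f z ^ 2) / (4 * N ^ 2)) := by
  set lowPass := trigPoly (freqBox N) (lowPassCoeff N a)
  have memLp_remainder : MemLp (fun z => (a z : ℂ) - lowPass z) 2 μD :=
    ha.memLp.ofReal.sub (memLp_trigPoly _ _ _)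
  have integrable_wp : Integrable (fun z => (w z * p₁ z : ℂ)) μD := by
    exact_mod_cast (hp.memLp_div.integrable_mul hp.memLp_fst).ofReal (𝕜 := ℂ)
  have integrable_wpr : Integrable (fun z => (w z * p₁ z : ℂ) * (a z - lowPass z)) μD := by
    simp only [mul_assoc]
    exact (hp.memLp_fst.ofReal.integrable_mul memLp_remainder).bdd_mul (c := 2 * M)
      hp.memLp_div.ofReal.aestronglyMeasurable (by simpa using hwB)
  have split : ((∫ z in Dom, w z * p₁ z * a z : ℝ) : ℂ)
      = (∫ z in Dom, (w z * p₁ z : ℂ) * lowPass z)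
        + ∫ z in Dom, (w z * p₁ z : ℂ) * (a z - lowPass z) := by
    rw [← integral_complex_ofReal,
      ← integral_add (integrable_mul_trigPoly _ _ integrable_wp) integrable_wpr]
    exact integral_congr_ae (.of_forall fun z => by push_cast; ring)
  rw [← norm_eq_abs, ← Complex.norm_real, split]
  refine (norm_add_le _ _).trans (add_le_add ?_ ?_)
  · exact hp.norm_integral_div_mul_fst_mul_trigPoly_le
      (ha.norm_trigPoly_lowPass_deriv_le hφ hM hf.aestronglyMeasurable hfM hN)
      (ha.norm_trigPoly_lowPass_deriv_le hχ hM hf.aestronglyMeasurable hfM hN)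
  · refine (norm_integral_mul_mul_le_of_bounded hwB hp.memLp_fst memLp_remainder).trans ?_
    rw [mul_div_cancel_left₀ M two_ne_zero]
    gcongr
    exact ha.integral_norm_sub_lowPass_sq_le hf hN

/-- An instant of a bounded flow: vorticity `q` over the background `b = h + βy`, mean flow `V` and
velocity `u`, all controlled by `M`. -/
structure IsBoundedState (M : ℝ) (b q : ℝ × ℝ → ℝ) (V : ℝ) (u : ℝ × ℝ → ℝ × ℝ) : Prop where
  aestronglyMeasurable_vorticity : AEStronglyMeasurable q μD
  aestronglyMeasurable_background : AEStronglyMeasurable b μD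
  abs_vorticity_le : ∀ᵐ z ∂μD, |q z| ≤ M
  abs_vorticity_sub_le : ∀ᵐ z ∂μD, |q z - b z| ≤ M
  abs_meanFlow_le : |V| ≤ M
  isBiotSavart : IsBiotSavart (fun z => q z - b z) V u

lemma integral_sq_le_of_abs_le {f : ℝ × ℝ → ℝ} {M : ℝ} (hf : AEStronglyMeasurable f μD)
    (hfM : ∀ᵐ z ∂μD, |f z| ≤ M) : ∫ z in Dom, f z ^ 2 ≤ 4 * π ^ 2 * M ^ 2 := by
  have integral_const_eq : ∫ _ in Dom, M ^ 2 = 4 * π ^ 2 * M ^ 2 := by simp [volume_real_dom]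
  rw [← integral_const_eq]
  refine integral_mono_ae (MemLp.of_bound hf M hfM).integrable_sq (integrable_const _) ?_
  filter_upwards [hfM] with z hz using sq_le_sq' (abs_le.1 hz).1 (abs_le.1 hz).2

namespace IsBoundedState

variable {M V : ℝ} {b q : ℝ × ℝ → ℝ} {u : ℝ × ℝ → ℝ × ℝ} (hu : IsBoundedState M b q V u)
include hu

lemma bound_nonneg : 0 ≤ M := (abs_nonneg V).trans hu.abs_meanFlow_le

lemma memLp_vorticity : MemLp q 2 μD :=
  .of_bound hu.aestronglyMeasurable_vorticity M hu.abs_vorticity_le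

lemma memLp_vorticity_sub : MemLp (fun z => q z - b z) 2 μD :=
  .of_bound (hu.aestronglyMeasurable_vorticity.sub hu.aestronglyMeasurable_background) M
    hu.abs_vorticity_sub_le

lemma integral_vorticity_sub_sq_le : ∫ z in Dom, (q z - b z) ^ 2 ≤ 4 * π ^ 2 * M ^ 2 :=
  integral_sq_le_of_abs_le hu.memLp_vorticity_sub.aestronglyMeasurable hu.abs_vorticity_sub_le

end IsBoundedState

/-- The difference `q u - r v` of the vorticity fluxes of two flows. -/
def fluxDiff (q r : ℝ × ℝ → ℝ) (u v : ℝ × ℝ → ℝ × ℝ) (z : ℝ × ℝ) : ℝ × ℝ :=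
  ((u z).1 * q z - (v z).1 * r z, (u z).2 * q z - (v z).2 * r z)

/-- The pairing `∫ ∇ψ · (q u - r v)` of the potential gradient of two flows with the difference of
their vorticity fluxes. -/
def fluxPairing (q r : ℝ × ℝ → ℝ) (V W : ℝ) (u v : ℝ × ℝ → ℝ × ℝ) : ℝ :=
  (∫ z in Dom, (potentialGradient V W u v z).1 * (fluxDiff q r u v z).1)
    + ∫ z in Dom, (potentialGradient V W u v z).2 * (fluxDiff q r u v z).2

/-- The energy `∫ |∇ψ|²` of the difference of two flows, up to the mean flow. -/
def energyDiff (V W : ℝ) (u v : ℝ × ℝ → ℝ × ℝ) : ℝ :=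
  (∫ z in Dom, (potentialGradient V W u v z).1 ^ 2)
    + ∫ z in Dom, (potentialGradient V W u v z).2 ^ 2

lemma energyDiff_nonneg (V W : ℝ) (u v : ℝ × ℝ → ℝ × ℝ) : 0 ≤ energyDiff V W u v :=
  add_nonneg (integral_nonneg fun _ => sq_nonneg _) (integral_nonneg fun _ => sq_nonneg _)

lemma abs_mul_integral_mul_le {k p : ℝ × ℝ → ℝ} {M : ℝ} (hkM : ∀ᵐ z ∂μD, |k z| ≤ M)
    (hp : MemLp p 2 μD) (c : ℝ) :
    |c * ∫ z in Dom, k z * p z| ≤ M / 2 * ((∫ z in Dom, p z ^ 2) + 4 * π ^ 2 * c ^ 2) := by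
  have bound := norm_integral_mul_mul_le_of_bounded hkM hp (memLp_const (c : ℂ))
  have integral_eq : ∫ z in Dom, (k z * p z : ℂ) * c = ((c * ∫ z in Dom, k z * p z : ℝ) : ℂ) := by
    rw [integral_mul_const, mul_comm, Complex.ofReal_mul, ← integral_complex_ofReal]
    simp only [Complex.ofReal_mul]
  rw [integral_eq, Complex.norm_real, norm_eq_abs] at bound
  simpa [volume_real_dom] using bound

/-- The forcing of the mean flow by the topography `h`. -/
def formDrag (h : ℝ × ℝ → ℝ) (u : ℝ × ℝ → ℝ × ℝ) : ℝ := (∫ z in Dom, h z * (u z).2) / (4 * π ^ 2)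

lemma integral_sq_eq_zero_iff {p : ℝ × ℝ → ℝ} (hp : MemLp p 2 μD) :
    ∫ z in Dom, p z ^ 2 = 0 ↔ ∀ n, coeff p n = 0 := by
  have parseval := hasSum_norm_coeff_sq hp
  constructor
  · intro h n
    rw [h, mul_zero, hasSum_zero_iff_of_nonneg fun _ => sq_nonneg _] at parseval
    simpa using congrFun parseval n
  · intro h
    simp only [h, norm_zero, ne_eq, OfNat.ofNat_ne_zero, not_false_eq_true, zero_pow] at parseval
    simpa [pi_ne_zero] using parseval.unique hasSum_zero

/-- The factor in front of the energy in the rate estimate, apart from `1 + log N`. -/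
def rateConst (M : ℝ) : ℝ := 2 * M * kernelConst 48 + 2 * M

section pair

variable {M V W : ℝ} {b q r : ℝ × ℝ → ℝ} {u v : ℝ × ℝ → ℝ × ℝ}
  (hu : IsBoundedState M b q V u) (hv : IsBoundedState M b r W v)
include hu hv

lemma IsBoundedState.isPotentialGradient :
    IsPotentialGradient (.fst ℤ ℤ) (.snd ℤ ℤ) (fun z => q z - r z)
      (fun z => (potentialGradient V W u v z).1) (fun z => (potentialGradient V W u v z).2) := by
  simpa only [sub_sub_sub_cancel_right] using
    hu.isBiotSavart.isPotentialGradient hv.isBiotSavart hu.memLp_vorticity_sub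
      hv.memLp_vorticity_sub

lemma abs_vorticity_diff_le : ∀ᵐ z ∂μD, |q z - r z| ≤ 2 * M := by
  filter_upwards [hu.abs_vorticity_le, hv.abs_vorticity_le] with z hq hr
  linarith [abs_sub (q z) (r z)]

lemma integral_mul_flux_sub {p a d : ℝ × ℝ → ℝ} (hp : MemLp p 2 μD) (ha : MemLp a 2 μD)
    (hd : MemLp d 2 μD) :
    ∫ z in Dom, p z * (a z * q z - d z * r z)
      = (∫ z in Dom, (q z - r z) * p z * a z) + ∫ z in Dom, r z * (p z * (a z - d z)) := by
  have integrable_fst : Integrable (fun z => (q z - r z) * p z * a z) μD := by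
    simp only [mul_assoc]
    exact (hp.integrable_mul ha).bdd_mul (hu.memLp_vorticity.sub hv.memLp_vorticity).1
      (abs_vorticity_diff_le hu hv)
  have integrable_snd : Integrable (fun z => r z * (p z * (a z - d z))) μD :=
    (hp.integrable_mul (ha.sub hd)).bdd_mul hv.aestronglyMeasurable_vorticity hv.abs_vorticity_le
  rw [← integral_add integrable_fst integrable_snd]
  exact integral_congr_ae (.of_forall fun z => by ring)

-- The potential gradient is orthogonal to the velocity difference up to the mean flow.
lemma fluxPairing_eq :
    fluxPairing q r V W u v
      = (∫ z in Dom, (q z - r z) * (potentialGradient V W u v z).1 * (u z).1)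
        + (∫ z in Dom, (q z - r z) * (potentialGradient V W u v z).2 * (u z).2)
        + (V - W) * ∫ z in Dom, r z * (potentialGradient V W u v z).1 := by
  have hp := hu.isPotentialGradient hv
  have memLp_u := hu.isBiotSavart.memLp
  have memLp_v := hv.isBiotSavart.memLp
  have integrable_work {p a d : ℝ × ℝ → ℝ} (hp : MemLp p 2 μD) (ha : MemLp a 2 μD)
      (hd : MemLp d 2 μD) : Integrable (fun z => r z * (p z * (a z - d z))) μD :=
    (hp.integrable_mul (ha.sub hd)).bdd_mul hv.aestronglyMeasurable_vorticity hv.abs_vorticity_le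
  have orthogonal :
      (∫ z in Dom, r z * ((potentialGradient V W u v z).1 * ((u z).1 - (v z).1)))
        + ∫ z in Dom, r z * ((potentialGradient V W u v z).2 * ((u z).2 - (v z).2))
      = (V - W) * ∫ z in Dom, r z * (potentialGradient V W u v z).1 := by
    rw [← integral_const_mul, ← integral_add (integrable_work hp.memLp_fst memLp_u.fst memLp_v.fst)
      (integrable_work hp.memLp_snd memLp_u.snd memLp_v.snd)]
    exact integral_congr_ae (.of_forall fun z => by simp only [potentialGradient]; ring)
  simp only [fluxPairing, fluxDiff]
  rw [integral_mul_flux_sub hu hv hp.memLp_fst memLp_u.fst memLp_v.fst,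
    integral_mul_flux_sub hu hv hp.memLp_snd memLp_u.snd memLp_v.snd, ← orthogonal]
  ring

lemma abs_fluxPairing_le {N : ℕ} (hN : 1 ≤ N) :
    |fluxPairing q r V W u v|
      ≤ rateConst M * (1 + log N) * energyDiff V W u v + 2 * π ^ 2 * M ^ 3 / N ^ 2
        + 2 * π ^ 2 * M * (V - W) ^ 2 := by
  have hp := hu.isPotentialGradient hv
  have hM := hu.bound_nonneg
  have w_le := abs_vorticity_diff_le hu hv
  have first := hp.abs_integral_div_mul_fst_mul_le hu.isBiotSavart.fst norm_fst_le norm_snd_le hM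
    hu.memLp_vorticity_sub hu.abs_vorticity_sub_le w_le hN
  have second := hp.swap.abs_integral_div_mul_fst_mul_le hu.isBiotSavart.snd norm_snd_le
    norm_fst_le hM hu.memLp_vorticity_sub hu.abs_vorticity_sub_le w_le hN
  have third := abs_mul_integral_mul_le hv.abs_vorticity_le hp.memLp_fst (V - W)
  have vorticity_sq := hu.integral_vorticity_sub_sq_le
  set E₁ := ∫ z in Dom, (potentialGradient V W u v z).1 ^ 2
  set E₂ := ∫ z in Dom, (potentialGradient V W u v z).2 ^ 2
  have : 0 ≤ E₁ := integral_nonneg fun _ => sq_nonneg _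
  have : 0 ≤ E₂ := integral_nonneg fun _ => sq_nonneg _
  have : 0 ≤ log N := log_natCast_nonneg N
  calc |fluxPairing q r V W u v|
      ≤ 2 * M * kernelConst 48 * (1 + log N) * (E₁ + E₂) + M * (3 / 2) * (E₁ + E₂)
        + M * (∫ z in Dom, (q z - b z) ^ 2) / (2 * N ^ 2) + 2 * π ^ 2 * M * (V - W) ^ 2 := by
        rw [fluxPairing_eq hu hv]
        refine (abs_add_three _ _ _).trans ((add_le_add_three first second third).trans ?_)
        refine le_of_sub_nonneg ((by positivity : 0 ≤ M / 2 * E₂).trans_eq ?_)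
        ring
    _ ≤ 2 * M * kernelConst 48 * (1 + log N) * (E₁ + E₂) + M * (2 * (1 + log N)) * (E₁ + E₂)
        + M * (4 * π ^ 2 * M ^ 2) / (2 * N ^ 2) + 2 * π ^ 2 * M * (V - W) ^ 2 := by
        gcongr
        linarith
    _ = rateConst M * (1 + log N) * (E₁ + E₂) + 2 * π ^ 2 * M ^ 3 / N ^ 2
        + 2 * π ^ 2 * M * (V - W) ^ 2 := by
        rw [rateConst]
        ring

lemma two_mul_sub_mul_formDrag_sub_le {h : ℝ × ℝ → ℝ} (hh : AEStronglyMeasurable h μD)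
    (hhM : ∀ᵐ z ∂μD, |h z| ≤ M) :
    2 * ((V - W) * (formDrag h u - formDrag h v)) ≤ M * ((V - W) ^ 2 + energyDiff V W u v) := by
  have hp := hu.isPotentialGradient hv
  have hM := hu.bound_nonneg
  have integrable_force {a : ℝ × ℝ → ℝ} (ha : MemLp a 2 μD) :
      Integrable (fun z => h z * a z) μD := (ha.integrable one_le_two).bdd_mul hh hhM
  have force_eq : 2 * ((V - W) * (formDrag h u - formDrag h v))
      = ((V - W) * ∫ z in Dom, h z * (potentialGradient V W u v z).1) / (4 * π ^ 2) := by
    have integral_eq : ∫ z in Dom, h z * (potentialGradient V W u v z).1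
        = 2 * ((∫ z in Dom, h z * (u z).2) - ∫ z in Dom, h z * (v z).2) := by
      rw [← integral_sub (integrable_force hu.isBiotSavart.memLp.snd)
        (integrable_force hv.isBiotSavart.memLp.snd), ← integral_const_mul]
      exact integral_congr_ae (.of_forall fun z => by simp only [potentialGradient]; ring)
    rw [integral_eq, formDrag, formDrag]
    ring
  have bound := (le_abs_self _).trans (abs_mul_integral_mul_le hhM hp.memLp_fst (V - W))
  have energy_fst_le : ∫ z in Dom, (potentialGradient V W u v z).1 ^ 2 ≤ energyDiff V W u v :=
    le_add_of_nonneg_right (integral_nonneg fun _ => sq_nonneg _)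
  have energy_nonneg := energyDiff_nonneg V W u v
  have pi_sq : 1 ≤ 4 * π ^ 2 := by nlinarith [pi_gt_three]
  rw [force_eq, div_le_iff₀ (by positivity)]
  calc (V - W) * ∫ z in Dom, h z * (potentialGradient V W u v z).1
      ≤ M / 2 * (energyDiff V W u v + 4 * π ^ 2 * (V - W) ^ 2) := bound.trans (by gcongr)
    _ ≤ M * (4 * π ^ 2 * energyDiff V W u v + 4 * π ^ 2 * (V - W) ^ 2) := by
        gcongr
        exacts [half_le_self hM, le_mul_of_one_le_left energy_nonneg pi_sq]
    _ = M * ((V - W) ^ 2 + energyDiff V W u v) * (4 * π ^ 2) := by ring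

lemma vorticity_eq_of_energyDiff_eq_zero (h0 : energyDiff V W u v = 0) : q =ᵐ[μD] r := by
  have hp := hu.isPotentialGradient hv
  obtain ⟨energy_fst, energy_snd⟩ := (add_eq_zero_iff_of_nonneg
    (integral_nonneg fun _ => sq_nonneg _) (integral_nonneg fun _ => sq_nonneg _)).1 h0
  rw [integral_sq_eq_zero_iff hp.memLp_fst] at energy_fst
  rw [integral_sq_eq_zero_iff hp.memLp_snd] at energy_snd
  have integral_sq : ∫ z in Dom, (q z - r z) ^ 2 = 0 := by
    rw [integral_sq_eq_zero_iff hp.memLp_div]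
    exact fun n => by simp [hp.coeff_div, energy_fst, energy_snd]
  rw [integral_eq_zero_iff_of_nonneg (fun _ => sq_nonneg _) hp.memLp_div.integrable_sq]
    at integral_sq
  filter_upwards [integral_sq] with z hz using sub_eq_zero.1 (pow_eq_zero_iff two_ne_zero |>.1 hz)

end pair

/-! ### Primitives of integrable functions of time -/

lemma integral_mul_primitive_add_primitive_mul {a b c : ℝ} (hc : c ∈ uIcc a b) {f g : ℝ → ℝ}
    (hf : IntervalIntegrable f volume a b) (hg : IntervalIntegrable g volume a b) :
    ∫ s in a..b, (f s * (∫ r in a..s, g r) + (∫ r in c..s, f r) * g s)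
      = (∫ r in c..b, f r) * ∫ r in a..b, g r := by
  have by_parts := AbsolutelyContinuousOnInterval.integral_deriv_mul_eq_sub
    (hf.absolutelyContinuousOnInterval_intervalIntegral hc)
    (hg.absolutelyContinuousOnInterval_intervalIntegral left_mem_uIcc)
  simp only [intervalIntegral.integral_same, mul_zero, sub_zero] at by_parts
  rw [← by_parts]
  refine intervalIntegral.integral_congr_ae ?_
  filter_upwards [hf.ae_hasDerivAt_integral, hg.ae_hasDerivAt_integral] with s hf' hg' hs
  have mem_uIcc := uIoc_subset_uIcc hs
  rw [(hf' mem_uIcc c hc).deriv, (hg' mem_uIcc a left_mem_uIcc).deriv]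

lemma continuousOn_primitive_uIcc {a b : ℝ} {f : ℝ → ℝ} (hf : IntervalIntegrable f volume a b) :
    ContinuousOn (fun s => ∫ r in a..s, f r) (uIcc a b) :=
  (hf.absolutelyContinuousOnInterval_intervalIntegral left_mem_uIcc).continuousOn

lemma intervalIntegrable_primitive_mul_self {a b : ℝ} {f : ℝ → ℝ}
    (hf : IntervalIntegrable f volume a b) :
    IntervalIntegrable (fun s => (∫ r in a..s, f r) * f s) volume a b :=
  hf.continuousOn_mul (continuousOn_primitive_uIcc hf)

lemma sq_primitive_eq {a b : ℝ} {f : ℝ → ℝ} (hf : IntervalIntegrable f volume a b) :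
    (∫ s in a..b, f s) ^ 2 = ∫ s in a..b, 2 * ((∫ r in a..s, f r) * f s) := by
  rw [sq, ← integral_mul_primitive_add_primitive_mul left_mem_uIcc hf hf]
  congr 1 with s
  ring

lemma norm_sq_primitive_eq {a b : ℝ} {f : ℝ → ℂ} (hf : IntervalIntegrable f volume a b) :
    ‖∫ s in a..b, f s‖ ^ 2 = ∫ s in a..b, 2 * (conj (∫ r in a..s, f r) * f s).re := by
  have integral_re : ∀ s ∈ uIcc a b, (∫ r in a..s, f r).re = ∫ r in a..s, (f r).re := fun s hs =>
    (Complex.reCLM.intervalIntegral_comp_comm (hf.mono_set (uIcc_subset_uIcc_left hs))).symm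
  have integral_im : ∀ s ∈ uIcc a b, (∫ r in a..s, f r).im = ∫ r in a..s, (f r).im := fun s hs =>
    (Complex.imCLM.intervalIntegral_comp_comm (hf.mono_set (uIcc_subset_uIcc_left hs))).symm
  have integrable_re : IntervalIntegrable (fun s => (f s).re) volume a b := ⟨hf.1.re, hf.2.re⟩
  have integrable_im : IntervalIntegrable (fun s => (f s).im) volume a b := ⟨hf.1.im, hf.2.im⟩
  rw [← Complex.normSq_eq_norm_sq, Complex.normSq_apply, ← sq, ← sq, integral_re b right_mem_uIcc,
    integral_im b right_mem_uIcc, sq_primitive_eq integrable_re, sq_primitive_eq integrable_im,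
    ← intervalIntegral.integral_add
      ((intervalIntegrable_primitive_mul_self integrable_re).const_mul 2)
      ((intervalIntegrable_primitive_mul_self integrable_im).const_mul 2)]
  refine intervalIntegral.integral_congr fun s hs => ?_
  simp only [Complex.mul_re, Complex.conj_re, Complex.conj_im, integral_re s hs, integral_im s hs]
  ring

lemma exists_contDiff_deriv_eqOn {a b : ℝ} (hab : a ≤ b) {f : ℝ → ℝ}
    (hf : ContinuousOn f (Icc a b)) :
    ∃ η : ℝ → ℝ, ContDiff ℝ 1 η ∧ EqOn (deriv η) f (Icc a b) ∧
      ∀ t, η t = ∫ s in b..t, deriv η s := by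
  set ρ : ℝ → ℝ := IccExtend hab ((Icc a b).domRestrict f)
  have continuous_ρ : Continuous ρ := (continuousOn_iff_continuous_domRestrict.1 hf).Icc_extend'
  have hasDerivAt_primitive : ∀ t, HasDerivAt (fun t => ∫ s in b..t, ρ s) (ρ t) t := fun t =>
    (continuous_ρ.integral_hasStrictDerivAt b t).hasDerivAt
  have deriv_primitive : deriv (fun t => ∫ s in b..t, ρ s) = ρ :=
    funext fun t => (hasDerivAt_primitive t).deriv
  refine ⟨fun t => ∫ s in b..t, ρ s, ?_, fun t ht => ?_, fun t => by rw [deriv_primitive]⟩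
  · exact contDiff_one_iff_deriv.2
      ⟨fun t => (hasDerivAt_primitive t).differentiableAt, by rwa [deriv_primitive]⟩
  · rw [deriv_primitive]
    exact IccExtend_of_mem hab _ ht

/-- Du Bois-Reymond's lemma. The test function is the primitive of `f - ∫ g` vanishing at `b`; it
turns the hypothesis into `∫ (f - ∫ g)² = 0`. -/
lemma eq_primitive_of_integral_deriv_mul_add_eq_zero {a b : ℝ} (hab : a < b) {f g : ℝ → ℝ}
    (hf : ContinuousOn f (Icc a b)) (hg : IntervalIntegrable g volume a b)
    (hfg : ∀ η : ℝ → ℝ, ContDiff ℝ 1 η → η b = 0 →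
      ∫ s in a..b, (deriv η s * f s + η s * g s) = 0) :
    ∀ t ∈ Icc a b, f t = ∫ s in a..t, g s := by
  have uIcc_eq : uIcc a b = Icc a b := uIcc_of_le hab.le
  have continuousOn_primitive := uIcc_eq ▸ continuousOn_primitive_uIcc hg
  obtain ⟨η, hη, deriv_η, η_eq⟩ :=
    exists_contDiff_deriv_eqOn hab.le (hf.fun_sub continuousOn_primitive)
  have continuous_deriv : Continuous (deriv η) := hη.continuous_deriv le_rfl
  have integrable_add {k : ℝ → ℝ} (hk : ContinuousOn k (Icc a b)) :
      IntervalIntegrable (fun s => deriv η s * k s + η s * g s) volume a b :=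
    ((continuous_deriv.continuousOn.mul hk).intervalIntegrable_of_Icc hab.le).add
      (hg.continuousOn_mul hη.continuous.continuousOn)
  have weak := hfg η hη (by simp [η_eq b])
  have by_parts := integral_mul_primitive_add_primitive_mul right_mem_uIcc
    (continuous_deriv.intervalIntegrable a b) hg
  simp only [← η_eq] at by_parts
  have integral_sq_eq_zero : ∫ s in a..b, deriv η s ^ 2 = 0 := by
    calc ∫ s in a..b, deriv η s ^ 2
        = ∫ s in a..b, ((deriv η s * f s + η s * g s)
            - (deriv η s * (∫ r in a..s, g r) + η s * g s)) := by
          refine intervalIntegral.integral_congr fun s hs => ?_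
          have deriv_eq := deriv_η (uIcc_eq ▸ hs)
          simp only [sq] at deriv_eq ⊢
          linear_combination deriv η s * deriv_eq
      _ = 0 := by
          rw [intervalIntegral.integral_sub (integrable_add hf)
            (integrable_add continuousOn_primitive), weak, by_parts, η_eq b]
          simp
  intro t ht
  by_contra hne
  refine (intervalIntegral.integral_pos hab (continuous_deriv.fun_pow 2).continuousOn
    (fun _ _ => sq_nonneg _) ⟨t, ht, ?_⟩).ne' integral_sq_eq_zero
  rw [deriv_η ht]
  exact sq_pos_of_ne_zero (sub_ne_zero.2 hne)

/-! ### Bounded flows on a time interval -/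

/-- The measure of the space-time domain `[0, T] × D`. -/
abbrev spaceTimeMeasure (T : ℝ) : Measure (ℝ × ℝ × ℝ) := (volume.restrict (Icc 0 T)).prod μD

/-- A time-dependent flow on `[0, T]` that is a bounded state at almost every time. -/
structure IsBoundedFlow (T M : ℝ) (b : ℝ × ℝ → ℝ) (q : ℝ → ℝ × ℝ → ℝ) (V : ℝ → ℝ)
    (u : ℝ → ℝ × ℝ → ℝ × ℝ) : Prop where
  measurable_vorticity : Measurable fun p : ℝ × ℝ × ℝ => q p.1 p.2
  measurable_meanFlow : Measurable V
  measurable_velocity : Measurable fun p : ℝ × ℝ × ℝ => u p.1 p.2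
  isBoundedState : ∀ᵐ t ∂volume.restrict (Icc 0 T), IsBoundedState M b (q t) (V t) (u t)

lemma intervalIntegrable_integral_of_spaceTime {E : Type*} [NormedAddCommGroup E] [NormedSpace ℝ E]
    {T t : ℝ} (ht : t ∈ Icc 0 T) {f : ℝ → ℝ × ℝ → E}
    (hf : Integrable (fun p : ℝ × ℝ × ℝ => f p.1 p.2) (spaceTimeMeasure T)) :
    IntervalIntegrable (fun s => ∫ z in Dom, f s z) volume 0 t :=
  (intervalIntegrable_iff_integrableOn_Icc_of_le ht.1).2
    (IntegrableOn.mono_set hf.integral_prod_left (Icc_subset_Icc_right ht.2))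

lemma intervalIntegral_congr_of_ae_restrict_Icc {E : Type*} [NormedAddCommGroup E]
    [NormedSpace ℝ E] {T t : ℝ} (ht : t ∈ Icc 0 T) {f g : ℝ → E}
    (hfg : ∀ᵐ s ∂volume.restrict (Icc 0 T), f s = g s) :
    ∫ s in (0)..t, f s = ∫ s in (0)..t, g s := by
  rw [intervalIntegral.integral_of_le ht.1, intervalIntegral.integral_of_le ht.1]
  exact integral_congr_ae (ae_restrict_of_ae_restrict_of_subset
    (Ioc_subset_Icc_self.trans (Icc_subset_Icc_right ht.2)) hfg)

lemma memLp_two_spaceTime_of_integral_sq_le {T C : ℝ} {f : ℝ → ℝ × ℝ → ℝ}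
    (hf : Measurable fun p : ℝ × ℝ × ℝ => f p.1 p.2)
    (hfC : ∀ᵐ t ∂volume.restrict (Icc 0 T), MemLp (f t) 2 μD ∧ ∫ z in Dom, f t z ^ 2 ≤ C) :
    MemLp (fun p : ℝ × ℝ × ℝ => f p.1 p.2) 2 (spaceTimeMeasure T) := by
  have measurable_sq : Measurable fun p : ℝ × ℝ × ℝ => f p.1 p.2 ^ 2 := hf.pow_const 2
  refine (memLp_two_iff_integrable_sq hf.aestronglyMeasurable).2
    ((integrable_prod_iff measurable_sq.aestronglyMeasurable).2 ⟨?_, ?_⟩)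
  · filter_upwards [hfC] with t ht using ht.1.integrable_sq
  · simp only [norm_pow, norm_eq_abs, sq_abs]
    refine Integrable.of_bound
      (measurable_sq.stronglyMeasurable.integral_prod_right').aestronglyMeasurable C ?_
    filter_upwards [hfC] with t ht
    rw [norm_of_nonneg (integral_nonneg fun _ => sq_nonneg _)]
    exact ht.2

lemma IsBoundedState.integral_velocity_sq_le {M V : ℝ} {b q : ℝ × ℝ → ℝ} {u : ℝ × ℝ → ℝ × ℝ}
    (hu : IsBoundedState M b q V u) :
    ∫ z in Dom, (u z).1 ^ 2 ≤ 8 * π ^ 2 * M ^ 2 ∧ ∫ z in Dom, (u z).2 ^ 2 ≤ 8 * π ^ 2 * M ^ 2 := by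
  have meanFlow_sq_le : 4 * π ^ 2 * V ^ 2 ≤ 4 * π ^ 2 * M ^ 2 :=
    mul_le_mul_of_nonneg_left (sq_le_sq' (abs_le.1 hu.abs_meanFlow_le).1
      (abs_le.1 hu.abs_meanFlow_le).2) (by positivity)
  have vorticity_sq_le := hu.integral_vorticity_sub_sq_le
  have fst_le := hu.isBiotSavart.fst.integral_sq_le hu.memLp_vorticity_sub (V := V)
    (by simp [hu.isBiotSavart.coeff_fst, abs_of_pos pi_pos])
  have snd_le := hu.isBiotSavart.snd.integral_sq_le hu.memLp_vorticity_sub (V := V)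
    (by rw [hu.isBiotSavart.coeff_snd, hu.isBiotSavart.coeff_zero, mul_zero, zero_div, neg_zero,
      norm_zero]; positivity)
  constructor <;> linarith

namespace IsBoundedFlow

section Single

variable {T M : ℝ} {b : ℝ × ℝ → ℝ} {q : ℝ → ℝ × ℝ → ℝ} {V : ℝ → ℝ} {u : ℝ → ℝ × ℝ → ℝ × ℝ}
  (hu : IsBoundedFlow T M b q V u)
include hu

lemma memLp_velocity : MemLp (fun p : ℝ × ℝ × ℝ => u p.1 p.2) 2 (spaceTimeMeasure T) := by
  refine memLp_prod_iff.2 ⟨?_, ?_⟩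
  · refine memLp_two_spaceTime_of_integral_sq_le (f := fun t z => (u t z).1)
      hu.measurable_velocity.fst (C := 8 * π ^ 2 * M ^ 2) ?_
    filter_upwards [hu.isBoundedState] with t ht
    exact ⟨ht.isBiotSavart.memLp.fst, ht.integral_velocity_sq_le.1⟩
  · refine memLp_two_spaceTime_of_integral_sq_le (f := fun t z => (u t z).2)
      hu.measurable_velocity.snd (C := 8 * π ^ 2 * M ^ 2) ?_
    filter_upwards [hu.isBoundedState] with t ht
    exact ⟨ht.isBiotSavart.memLp.snd, ht.integral_velocity_sq_le.2⟩

lemma memLp_top_vorticity :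
    MemLp (fun p : ℝ × ℝ × ℝ => q p.1 p.2) ⊤ (spaceTimeMeasure T) := by
  refine memLp_top_of_bound hu.measurable_vorticity.aestronglyMeasurable M ?_
  refine (Measure.ae_prod_iff_ae_ae
    (measurableSet_le hu.measurable_vorticity.norm measurable_const)).2 ?_
  filter_upwards [hu.isBoundedState] with t ht using ht.abs_vorticity_le

lemma memLp_meanFlow : MemLp (fun p : ℝ × ℝ × ℝ => V p.1) 2 (spaceTimeMeasure T) := by
  refine .of_bound (hu.measurable_meanFlow.comp measurable_fst).aestronglyMeasurable M ?_
  refine (Measure.ae_prod_iff_ae_ae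
    (measurableSet_le (hu.measurable_meanFlow.comp measurable_fst).norm measurable_const)).2 ?_
  filter_upwards [hu.isBoundedState] with t ht using .of_forall fun _ => ht.abs_meanFlow_le

end Single

section Pair

variable {T M : ℝ} {b : ℝ × ℝ → ℝ} {q r : ℝ → ℝ × ℝ → ℝ} {V W : ℝ → ℝ}
  {u v : ℝ → ℝ × ℝ → ℝ × ℝ} (hu : IsBoundedFlow T M b q V u) (hv : IsBoundedFlow T M b r W v)
include hu hv

lemma memLp_fluxDiff :
    MemLp (fun p : ℝ × ℝ × ℝ => fluxDiff (q p.1) (r p.1) (u p.1) (v p.1) p.2) 2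
      (spaceTimeMeasure T) :=
  memLp_prod_iff.2
    ⟨(hu.memLp_top_vorticity.mul hu.memLp_velocity.fst).sub
      (hv.memLp_top_vorticity.mul hv.memLp_velocity.fst),
    (hu.memLp_top_vorticity.mul hu.memLp_velocity.snd).sub
      (hv.memLp_top_vorticity.mul hv.memLp_velocity.snd)⟩

lemma memLp_potentialGradient :
    MemLp (fun p : ℝ × ℝ × ℝ => potentialGradient (V p.1) (W p.1) (u p.1) (v p.1) p.2) 2
      (spaceTimeMeasure T) :=
  memLp_prod_iff.2
    ⟨(hu.memLp_velocity.snd.sub hv.memLp_velocity.snd).const_mul 2,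
    ((hu.memLp_velocity.fst.sub hv.memLp_velocity.fst).sub
      (hu.memLp_meanFlow.sub hv.memLp_meanFlow)).const_mul (-2)⟩

end Pair

end IsBoundedFlow

lemma abs_add_mul_snd_le {h : ℝ × ℝ → ℝ} {M : ℝ} (hM : ∀ᵐ z ∂μD, |h z| ≤ M) (β : ℝ) :
    ∀ᵐ z ∂μD, |h z + β * z.2| ≤ M + |β| * π := by
  filter_upwards [hM, ae_restrict_mem measurableSet_dom] with z hz hzD
  have abs_snd_le : |z.2| ≤ π := abs_le.2 ⟨hzD.2.1.le, hzD.2.2⟩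
  calc |h z + β * z.2| ≤ |h z| + |β| * |z.2| := by rw [← abs_mul]; exact abs_add_le _ _
    _ ≤ M + |β| * π := by gcongr

lemma OddInY.sub_add_mul_snd {q h : ℝ × ℝ → ℝ} (hq : Integrable q μD) (hh : Integrable h μD)
    (hqo : OddInY q) (hho : OddInY h) (β : ℝ) : OddInY (fun z => q z - (h z + β * z.2)) := by
  simp only [← sub_sub]
  exact OddInY.sub (hq.sub hh) (integrableOn_dom_of_continuous (by fun_prop))
    (OddInY.sub hq hh hqo hho) (oddInY_mul_snd β)

lemma IsWeakSolution.exists_isBoundedFlow {T β V₀ : ℝ} {h q₀ : ℝ × ℝ → ℝ} {V : ℝ → ℝ}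
    {q : ℝ → ℝ × ℝ → ℝ} {u : ℝ → ℝ × ℝ → ℝ × ℝ} (hmeas : Measurable h)
    (hbdd : ∃ M, ∀ᵐ z ∂μD, |h z| ≤ M) (hodd : OddInY h)
    (hsol : IsWeakSolution T β h V₀ q₀ V q u) :
    ∃ M₀, ∀ M ≥ M₀, IsBoundedFlow T M (fun z => h z + β * z.2) q V u := by
  obtain ⟨Mh, hMh⟩ := hbdd
  obtain ⟨Mq, hMq⟩ := hsol.bddq
  obtain ⟨MV, hMV⟩ := hsol.bddV
  rw [Measure.volume_eq_prod, ← Measure.prod_restrict] at hMq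
  have measurable_background : Measurable fun z : ℝ × ℝ => h z + β * z.2 := by fun_prop
  have integrable_h : Integrable h μD := .of_bound hmeas.aestronglyMeasurable Mh hMh
  refine ⟨max (max MV Mq) (Mq + (Mh + |β| * π)), fun M hM =>
    ⟨hsol.measq, hsol.measV, hsol.measu, ?_⟩⟩
  obtain ⟨⟨MV_le, Mq_le⟩, sum_le⟩ : (MV ≤ M ∧ Mq ≤ M) ∧ Mq + (Mh + |β| * π) ≤ M := by
    simpa only [ge_iff_le, max_le_iff] using hM
  filter_upwards [Measure.ae_ae_of_ae_prod hMq, hsol.oddq, hsol.vel,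
    ae_restrict_mem measurableSet_Icc] with t q_le odd_q velocity ht
  have measurable_q : AEStronglyMeasurable (q t) μD :=
    (hsol.measq.comp measurable_prodMk_left).aestronglyMeasurable
  have integrable_q : Integrable (q t) μD := .of_bound measurable_q Mq q_le
  have background_le := abs_add_mul_snd_le hMh β
  simp only [sub_sub] at velocity
  refine ⟨measurable_q, measurable_background.aestronglyMeasurable, ?_, ?_, (hMV t ht).trans MV_le,
    velocity.isBiotSavart (integrable_q.sub
      (.of_bound measurable_background.aestronglyMeasurable _ background_le))
      (odd_q.sub_add_mul_snd integrable_q integrable_h hodd β)⟩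
  · filter_upwards [q_le] with z hz using hz.trans Mq_le
  · filter_upwards [q_le, background_le] with z hz hbz
    exact ((abs_sub _ _).trans (add_le_add hz hbz)).trans sum_le

/-! ### Evolution of the Fourier coefficients of the vorticity difference -/

/-- A `C¹` function of space that is `2π`-periodic in both variables. -/
structure IsTestFunction (c : ℝ × ℝ → ℝ) : Prop where
  contDiff : ContDiff ℝ 1 c
  periodic_fst : ∀ x y, c (x + 2 * π, y) = c (x, y)
  periodic_snd : ∀ x y, c (x, y + 2 * π) = c (x, y)

lemma exists_ae_spaceTime_norm_le_of_continuous {E : Type*} [NormedAddCommGroup E] {g : ℝ × ℝ → E}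
    (hg : Continuous g) (T : ℝ) : ∃ K, ∀ᵐ p ∂spaceTimeMeasure T, ‖g p.2‖ ≤ K := by
  obtain ⟨K, hK⟩ := (isCompact_Icc (a := -π) (b := π)).prod (isCompact_Icc (a := -π) (b := π))
    |>.exists_bound_of_continuousOn hg.continuousOn
  refine ⟨K, Measure.quasiMeasurePreserving_snd.ae (p := fun z => ‖g z‖ ≤ K) ?_⟩
  filter_upwards [ae_restrict_mem measurableSet_dom] with z hz
  exact hK z ⟨Ioc_subset_Icc_self hz.1, Ioc_subset_Icc_self hz.2⟩

namespace IsBoundedFlow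

variable {T M : ℝ} {b : ℝ × ℝ → ℝ} {q : ℝ → ℝ × ℝ → ℝ} {V : ℝ → ℝ} {u : ℝ → ℝ × ℝ → ℝ × ℝ}
  {c : ℝ × ℝ → ℝ} (hu : IsBoundedFlow T M b q V u)
include hu

lemma integrable_vorticity_mul (hc : Continuous c) :
    Integrable (fun p : ℝ × ℝ × ℝ => q p.1 p.2 * c p.2) (spaceTimeMeasure T) := by
  obtain ⟨K, hK⟩ := exists_ae_spaceTime_norm_le_of_continuous hc T
  exact (hu.memLp_top_vorticity.integrable le_top).mul_bdd
    (hc.comp continuous_snd).aestronglyMeasurable hK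

lemma integrable_fderiv_mul_vorticity (hc : ContDiff ℝ 1 c) :
    Integrable (fun p : ℝ × ℝ × ℝ => fderiv ℝ c p.2 (u p.1 p.2) * q p.1 p.2)
      (spaceTimeMeasure T) := by
  have continuous_fderiv := hc.continuous_fderiv one_ne_zero
  obtain ⟨K, hK⟩ := exists_ae_spaceTime_norm_le_of_continuous continuous_fderiv T
  have memLp_fderiv : MemLp (fun p : ℝ × ℝ × ℝ => fderiv ℝ c p.2 (u p.1 p.2)) 2
      (spaceTimeMeasure T) := by
    refine hu.memLp_velocity.of_le_mul (c := K) ?_ ?_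
    · exact isBoundedBilinearMap_apply.continuous.comp_aestronglyMeasurable
        ((continuous_fderiv.comp continuous_snd).aestronglyMeasurable.prodMk
          hu.memLp_velocity.aestronglyMeasurable)
    · filter_upwards [hK] with p hp
      exact (fderiv ℝ c p.2).le_of_opNorm_le hp _
  exact (hu.memLp_top_vorticity.mul memLp_fderiv (r := 2)).integrable one_le_two

end IsBoundedFlow

lemma fderiv_mul_apply_prod {η : ℝ → ℝ} {c : ℝ × ℝ → ℝ} {s : ℝ} {z : ℝ × ℝ}
    (hη : DifferentiableAt ℝ η s) (hc : DifferentiableAt ℝ c z) (a : ℝ) (w : ℝ × ℝ) :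
    fderiv ℝ (fun p : ℝ × ℝ × ℝ => η p.1 * c p.2) (s, z) (a, w)
      = deriv η s * a * c z + η s * fderiv ℝ c z w := by
  have hasFDerivAt_η : HasFDerivAt (fun p : ℝ × ℝ × ℝ => η p.1) _ (s, z) :=
    HasFDerivAt.comp (s, z) (f := Prod.fst) hη.hasFDerivAt hasFDerivAt_fst
  have hasFDerivAt_c : HasFDerivAt (fun p : ℝ × ℝ × ℝ => c p.2) _ (s, z) :=
    HasFDerivAt.comp (s, z) (f := Prod.snd) hc.hasFDerivAt hasFDerivAt_snd
  rw [(hasFDerivAt_η.fun_mul hasFDerivAt_c).fderiv]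
  simp
  ring

lemma contDiff_mode (n : ℤ × ℤ) : ContDiff ℝ 1 (mode n) := by
  have contDiff_fst : ContDiff ℝ 1 fun z : ℝ × ℝ => (z.1 : ℂ) :=
    Complex.ofRealCLM.contDiff.comp contDiff_fst
  have contDiff_snd : ContDiff ℝ 1 fun z : ℝ × ℝ => (z.2 : ℂ) :=
    Complex.ofRealCLM.contDiff.comp contDiff_snd
  unfold mode
  fun_prop

lemma isTestFunction_comp_mode (L : ℂ →L[ℝ] ℝ) (n : ℤ × ℤ) :
    IsTestFunction fun z => L (mode n z) where
  contDiff := L.contDiff.comp (contDiff_mode n)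
  periodic_fst x y := by rw [mode_add_two_pi_fst]
  periodic_snd x y := by rw [mode_add_two_pi_snd]

lemma fderiv_mode_apply (n : ℤ × ℤ) (z w : ℝ × ℝ) :
    fderiv ℝ (mode n) z w = I * (n.1 * w.1 + n.2 * w.2) * mode n z := by
  have hasFDerivAt_fst := Complex.ofRealCLM.hasFDerivAt.comp z (hasFDerivAt_fst (𝕜 := ℝ))
  have hasFDerivAt_snd := Complex.ofRealCLM.hasFDerivAt.comp z (hasFDerivAt_snd (𝕜 := ℝ))
  have hasFDerivAt_mode : HasFDerivAt (mode n) _ z :=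
    (((hasFDerivAt_fst.const_mul (n.1 : ℂ)).add (hasFDerivAt_snd.const_mul (n.2 : ℂ))).const_mul
      I).cexp
  rw [hasFDerivAt_mode.fderiv]
  simp only [Complex.ofRealCLM_apply, Function.comp_apply, Pi.add_apply,
    smul_apply, add_apply, ContinuousLinearMap.comp_apply,
    ContinuousLinearMap.coe_fst', ContinuousLinearMap.coe_snd', smul_eq_mul, mode]
  ring

lemma fderiv_comp_mode_apply (L : ℂ →L[ℝ] ℝ) (n : ℤ × ℤ) (z w : ℝ × ℝ) :
    fderiv ℝ (fun z => L (mode n z)) z w = L (I * (n.1 * w.1 + n.2 * w.2) * mode n z) := by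
  have differentiable_mode := (contDiff_mode n).differentiable one_ne_zero z
  rw [← fderiv_mode_apply, ← ContinuousLinearMap.comp_apply]
  exact congrArg (· w) (L.hasFDerivAt.comp z differentiable_mode.hasFDerivAt).fderiv

lemma integral_mul_comp_mode {f : ℝ × ℝ → ℝ} (hf : Integrable f μD) (L : ℂ →L[ℝ] ℝ) (n : ℤ × ℤ) :
    ∫ z in Dom, f z * L (mode (-n) z) = L (coeff f n) := by
  rw [coeff, fourierInt, ← L.integral_comp_comm (integrable_coe_mul_mode hf _)]
  exact integral_congr_ae (.of_forall fun z => by simp [← Complex.real_smul])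

lemma integral_fderiv_comp_mode_mul {q : ℝ × ℝ → ℝ} {u : ℝ × ℝ → ℝ × ℝ}
    (hfst : Integrable (fun z => (u z).1 * q z) μD) (hsnd : Integrable (fun z => (u z).2 * q z) μD)
    (L : ℂ →L[ℝ] ℝ) (n : ℤ × ℤ) :
    ∫ z in Dom, fderiv ℝ (fun z => L (mode (-n) z)) z (u z) * q z
      = L (-(I * (n.1 * coeff (fun z => (u z).1 * q z) n
          + n.2 * coeff (fun z => (u z).2 * q z) n))) := by
  have integrable_fst := (integrable_coe_mul_mode hfst (-n)).const_mul (n.1 : ℂ)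
  have integrable_snd := (integrable_coe_mul_mode hsnd (-n)).const_mul (n.2 : ℂ)
  simp only [coeff, fourierInt, ← integral_const_mul]
  rw [← integral_add integrable_fst integrable_snd, ← integral_const_mul, ← integral_neg,
    ← L.integral_comp_comm ((integrable_fst.fun_add integrable_snd).const_mul I).fun_neg]
  refine integral_congr_ae (.of_forall fun z => ?_)
  simp only [fderiv_comp_mode_apply]
  rw [mul_comm, ← smul_eq_mul, ← map_smul, Complex.real_smul]
  congr 1
  push_cast [Prod.fst_neg, Prod.snd_neg]
  ring

/-- The `n`-th Fourier coefficient of `-div (q u - r v)`, the rate of change of the vorticity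
difference of two flows. -/
def fluxDivCoeff (q r : ℝ × ℝ → ℝ) (u v : ℝ × ℝ → ℝ × ℝ) (n : ℤ × ℤ) : ℂ :=
  -(I * (n.1 * coeff (fun z => (fluxDiff q r u v z).1) n
    + n.2 * coeff (fun z => (fluxDiff q r u v z).2) n))

lemma IsBoundedState.integrable_flux {M V : ℝ} {b q : ℝ × ℝ → ℝ} {u : ℝ × ℝ → ℝ × ℝ}
    (hu : IsBoundedState M b q V u) :
    Integrable (fun z => (u z).1 * q z) μD ∧ Integrable (fun z => (u z).2 * q z) μD :=
  ⟨hu.isBiotSavart.memLp.fst.integrable_mul hu.memLp_vorticity,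
    hu.isBiotSavart.memLp.snd.integrable_mul hu.memLp_vorticity⟩

lemma integral_fderiv_comp_mode_mul_sub {M V W : ℝ} {b q r : ℝ × ℝ → ℝ} {u v : ℝ × ℝ → ℝ × ℝ}
    (hu : IsBoundedState M b q V u) (hv : IsBoundedState M b r W v) (L : ℂ →L[ℝ] ℝ) (n : ℤ × ℤ) :
    (∫ z in Dom, fderiv ℝ (fun z => L (mode (-n) z)) z (u z) * q z)
        - ∫ z in Dom, fderiv ℝ (fun z => L (mode (-n) z)) z (v z) * r z
      = L (fluxDivCoeff q r u v n) := by
  obtain ⟨integrable_u_fst, integrable_u_snd⟩ := hu.integrable_flux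
  obtain ⟨integrable_v_fst, integrable_v_snd⟩ := hv.integrable_flux
  rw [integral_fderiv_comp_mode_mul integrable_u_fst integrable_u_snd,
    integral_fderiv_comp_mode_mul integrable_v_fst integrable_v_snd, ← map_sub]
  simp only [fluxDivCoeff, fluxDiff, coeff_sub integrable_u_fst integrable_v_fst,
    coeff_sub integrable_u_snd integrable_v_snd]
  congr 1
  ring

lemma intervalIntegrable_coeff_of_spaceTime {T t : ℝ} (ht : t ∈ Icc 0 T) {f : ℝ → ℝ × ℝ → ℝ}
    (hf : Integrable (fun p : ℝ × ℝ × ℝ => f p.1 p.2) (spaceTimeMeasure T)) (n : ℤ × ℤ) :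
    IntervalIntegrable (fun s => coeff (f s) n) volume 0 t :=
  intervalIntegrable_integral_of_spaceTime ht (f := fun s z => (f s z : ℂ) * mode (-n) z)
    (hf.ofReal.mul_bdd (c := 1) ((continuous_mode (-n)).comp continuous_snd).aestronglyMeasurable
      (.of_forall fun _ => (norm_mode _ _).le))

lemma intervalIntegrable_fluxDivCoeff {T M t : ℝ} {b : ℝ × ℝ → ℝ} {q r : ℝ → ℝ × ℝ → ℝ}
    {V W : ℝ → ℝ} {u v : ℝ → ℝ × ℝ → ℝ × ℝ} (hu : IsBoundedFlow T M b q V u)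
    (hv : IsBoundedFlow T M b r W v) (ht : t ∈ Icc 0 T) (n : ℤ × ℤ) :
    IntervalIntegrable (fun s => fluxDivCoeff (q s) (r s) (u s) (v s) n) volume 0 t := by
  have memLp_fluxDiff := hu.memLp_fluxDiff hv
  have integrable_fst := intervalIntegrable_coeff_of_spaceTime ht
    (f := fun s z => (fluxDiff (q s) (r s) (u s) (v s) z).1)
    (memLp_fluxDiff.fst.integrable one_le_two) n
  have integrable_snd := intervalIntegrable_coeff_of_spaceTime ht
    (f := fun s z => (fluxDiff (q s) (r s) (u s) (v s) z).2)
    (memLp_fluxDiff.snd.integrable one_le_two) n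
  exact (((integrable_fst.const_mul (n.1 : ℂ)).add (integrable_snd.const_mul (n.2 : ℂ))).const_mul
    I).neg

namespace IsWeakSolution

section Single

variable {T M β V₀ : ℝ} {b h q₀ c : ℝ × ℝ → ℝ} {q : ℝ → ℝ × ℝ → ℝ} {V : ℝ → ℝ}
  {u : ℝ → ℝ × ℝ → ℝ × ℝ}

lemma integral_deriv_mul_add_mul_eq (hsol : IsWeakSolution T β h V₀ q₀ V q u)
    (hu : IsBoundedFlow T M b q V u) (hc : IsTestFunction c) (hT : 0 ≤ T) {η : ℝ → ℝ}
    (hη : ContDiff ℝ 1 η) (hηT : η T = 0) :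
    ∫ s in (0)..T, (deriv η s * (∫ z in Dom, q s z * c z)
        + η s * ∫ z in Dom, fderiv ℝ c z (u s z) * q s z)
      = -∫ z in Dom, η 0 * c z * q₀ z := by
  have weak := hsol.weak_q (fun p => η p.1 * c p.2)
    ((hη.comp contDiff_fst).mul (hc.contDiff.comp contDiff_snd))
    (fun t x y => by rw [hc.periodic_fst]) (fun t x y => by rw [hc.periodic_snd])
  simp only [hηT, zero_mul, integral_zero, zero_sub] at weak
  rw [weak, intervalIntegral.integral_of_le hT, ← integral_Icc_eq_integral_Ioc]
  refine integral_congr_ae ?_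
  filter_upwards [(hu.integrable_vorticity_mul hc.contDiff.continuous).prod_right_ae,
    (hu.integrable_fderiv_mul_vorticity hc.contDiff).prod_right_ae] with s integrable_mul
    integrable_fderiv
  rw [← integral_const_mul, ← integral_const_mul,
    ← integral_add (integrable_mul.const_mul _) (integrable_fderiv.const_mul _)]
  congr 1 with z
  have differentiable_η := hη.differentiable one_ne_zero s
  have differentiable_c := hc.contDiff.differentiable one_ne_zero z
  rw [fderiv_mul_apply_prod differentiable_η differentiable_c,
    fderiv_mul_apply_prod differentiable_η differentiable_c, Prod.mk_zero_zero, map_zero]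
  ring

end Single

section Pair

variable {T M β V₀ : ℝ} {b h q₀ : ℝ × ℝ → ℝ} {q r : ℝ → ℝ × ℝ → ℝ} {V W : ℝ → ℝ}
  {u v : ℝ → ℝ × ℝ → ℝ × ℝ} (hsol : IsWeakSolution T β h V₀ q₀ V q u)
  (hsol' : IsWeakSolution T β h V₀ q₀ W r v) (hu : IsBoundedFlow T M b q V u)
  (hv : IsBoundedFlow T M b r W v)
include hsol hsol' hu hv

lemma integral_mul_sub_integral_mul_eq (hT : 0 < T) {c : ℝ × ℝ → ℝ} (hc : IsTestFunction c) :
    ∀ t ∈ Icc 0 T, (∫ z in Dom, q t z * c z) - ∫ z in Dom, r t z * c z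
      = ∫ s in (0)..t, ((∫ z in Dom, fderiv ℝ c z (u s z) * q s z)
          - ∫ z in Dom, fderiv ℝ c z (v s z) * r s z) := by
  have integrable_q := intervalIntegrable_integral_of_spaceTime (right_mem_Icc.2 hT.le)
    (f := fun s z => fderiv ℝ c z (u s z) * q s z) (hu.integrable_fderiv_mul_vorticity hc.contDiff)
  have integrable_r := intervalIntegrable_integral_of_spaceTime (right_mem_Icc.2 hT.le)
    (f := fun s z => fderiv ℝ c z (v s z) * r s z) (hv.integrable_fderiv_mul_vorticity hc.contDiff)
  have continuous_q := hsol.contq c hc.contDiff.continuous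
  have continuous_r := hsol'.contq c hc.contDiff.continuous
  refine eq_primitive_of_integral_deriv_mul_add_eq_zero hT (continuous_q.fun_sub continuous_r)
    (integrable_q.sub integrable_r) fun η hη hηT => ?_
  have integrable_add {f g : ℝ → ℝ} (hf : ContinuousOn f (Icc 0 T))
      (hg : IntervalIntegrable g volume 0 T) :
      IntervalIntegrable (fun s => deriv η s * f s + η s * g s) volume 0 T :=
    (((hη.continuous_deriv le_rfl).continuousOn.mul hf).intervalIntegrable_of_Icc hT.le).add
      (hg.continuousOn_mul hη.continuous.continuousOn)
  have integral_sub := intervalIntegral.integral_sub (integrable_add continuous_q integrable_q)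
    (integrable_add continuous_r integrable_r)
  rw [integral_deriv_mul_add_mul_eq hsol hu hc hT.le hη hηT,
    integral_deriv_mul_add_mul_eq hsol' hv hc hT.le hη hηT, sub_self] at integral_sub
  rw [← integral_sub]
  congr 1 with s
  ring

lemma coeff_sub_eq_primitive (hT : 0 < T) (n : ℤ × ℤ) :
    ∀ᵐ t ∂volume.restrict (Icc 0 T), coeff (fun z => q t z - r t z) n
      = ∫ s in (0)..t, fluxDivCoeff (q s) (r s) (u s) (v s) n := by
  filter_upwards [ae_restrict_mem measurableSet_Icc, hu.isBoundedState, hv.isBoundedState] with t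
    ht state_u state_v
  have integrable_q := state_u.memLp_vorticity.integrable one_le_two
  have integrable_r := state_v.memLp_vorticity.integrable one_le_two
  have functional_eq (L : ℂ →L[ℝ] ℝ) : L (coeff (fun z => q t z - r t z) n)
      = L (∫ s in (0)..t, fluxDivCoeff (q s) (r s) (u s) (v s) n) := by
    rw [coeff_sub integrable_q integrable_r, map_sub, ← integral_mul_comp_mode integrable_q,
      ← integral_mul_comp_mode integrable_r,
      integral_mul_sub_integral_mul_eq hsol hsol' hu hv hT (isTestFunction_comp_mode L (-n)) t ht,
      ← L.intervalIntegral_comp_comm (intervalIntegrable_fluxDivCoeff hu hv ht n)]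
    refine intervalIntegral_congr_of_ae_restrict_Icc ht ?_
    filter_upwards [hu.isBoundedState, hv.isBoundedState] with s state_u state_v
    exact integral_fderiv_comp_mode_mul_sub state_u state_v L n
  exact Complex.ext (functional_eq Complex.reCLM) (functional_eq Complex.imCLM)

end Pair

end IsWeakSolution

/-! ### The energy identity -/

section DominatedParseval

variable {T : ℝ} {f g : ℝ → ℝ × ℝ → ℝ}

lemma ae_memLp_of_spaceTime
    (hf : MemLp (fun p : ℝ × ℝ × ℝ => f p.1 p.2) 2 (spaceTimeMeasure T)) :
    ∀ᵐ s ∂volume.restrict (Icc 0 T), MemLp (f s) 2 μD := by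
  filter_upwards [hf.aestronglyMeasurable.prodMk_left, hf.integrable_sq.prod_right_ae] with s
    aestronglyMeasurable integrable_sq
  exact (memLp_two_iff_integrable_sq aestronglyMeasurable).2 integrable_sq

lemma abs_re_conj_mul_le (x y : ℂ) : |(conj x * y).re| ≤ ‖x‖ ^ 2 + ‖y‖ ^ 2 := by
  refine (Complex.abs_re_le_norm _).trans ?_
  rw [norm_mul, RCLike.norm_conj]
  nlinarith [sq_nonneg (‖x‖ - ‖y‖), sq_nonneg (‖x‖ + ‖y‖)]

variable (hf : MemLp (fun p : ℝ × ℝ × ℝ => f p.1 p.2) 2 (spaceTimeMeasure T))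
  (hg : MemLp (fun p : ℝ × ℝ × ℝ => g p.1 p.2) 2 (spaceTimeMeasure T)) {t : ℝ} (ht : t ∈ Icc 0 T)
include hf hg ht

lemma aestronglyMeasurable_re_conj_coeff_mul (n : ℤ × ℤ) :
    AEStronglyMeasurable (fun s => (conj (coeff (f s) n) * coeff (g s) n).re)
      (volume.restrict (uIoc 0 t)) :=
  Complex.continuous_re.comp_aestronglyMeasurable
    ((Complex.continuous_conj.comp_aestronglyMeasurable
      (intervalIntegrable_coeff_of_spaceTime ht (hf.integrable one_le_two) n).def'.1).mul
      (intervalIntegrable_coeff_of_spaceTime ht (hg.integrable one_le_two) n).def'.1)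

lemma intervalIntegrable_integral_sq_add_integral_sq :
    IntervalIntegrable (fun s => 4 * π ^ 2 * (∫ z in Dom, f s z ^ 2)
      + 4 * π ^ 2 * ∫ z in Dom, g s z ^ 2) volume 0 t :=
  ((intervalIntegrable_integral_of_spaceTime ht (f := fun s z => f s z ^ 2)
    hf.integrable_sq).const_mul _).add
    ((intervalIntegrable_integral_of_spaceTime ht (f := fun s z => g s z ^ 2)
      hg.integrable_sq).const_mul _)

lemma ae_uIoc_hasSum_norm_coeff_sq_add :
    ∀ᵐ s, s ∈ uIoc 0 t → MemLp (f s) 2 μD ∧ MemLp (g s) 2 μD ∧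
      HasSum (fun n => ‖coeff (f s) n‖ ^ 2 + ‖coeff (g s) n‖ ^ 2)
        (4 * π ^ 2 * (∫ z in Dom, f s z ^ 2) + 4 * π ^ 2 * ∫ z in Dom, g s z ^ 2) := by
  have memLp_ae := (ae_memLp_of_spaceTime hf).and (ae_memLp_of_spaceTime hg)
  filter_upwards [(ae_restrict_iff' measurableSet_Icc).1 memLp_ae] with s memLp hs
  rw [uIoc_of_le ht.1] at hs
  obtain ⟨memLp_f, memLp_g⟩ := memLp ⟨hs.1.le, hs.2.trans ht.2⟩
  exact ⟨memLp_f, memLp_g, (hasSum_norm_coeff_sq memLp_f).add (hasSum_norm_coeff_sq memLp_g)⟩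

lemma intervalIntegrable_re_conj_coeff_mul (n : ℤ × ℤ) :
    IntervalIntegrable (fun s => (conj (coeff (f s) n) * coeff (g s) n).re) volume 0 t := by
  refine (intervalIntegrable_integral_sq_add_integral_sq hf hg ht).mono_fun'
    (aestronglyMeasurable_re_conj_coeff_mul hf hg ht n) ?_
  refine (ae_restrict_iff' measurableSet_uIoc).2 ?_
  filter_upwards [ae_uIoc_hasSum_norm_coeff_sq_add hf hg ht] with s hasSum hs
  exact (abs_re_conj_mul_le _ _).trans
    (le_hasSum (hasSum hs).2.2 n fun _ _ => add_nonneg (sq_nonneg _) (sq_nonneg _))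

lemma hasSum_integral_re_conj_coeff_mul :
    HasSum (fun n => ∫ s in (0)..t, (conj (coeff (f s) n) * coeff (g s) n).re)
      (∫ s in (0)..t, 4 * π ^ 2 * ∫ z in Dom, f s z * g s z) := by
  have parseval := ae_uIoc_hasSum_norm_coeff_sq_add hf hg ht
  refine intervalIntegral.hasSum_integral_of_dominated_convergence
    (fun n s => ‖coeff (f s) n‖ ^ 2 + ‖coeff (g s) n‖ ^ 2)
    (aestronglyMeasurable_re_conj_coeff_mul hf hg ht)
    (fun n => .of_forall fun s _ => abs_re_conj_mul_le _ _)
    (parseval.mono fun s hasSum hs => (hasSum hs).2.2.summable) ?_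
    (parseval.mono fun s hasSum hs => hasSum_re_conj_coeff_mul (hasSum hs).1 (hasSum hs).2.1)
  refine (intervalIntegrable_integral_sq_add_integral_sq hf hg ht).congr_ae ?_
  refine (ae_restrict_iff' measurableSet_uIoc).2 ?_
  exact parseval.mono fun s hasSum hs => (hasSum hs).2.2.tsum_eq.symm

end DominatedParseval

/-- The contribution of the `n`-th Fourier mode to `4π² * fluxPairing`. -/
def modalFluxPairing (q r : ℝ × ℝ → ℝ) (V W : ℝ) (u v : ℝ × ℝ → ℝ × ℝ) (n : ℤ × ℤ) : ℝ :=
  (conj (coeff (fun z => (potentialGradient V W u v z).1) n)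
      * coeff (fun z => (fluxDiff q r u v z).1) n).re
    + (conj (coeff (fun z => (potentialGradient V W u v z).2) n)
      * coeff (fun z => (fluxDiff q r u v z).2) n).re

section Modes

variable {M V W : ℝ} {b q r : ℝ × ℝ → ℝ} {u v : ℝ × ℝ → ℝ × ℝ}
  (hu : IsBoundedState M b q V u) (hv : IsBoundedState M b r W v)
include hu hv

lemma coeff_potentialGradient_eq (n : ℤ × ℤ) :
    coeff (fun z => (potentialGradient V W u v z).1) n
        = -(I * n.1 * coeff (fun z => q z - r z) n / lapSymbol n) ∧
      coeff (fun z => (potentialGradient V W u v z).2) n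
        = -(I * n.2 * coeff (fun z => q z - r z) n / lapSymbol n) := by
  have integrable_u := hu.memLp_vorticity_sub.integrable one_le_two
  have integrable_v := hv.memLp_vorticity_sub.integrable one_le_two
  simpa only [sub_sub_sub_cancel_right] using
    And.intro (hu.isBiotSavart.coeff_potentialGradient_fst hv.isBiotSavart integrable_u
      integrable_v n) (hu.isBiotSavart.coeff_potentialGradient_snd hv.isBiotSavart integrable_u
      integrable_v n)

lemma norm_coeff_potentialGradient_sq_add (n : ℤ × ℤ) :
    ‖coeff (fun z => (potentialGradient V W u v z).1) n‖ ^ 2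
        + ‖coeff (fun z => (potentialGradient V W u v z).2) n‖ ^ 2
      = ‖coeff (fun z => q z - r z) n‖ ^ 2 / lapSymbol n := by
  obtain ⟨coeff_fst, coeff_snd⟩ := coeff_potentialGradient_eq hu hv n
  rw [coeff_fst, coeff_snd]
  rcases eq_or_ne n 0 with rfl | hn
  · simp [lapSymbol]
  · have := lapSymbol_pos hn
    have lapSymbol_eq : lapSymbol n = (n.1 : ℝ) ^ 2 + (n.2 : ℝ) ^ 2 := rfl
    simp only [norm_neg, norm_div, norm_mul, Complex.norm_I, one_mul, Complex.norm_intCast,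
      Complex.norm_real, norm_eq_abs, div_pow, mul_pow, sq_abs]
    field_simp
    rw [lapSymbol_eq]

lemma modalFluxPairing_eq (n : ℤ × ℤ) :
    modalFluxPairing q r V W u v n
      = -((conj (coeff (fun z => q z - r z) n) * fluxDivCoeff q r u v n).re / lapSymbol n) := by
  obtain ⟨coeff_fst, coeff_snd⟩ := coeff_potentialGradient_eq hu hv n
  rw [modalFluxPairing, coeff_fst, coeff_snd, ← Complex.add_re, ← Complex.div_ofReal_re,
    ← Complex.neg_re, fluxDivCoeff]
  simp only [map_neg, map_div₀, map_mul, Complex.conj_I, Complex.conj_ofReal, map_intCast]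
  congr 1
  ring

end Modes

section Energy

variable {T M β V₀ : ℝ} {b h q₀ : ℝ × ℝ → ℝ} {q r : ℝ → ℝ × ℝ → ℝ} {V W : ℝ → ℝ}
  {u v : ℝ → ℝ × ℝ → ℝ × ℝ} (hu : IsBoundedFlow T M b q V u) (hv : IsBoundedFlow T M b r W v)
include hu hv

lemma intervalIntegrable_fluxPairing {t : ℝ} (ht : t ∈ Icc 0 T) :
    IntervalIntegrable (fun s => fluxPairing (q s) (r s) (V s) (W s) (u s) (v s)) volume 0 t := by
  have memLp_gradient := hu.memLp_potentialGradient hv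
  have memLp_flux := hu.memLp_fluxDiff hv
  exact (intervalIntegrable_integral_of_spaceTime ht (f := fun s z =>
      (potentialGradient (V s) (W s) (u s) (v s) z).1 * (fluxDiff (q s) (r s) (u s) (v s) z).1)
      (memLp_gradient.fst.integrable_mul memLp_flux.fst)).add
    (intervalIntegrable_integral_of_spaceTime ht (f := fun s z =>
      (potentialGradient (V s) (W s) (u s) (v s) z).2 * (fluxDiff (q s) (r s) (u s) (v s) z).2)
      (memLp_gradient.snd.integrable_mul memLp_flux.snd))

lemma hasSum_integral_modalFluxPairing {t : ℝ} (ht : t ∈ Icc 0 T) :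
    HasSum (fun n => ∫ s in (0)..t, modalFluxPairing (q s) (r s) (V s) (W s) (u s) (v s) n)
      (4 * π ^ 2 * ∫ s in (0)..t, fluxPairing (q s) (r s) (V s) (W s) (u s) (v s)) := by
  set p := fun s => potentialGradient (V s) (W s) (u s) (v s)
  set F := fun s => fluxDiff (q s) (r s) (u s) (v s)
  have memLp_p : MemLp (fun x : ℝ × ℝ × ℝ => p x.1 x.2) 2 (spaceTimeMeasure T) :=
    hu.memLp_potentialGradient hv
  have memLp_F : MemLp (fun x : ℝ × ℝ × ℝ => F x.1 x.2) 2 (spaceTimeMeasure T) :=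
    hu.memLp_fluxDiff hv
  have integral_modal_eq (n : ℤ × ℤ) := intervalIntegral.integral_add
    (intervalIntegrable_re_conj_coeff_mul (f := fun s z => (p s z).1) (g := fun s z => (F s z).1)
      memLp_p.fst memLp_F.fst ht n)
    (intervalIntegrable_re_conj_coeff_mul (f := fun s z => (p s z).2) (g := fun s z => (F s z).2)
      memLp_p.snd memLp_F.snd ht n)
  have hasSum_add := (hasSum_integral_re_conj_coeff_mul (f := fun s z => (p s z).1)
    (g := fun s z => (F s z).1) memLp_p.fst memLp_F.fst ht).add
    (hasSum_integral_re_conj_coeff_mul (f := fun s z => (p s z).2)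
      (g := fun s z => (F s z).2) memLp_p.snd memLp_F.snd ht)
  convert! hasSum_add using 1
  · exact funext integral_modal_eq
  · rw [intervalIntegral.integral_const_mul, intervalIntegral.integral_const_mul, ← mul_add]
    congr 1
    exact intervalIntegral.integral_add
      (intervalIntegrable_integral_of_spaceTime ht (f := fun s z => (p s z).1 * (F s z).1)
        (memLp_p.fst.integrable_mul memLp_F.fst))
      (intervalIntegrable_integral_of_spaceTime ht (f := fun s z => (p s z).2 * (F s z).2)
        (memLp_p.snd.integrable_mul memLp_F.snd))

lemma IsWeakSolution.norm_coeff_sub_sq_eq (hsol : IsWeakSolution T β h V₀ q₀ V q u)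
    (hsol' : IsWeakSolution T β h V₀ q₀ W r v) (hT : 0 < T) (n : ℤ × ℤ) :
    ∀ᵐ t ∂volume.restrict (Icc 0 T), ‖coeff (fun z => q t z - r t z) n‖ ^ 2
      = ∫ s in (0)..t, 2 * (conj (coeff (fun z => q s z - r s z) n)
          * fluxDivCoeff (q s) (r s) (u s) (v s) n).re := by
  have coeff_eq := hsol.coeff_sub_eq_primitive hsol' hu hv hT n
  filter_upwards [coeff_eq, ae_restrict_mem measurableSet_Icc] with t coeff_eq_t ht
  rw [coeff_eq_t, norm_sq_primitive_eq (intervalIntegrable_fluxDivCoeff hu hv ht n)]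
  refine intervalIntegral_congr_of_ae_restrict_Icc ht ?_
  filter_upwards [coeff_eq] with s coeff_eq_s
  rw [coeff_eq_s]

lemma IsWeakSolution.norm_coeff_potentialGradient_sq_add_eq
    (hsol : IsWeakSolution T β h V₀ q₀ V q u) (hsol' : IsWeakSolution T β h V₀ q₀ W r v)
    (hT : 0 < T) (n : ℤ × ℤ) :
    ∀ᵐ t ∂volume.restrict (Icc 0 T),
      ‖coeff (fun z => (potentialGradient (V t) (W t) (u t) (v t) z).1) n‖ ^ 2
          + ‖coeff (fun z => (potentialGradient (V t) (W t) (u t) (v t) z).2) n‖ ^ 2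
        = -2 * ∫ s in (0)..t, modalFluxPairing (q s) (r s) (V s) (W s) (u s) (v s) n := by
  filter_upwards [hsol.norm_coeff_sub_sq_eq hu hv hsol' hT n, hu.isBoundedState,
    hv.isBoundedState, ae_restrict_mem measurableSet_Icc] with t norm_sq_eq state_u state_v ht
  rw [norm_coeff_potentialGradient_sq_add state_u state_v, norm_sq_eq,
    ← intervalIntegral.integral_div, ← intervalIntegral.integral_const_mul]
  refine intervalIntegral_congr_of_ae_restrict_Icc ht ?_
  filter_upwards [hu.isBoundedState, hv.isBoundedState] with s state_u state_v
  rw [modalFluxPairing_eq state_u state_v]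
  ring

lemma IsWeakSolution.energyDiff_eq (hsol : IsWeakSolution T β h V₀ q₀ V q u)
    (hsol' : IsWeakSolution T β h V₀ q₀ W r v) (hT : 0 < T) :
    ∀ᵐ t ∂volume.restrict (Icc 0 T), energyDiff (V t) (W t) (u t) (v t)
      = -2 * ∫ s in (0)..t, fluxPairing (q s) (r s) (V s) (W s) (u s) (v s) := by
  filter_upwards [ae_all_iff.2 (hsol.norm_coeff_potentialGradient_sq_add_eq hu hv hsol' hT),
    ae_memLp_of_spaceTime (f := fun s z => (potentialGradient (V s) (W s) (u s) (v s) z).1)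
      (hu.memLp_potentialGradient hv).fst,
    ae_memLp_of_spaceTime (f := fun s z => (potentialGradient (V s) (W s) (u s) (v s) z).2)
      (hu.memLp_potentialGradient hv).snd, ae_restrict_mem measurableSet_Icc]
    with t modal_eq memLp_fst memLp_snd ht
  have hasSum_energy := (hasSum_norm_coeff_sq memLp_fst).add (hasSum_norm_coeff_sq memLp_snd)
  simp only [modal_eq] at hasSum_energy
  have energy_eq := hasSum_energy.unique
    ((hasSum_integral_modalFluxPairing hu hv ht).mul_left (-2))
  refine mul_left_cancel₀ (by positivity : (4 * π ^ 2 : ℝ) ≠ 0) ?_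
  rw [energyDiff]
  linear_combination energy_eq

end Energy

/-! ### Osgood's lemma with a logarithmic rate -/

lemma le_gronwall_of_le_integral {g : ℝ → ℝ} {K ε a b t : ℝ} (hK : 0 < K) (hε : 0 ≤ ε)
    (hg : ContinuousOn g (Icc a b)) (hg0 : ∀ s ∈ Icc a b, 0 ≤ g s)
    (hle : ∀ s ∈ Icc a b, g s ≤ ∫ r in a..s, (K * g r + ε)) (ht : t ∈ Icc a b) :
    g t ≤ ε / K * (exp (K * (t - a)) - 1) := by
  have hab : a ≤ b := ht.1.trans ht.2
  set γ : ℝ → ℝ := IccExtend hab ((Icc a b).domRestrict g)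
  have hγ_cont : Continuous γ := (continuousOn_iff_continuous_domRestrict.1 hg).Icc_extend'
  have hγ : ∀ s ∈ Icc a b, γ s = g s := fun s hs => IccExtend_of_mem hab _ hs
  set R : ℝ → ℝ := fun s => ∫ r in a..s, (K * γ r + ε)
  have hR : ∀ s, HasDerivAt R (K * γ s + ε) s := fun s =>
    ((by fun_prop : Continuous fun r => K * γ r + ε).integral_hasStrictDerivAt a s).hasDerivAt
  have hgR : ∀ s ∈ Icc a b, g s ≤ R s := fun s hs => by
    refine (hle s hs).trans_eq (intervalIntegral.integral_congr fun r hr => ?_)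
    rw [uIcc_of_le hs.1] at hr
    simp only [hγ r ⟨hr.1, hr.2.trans hs.2⟩]
  have hderiv_le : ∀ s ∈ Ico a b, ‖K * γ s + ε‖ ≤ K * ‖R s‖ + ε := fun s hs => by
    have hs' : s ∈ Icc a b := Ico_subset_Icc_self hs
    have hg_nonneg : 0 ≤ g s := hg0 s hs'
    rw [hγ s hs', norm_of_nonneg (by positivity),
      norm_of_nonneg (hg_nonneg.trans (hgR s hs'))]
    gcongr
    exact hgR s hs'
  have hbound : ‖R t‖ ≤ gronwallBound 0 K ε (t - a) :=
    norm_le_gronwallBound_of_norm_deriv_right_le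
      (fun s _ => (hR s).continuousAt.continuousWithinAt) (fun s _ => (hR s).hasDerivWithinAt)
      (by simp [R]) hderiv_le t ht
  calc g t ≤ R t := hgR t ht
    _ ≤ gronwallBound 0 K ε (t - a) := (le_abs_self _).trans hbound
    _ = ε / K * (exp (K * (t - a)) - 1) := by simp [gronwallBound_of_K_ne_0 hK.ne']

section Osgood

variable {T C a t : ℝ} {e : ℝ → ℝ}

lemma primitive_le_integral_of_rate_le {K ε : ℝ} (he : IntervalIntegrable e volume 0 T)
    (hrate : ∀ᵐ s ∂volume.restrict (Icc 0 T), e s ≤ K * (∫ r in (0)..s, e r) + ε)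
    (ha : 0 ≤ a) (hzero : ∫ s in (0)..a, e s = 0) (ht : t ∈ Icc a T) :
    ∫ s in (0)..t, e s ≤ ∫ s in a..t, (K * (∫ r in (0)..s, e r) + ε) := by
  have hT : 0 ≤ T := ha.trans (ht.1.trans ht.2)
  have hsub : Icc a t ⊆ Icc 0 T := Icc_subset_Icc ha ht.2
  have he_left : IntervalIntegrable e volume 0 a := he.mono_set (by
    rw [uIcc_of_le ha, uIcc_of_le hT]; exact Icc_subset_Icc le_rfl (ht.1.trans ht.2))
  have he_right : IntervalIntegrable e volume a t := he.mono_set (by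
    rw [uIcc_of_le ht.1, uIcc_of_le hT]; exact hsub)
  have hcont : ContinuousOn (fun s => K * (∫ r in (0)..s, e r) + ε) (uIcc a t) := by
    have := continuousOn_primitive_uIcc he
    rw [uIcc_of_le hT] at this
    rw [uIcc_of_le ht.1]
    exact ((this.mono hsub).const_mul K).add_const ε
  rw [← intervalIntegral.integral_add_adjacent_intervals he_left he_right, hzero, zero_add]
  exact intervalIntegral.integral_mono_ae_restrict ht.1 he_right hcont.intervalIntegrable
    (ae_restrict_of_ae_restrict_of_subset hsub hrate)

-- On a time step of length `1 / C` the exponential factor is at most `e * N`, which the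
-- forcing `C / N ^ 2` beats.
lemma div_mul_exp_sub_one_le {N τ : ℝ} (hC : 0 < C) (hN : 1 ≤ N) (hτ : 0 ≤ τ) (hτC : τ ≤ 1 / C) :
    C / N ^ 2 / (C * (1 + log N)) * (exp (C * (1 + log N) * τ) - 1) ≤ exp 1 / N := by
  have hlog : 0 ≤ log N := log_nonneg hN
  have hcoeff : C / N ^ 2 / (C * (1 + log N)) ≤ 1 / N ^ 2 := by
    rw [div_le_iff₀ (by positivity), div_eq_mul_one_div, mul_comm C]
    gcongr
    exact le_mul_of_one_le_right hC.le (by linarith)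
  have hexp : exp (C * (1 + log N) * τ) ≤ exp 1 * N :=
    calc exp (C * (1 + log N) * τ) ≤ exp (C * (1 + log N) * (1 / C)) := by gcongr
      _ = exp (1 + log N) := by congr 1; field_simp
      _ = exp 1 * N := by rw [exp_add, exp_log (by linarith)]
  have hexp_ge : 0 ≤ exp (C * (1 + log N) * τ) - 1 := sub_nonneg.2 (one_le_exp (by positivity))
  calc C / N ^ 2 / (C * (1 + log N)) * (exp (C * (1 + log N) * τ) - 1)
      ≤ 1 / N ^ 2 * (exp 1 * N) := by gcongr; linarith
    _ = exp 1 / N := by field_simp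

variable (hC : 0 < C) (he : IntervalIntegrable e volume 0 T)
  (hnonneg : ∀ s ∈ Icc 0 T, 0 ≤ ∫ r in (0)..s, e r)
  (hrate : ∀ N : ℕ, 1 ≤ N → ∀ᵐ s ∂volume.restrict (Icc 0 T),
    e s ≤ C * (1 + log N) * (∫ r in (0)..s, e r) + C / (N : ℝ) ^ 2)

include hC he hnonneg hrate

lemma primitive_eq_zero_of_le_add_inv (ha : 0 ≤ a) (hzero : ∫ s in (0)..a, e s = 0)
    (ht : t ∈ Icc a T) (htC : t ≤ a + 1 / C) : ∫ s in (0)..t, e s = 0 := by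
  have hT : 0 ≤ T := ha.trans (ht.1.trans ht.2)
  have hsub : Icc a T ⊆ Icc 0 T := Icc_subset_Icc ha le_rfl
  have hcont : ContinuousOn (fun s => ∫ r in (0)..s, e r) (Icc a T) := by
    have := continuousOn_primitive_uIcc he
    rw [uIcc_of_le hT] at this
    exact this.mono hsub
  have hle : ∀ N : ℕ, 1 ≤ N → ∫ s in (0)..t, e s ≤ exp 1 / N := fun N hN => by
    have hN' : (1 : ℝ) ≤ N := by exact_mod_cast hN
    have : 0 ≤ log (N : ℝ) := log_nonneg hN'
    exact (le_gronwall_of_le_integral (by positivity) (by positivity) hcont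
      (fun s hs => hnonneg s (hsub hs))
      (fun s hs => primitive_le_integral_of_rate_le he (hrate N hN) ha hzero hs) ht).trans
      (div_mul_exp_sub_one_le hC hN' (sub_nonneg.2 ht.1) (by linarith))
  refine le_antisymm (ge_of_tendsto (tendsto_const_div_atTop_nhds_zero_nat (exp 1)) ?_)
    (hnonneg t (hsub ht))
  filter_upwards [Filter.eventually_ge_atTop 1] with N hN using hle N hN

theorem primitive_eq_zero_of_log_rate (ht : t ∈ Icc 0 T) : ∫ s in (0)..t, e s = 0 := by
  have hsteps : ∀ k : ℕ, ∀ s ∈ Icc 0 T, s ≤ k * (1 / C) → ∫ r in (0)..s, e r = 0 := by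
    intro k
    induction k with
    | zero =>
      intro s hs hsk
      rw [le_antisymm (by simpa using hsk) hs.1, intervalIntegral.integral_same]
    | succ k ih =>
      intro s hs hsk
      rcases le_total s (k * (1 / C)) with hle | hge
      · exact ih s hs hle
      · have hk : 0 ≤ k * (1 / C) := by positivity
        refine primitive_eq_zero_of_le_add_inv hC he hnonneg hrate hk
          (ih _ ⟨hk, hge.trans hs.2⟩ le_rfl) ⟨hge, hs.2⟩ ?_
        push_cast at hsk
        linarith
  obtain ⟨k, hk⟩ := exists_nat_ge (t * C)
  exact hsteps k t ht (by rwa [mul_one_div, le_div_iff₀ hC])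

end Osgood

/-! ### Uniqueness -/

/-- The energy of the difference of two states, including the mean flow. -/
def totalEnergyDiff (V W : ℝ) (u v : ℝ × ℝ → ℝ × ℝ) : ℝ := energyDiff V W u v + (V - W) ^ 2

/-- The time derivative of `totalEnergyDiff` along two weak solutions. -/
def totalEnergyRate (h q r : ℝ × ℝ → ℝ) (V W : ℝ) (u v : ℝ × ℝ → ℝ × ℝ) : ℝ :=
  -2 * fluxPairing q r V W u v + 2 * ((V - W) * (formDrag h u - formDrag h v))

/-- A constant `C` for which `totalEnergyRate ≤ C (1 + log N) totalEnergyDiff + C / N ^ 2` holds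
for all `N` along states bounded by `M`. -/
def osgoodConst (M : ℝ) : ℝ :=
  2 * rateConst M + 4 * π ^ 2 * M ^ 3 + 4 * π ^ 2 * M + M + 1

lemma totalEnergyDiff_nonneg (V W : ℝ) (u v : ℝ × ℝ → ℝ × ℝ) : 0 ≤ totalEnergyDiff V W u v :=
  add_nonneg (energyDiff_nonneg V W u v) (sq_nonneg _)

lemma rateConst_nonneg {M : ℝ} (hM : 0 ≤ M) : 0 ≤ rateConst M := by
  have := kernelConst_pos 48
  rw [rateConst]
  positivity

lemma osgoodConst_pos {M : ℝ} (hM : 0 ≤ M) : 0 < osgoodConst M := by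
  have := rateConst_nonneg hM
  rw [osgoodConst]
  positivity

lemma totalEnergyRate_le {M V W : ℝ} {b h q r : ℝ × ℝ → ℝ} {u v : ℝ × ℝ → ℝ × ℝ}
    (hu : IsBoundedState M b q V u) (hv : IsBoundedState M b r W v)
    (hh : AEStronglyMeasurable h μD) (hhM : ∀ᵐ z ∂μD, |h z| ≤ M) {N : ℕ} (hN : 1 ≤ N) :
    totalEnergyRate h q r V W u v
      ≤ osgoodConst M * (1 + log N) * totalEnergyDiff V W u v + osgoodConst M / N ^ 2 := by
  have hM := hu.bound_nonneg
  have flux_le := (neg_abs_le _).trans' (neg_le_neg (abs_fluxPairing_le hu hv hN))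
  have drag_le := two_mul_sub_mul_formDrag_sub_le hu hv hh hhM
  have energy_nonneg := energyDiff_nonneg V W u v
  have rate_nonneg := rateConst_nonneg hM
  have log_nonneg : 0 ≤ log (N : ℝ) := log_nonneg (by exact_mod_cast hN)
  rw [totalEnergyRate, totalEnergyDiff]
  set E := energyDiff V W u v
  set R := rateConst M
  calc -2 * fluxPairing q r V W u v + 2 * ((V - W) * (formDrag h u - formDrag h v))
      ≤ 2 * R * (1 + log N) * E + (4 * π ^ 2 * M * (V - W) ^ 2 + M * (E + (V - W) ^ 2))
          + 4 * π ^ 2 * M ^ 3 / N ^ 2 := by linear_combination 2 * flux_le + drag_le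
    _ ≤ 2 * R * (1 + log N) * (E + (V - W) ^ 2)
          + (4 * π ^ 2 * M + M) * (1 + log N) * (E + (V - W) ^ 2) + osgoodConst M / N ^ 2 := by
        have drop_log : (4 * π ^ 2 * M + M) * (E + (V - W) ^ 2)
            ≤ (4 * π ^ 2 * M + M) * (1 + log N) * (E + (V - W) ^ 2) := by
          gcongr
          exact le_mul_of_one_le_right (by positivity) (by linarith)
        have drop_energy : 0 ≤ 4 * π ^ 2 * M * E := by positivity
        gcongr
        · exact le_add_of_nonneg_right (sq_nonneg _)
        · linarith
        · rw [osgoodConst]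
          linarith [show 0 ≤ 4 * π ^ 2 * M by positivity]
    _ ≤ osgoodConst M * (1 + log N) * (E + (V - W) ^ 2) + osgoodConst M / N ^ 2 := by
        rw [← add_mul, ← add_mul]
        gcongr
        rw [osgoodConst]
        linarith [show 0 ≤ 4 * π ^ 2 * M ^ 3 by positivity]

lemma IsBoundedFlow.intervalIntegrable_formDrag {T M t : ℝ} {b h : ℝ × ℝ → ℝ}
    {q : ℝ → ℝ × ℝ → ℝ} {V : ℝ → ℝ} {u : ℝ → ℝ × ℝ → ℝ × ℝ} (hu : IsBoundedFlow T M b q V u)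
    (hh : Measurable h) {C : ℝ} (hhC : ∀ᵐ z ∂μD, |h z| ≤ C) (ht : t ∈ Icc 0 T) :
    IntervalIntegrable (fun s => formDrag h (u s)) volume 0 t := by
  have h_le : ∀ᵐ p ∂spaceTimeMeasure T, ‖h p.2‖ ≤ C :=
    Measure.quasiMeasurePreserving_snd.ae hhC
  exact (intervalIntegrable_integral_of_spaceTime ht (f := fun s z => h z * (u s z).2)
    ((hu.memLp_velocity.snd.integrable one_le_two).bdd_mul
      (hh.comp measurable_snd).aestronglyMeasurable h_le)).div_const _

section Uniqueness

variable {T M β V₀ : ℝ} {h q₀ : ℝ × ℝ → ℝ} {V W : ℝ → ℝ} {q r : ℝ → ℝ × ℝ → ℝ}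
  {u v : ℝ → ℝ × ℝ → ℝ × ℝ} {b : ℝ × ℝ → ℝ}
  (hu : IsBoundedFlow T M b q V u) (hv : IsBoundedFlow T M b r W v)
  (hsol : IsWeakSolution T β h V₀ q₀ V q u) (hsol' : IsWeakSolution T β h V₀ q₀ W r v)
  (hh : Measurable h) (hhM : ∀ᵐ z ∂μD, |h z| ≤ M)

include hu hv hsol hsol' hh hhM

lemma meanFlow_sub_eq {t : ℝ} (ht : t ∈ Icc 0 T) :
    V t - W t = ∫ s in (0)..t, (formDrag h (u s) - formDrag h (v s)) := by
  rw [hsol.meanflow t ht, hsol'.meanflow t ht, add_sub_add_left_eq_sub,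
    intervalIntegral.integral_sub (hu.intervalIntegrable_formDrag hh hhM ht)
      (hv.intervalIntegrable_formDrag hh hhM ht),
    intervalIntegral.integral_of_le ht.1, intervalIntegral.integral_of_le ht.1]
  rfl

lemma intervalIntegrable_two_mul_meanFlow_sub_mul_formDrag_sub {t : ℝ} (ht : t ∈ Icc 0 T) :
    IntervalIntegrable (fun s => 2 * ((V s - W s) * (formDrag h (u s) - formDrag h (v s))))
      volume 0 t := by
  refine ((intervalIntegrable_primitive_mul_self ((hu.intervalIntegrable_formDrag hh hhM ht).sub
    (hv.intervalIntegrable_formDrag hh hhM ht))).const_mul 2).congr fun s hs => ?_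
  rw [uIoc_of_le ht.1] at hs
  simp only [meanFlow_sub_eq hu hv hsol hsol' hh hhM ⟨hs.1.le, hs.2.trans ht.2⟩]

lemma meanFlow_sub_sq_eq {t : ℝ} (ht : t ∈ Icc 0 T) :
    (V t - W t) ^ 2
      = ∫ s in (0)..t, 2 * ((V s - W s) * (formDrag h (u s) - formDrag h (v s))) := by
  rw [meanFlow_sub_eq hu hv hsol hsol' hh hhM ht,
    sq_primitive_eq ((hu.intervalIntegrable_formDrag hh hhM ht).sub
      (hv.intervalIntegrable_formDrag hh hhM ht))]
  refine intervalIntegral.integral_congr fun s hs => ?_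
  rw [uIcc_of_le ht.1] at hs
  simp only [meanFlow_sub_eq hu hv hsol hsol' hh hhM ⟨hs.1, hs.2.trans ht.2⟩]

lemma intervalIntegrable_totalEnergyRate {t : ℝ} (ht : t ∈ Icc 0 T) :
    IntervalIntegrable (fun s => totalEnergyRate h (q s) (r s) (V s) (W s) (u s) (v s))
      volume 0 t :=
  ((intervalIntegrable_fluxPairing hu hv ht).const_mul (-2)).add
    (intervalIntegrable_two_mul_meanFlow_sub_mul_formDrag_sub hu hv hsol hsol' hh hhM ht)

lemma integral_totalEnergyRate_eq (hT : 0 < T) :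
    ∀ᵐ t ∂volume.restrict (Icc 0 T),
      ∫ s in (0)..t, totalEnergyRate h (q s) (r s) (V s) (W s) (u s) (v s)
        = totalEnergyDiff (V t) (W t) (u t) (v t) := by
  filter_upwards [hsol.energyDiff_eq hu hv hsol' hT, ae_restrict_mem measurableSet_Icc]
    with t energy_eq ht
  rw [totalEnergyDiff, energy_eq, meanFlow_sub_sq_eq hu hv hsol hsol' hh hhM ht,
    ← intervalIntegral.integral_const_mul]
  exact intervalIntegral.integral_add
    ((intervalIntegrable_fluxPairing hu hv ht).const_mul (-2))
    (intervalIntegrable_two_mul_meanFlow_sub_mul_formDrag_sub hu hv hsol hsol' hh hhM ht)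

lemma integral_totalEnergyRate_nonneg (hT : 0 < T) {t : ℝ} (ht : t ∈ Icc 0 T) :
    0 ≤ ∫ s in (0)..t, totalEnergyRate h (q s) (r s) (V s) (W s) (u s) (v s) := by
  set G : ℝ → ℝ := fun t =>
    ∫ s in (0)..t, totalEnergyRate h (q s) (r s) (V s) (W s) (u s) (v s)
  have continuousOn_G : ContinuousOn G (Icc 0 T) := by
    simpa only [uIcc_of_le hT.le] using continuousOn_primitive_uIcc
      (intervalIntegrable_totalEnergyRate hu hv hsol hsol' hh hhM (right_mem_Icc.2 hT.le))
  have G_eq_abs : EqOn G (fun t => |G t|) (Icc 0 T) := by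
    refine Measure.eqOn_Icc_of_ae_eq volume hT.ne ?_ continuousOn_G continuousOn_G.abs
    filter_upwards [integral_totalEnergyRate_eq hu hv hsol hsol' hh hhM hT] with t G_eq
    exact (abs_of_nonneg ((totalEnergyDiff_nonneg _ _ _ _).trans_eq G_eq.symm)).symm
  exact (abs_nonneg (G t)).trans_eq (G_eq_abs ht).symm

lemma totalEnergyDiff_eq_zero (hT : 0 < T) :
    ∀ᵐ t ∂volume.restrict (Icc 0 T), totalEnergyDiff (V t) (W t) (u t) (v t) = 0 := by
  have hM : 0 ≤ M := by
    have : NeZero (volume.restrict (Icc 0 T)) := ⟨by simp [Measure.restrict_eq_zero, hT]⟩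
    obtain ⟨t, state⟩ := hu.isBoundedState.exists
    exact state.bound_nonneg
  have energy_eq := integral_totalEnergyRate_eq hu hv hsol hsol' hh hhM hT
  have integral_eq_zero : ∀ t ∈ Icc 0 T,
      ∫ s in (0)..t, totalEnergyRate h (q s) (r s) (V s) (W s) (u s) (v s) = 0 := fun t ht => by
    refine primitive_eq_zero_of_log_rate (osgoodConst_pos hM)
      (intervalIntegrable_totalEnergyRate hu hv hsol hsol' hh hhM (right_mem_Icc.2 hT.le))
      (fun s hs => integral_totalEnergyRate_nonneg hu hv hsol hsol' hh hhM hT hs)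
      (fun N hN => ?_) ht
    filter_upwards [energy_eq, hu.isBoundedState, hv.isBoundedState] with s energy_eq_s state_u
      state_v
    rw [energy_eq_s]
    exact totalEnergyRate_le state_u state_v hh.aestronglyMeasurable hhM hN
  filter_upwards [energy_eq, ae_restrict_mem measurableSet_Icc] with t energy_eq_t ht
  rw [← energy_eq_t, integral_eq_zero t ht]

lemma meanFlow_eq_and_vorticity_eq (hT : 0 < T) :
    ∀ᵐ t ∂volume.restrict (Icc 0 T), V t = W t ∧ q t =ᵐ[μD] r t := by
  filter_upwards [totalEnergyDiff_eq_zero hu hv hsol hsol' hh hhM hT, hu.isBoundedState,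
    hv.isBoundedState] with t energy_zero state_u state_v
  obtain ⟨energyDiff_zero, sub_sq_zero⟩ :=
    (add_eq_zero_iff_of_nonneg (energyDiff_nonneg _ _ _ _) (sq_nonneg _)).1 energy_zero
  exact ⟨sub_eq_zero.1 (pow_eq_zero_iff two_ne_zero |>.1 sub_sq_zero),
    vorticity_eq_of_energyDiff_eq_zero state_u state_v energyDiff_zero⟩

end Uniqueness

theorem uniqueness_of_weak_solutions_general {T β V₀ : ℝ} (hT : 0 < T) {h q₀ : ℝ × ℝ → ℝ}
    (hmeas : Measurable h) (hbdd : ∃ M, ∀ᵐ z ∂μD, |h z| ≤ M) (hodd : OddInY h)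
    {V₁ V₂ : ℝ → ℝ} {q₁ q₂ : ℝ → ℝ × ℝ → ℝ} {u₁ u₂ : ℝ → ℝ × ℝ → ℝ × ℝ}
    (hsol₁ : IsWeakSolution T β h V₀ q₀ V₁ q₁ u₁)
    (hsol₂ : IsWeakSolution T β h V₀ q₀ V₂ q₂ u₂) :
    (∀ᵐ t ∂volume.restrict (Icc 0 T), V₁ t = V₂ t) ∧
    (∀ᵐ p ∂volume.restrict (Icc 0 T ×ˢ Dom), q₁ p.1 p.2 = q₂ p.1 p.2) := by
  obtain ⟨M₁, flow₁⟩ := hsol₁.exists_isBoundedFlow hmeas hbdd hodd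
  obtain ⟨M₂, flow₂⟩ := hsol₂.exists_isBoundedFlow hmeas hbdd hodd
  obtain ⟨Mh, h_le⟩ := hbdd
  have eq_ae := meanFlow_eq_and_vorticity_eq (M := max (max M₁ M₂) Mh)
    (flow₁ _ (by simp)) (flow₂ _ (by simp)) hsol₁ hsol₂ hmeas
    (h_le.mono fun _ hz => hz.trans (le_max_right _ _)) hT
  refine ⟨eq_ae.mono fun _ ht => ht.1, ?_⟩
  rw [Measure.volume_eq_prod, ← Measure.prod_restrict,
    Measure.ae_prod_iff_ae_ae (measurableSet_eq_fun hsol₁.measq hsol₂.measq)]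
  exact eq_ae.mono fun _ ht => ht.2

/-- **Uniqueness of weak solutions** (Proposition 2.3). For every `T > 0`, `V₀ ∈ ℝ`, and
`q₀ ∈ L^∞(D)` odd in `y`, any two weak solutions `(V₁,q₁)` and `(V₂,q₂)` of the barotropic
quasi-geostrophic equations on `[0,T]` with initial datum `(V₀,q₀)` coincide: `V₁ = V₂` for
a.e. `t ∈ [0,T]` and `q₁ = q₂` a.e. on `[0,T]×D`. -/
theorem uniqueness_of_weak_solutions
    (T : ℝ) (hT : 0 < T) (β : ℝ)
    (h : ℝ × ℝ → ℝ) (hmeas : Measurable h)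
    (hbdd : ∃ M : ℝ, ∀ᵐ z ∂(volume.restrict Dom), |h z| ≤ M)
    (hodd : OddInY h)
    (hsmooth : ContDiffOn ℝ (⊤ : ℕ∞) h (Icc (-π) π ×ˢ Ioo 0 π))
    (V₀ : ℝ) (q₀ : ℝ × ℝ → ℝ) (hq₀meas : Measurable q₀)
    (hq₀bdd : ∃ M : ℝ, ∀ᵐ z ∂(volume.restrict Dom), |q₀ z| ≤ M)
    (hq₀odd : OddInY q₀)
    (V₁ V₂ : ℝ → ℝ) (q₁ q₂ : ℝ → ℝ × ℝ → ℝ)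
    (u₁ u₂ : ℝ → ℝ × ℝ → ℝ × ℝ)
    (hsol₁ : IsWeakSolution T β h V₀ q₀ V₁ q₁ u₁)
    (hsol₂ : IsWeakSolution T β h V₀ q₀ V₂ q₂ u₂) :
    (∀ᵐ t ∂(volume.restrict (Icc (0 : ℝ) T)), V₁ t = V₂ t) ∧
    (∀ᵐ p ∂(volume.restrict (Icc (0 : ℝ) T ×ˢ Dom)), q₁ p.1 p.2 = q₂ p.1 p.2) :=
  uniqueness_of_weak_solutions_general hT hmeas hbdd hodd hsol₁ hsol₂

end BQG
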